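/- arXiv:2204.06865 — 4 statements merged into one kernel-verified Lean document; each statement's English description precedes it below -/
import Mathlib

section
/- Let A be a commutative noetherian ring, let P ⊆ A be a prime ideal, and let s ∈ A \ P be such that the ideal P + (s) is a proper ideal of A. If a_1, …, a_n are elements of P whose images in the localization A_s form a regular sequence on A_s, then the A-module A_s/(a_1, …, a_n)A_s has projective dimension exactly n + 1 over A. -/
/-!
STATEMENT 1: Let A be a commutative noetherian ring, P ⊆ A a prime ideal, and s ∈ A \ P
with P + (s) a proper ideal of A.  If a_1, …, a_n ∈ P have images in A_s forming a regular
sequence on A_s, then the A-module A_s/(a_1, …, a_n)A_s has projective dimension exactly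
n + 1 over A.
-/

open CategoryTheory

universe u

/-- `Ext_A^i(M, N)` as an `A`-module. -/
noncomputable abbrev extGroup (A : Type u) [CommRing A] (M N : ModuleCat.{u} A) (i : ℕ) :
    ModuleCat A :=
  ((Ext A (ModuleCat.{u} A) i).obj (Opposite.op M)).obj N

/-- The projective dimension of an `A`-module `M`, defined as the least `n : ℕ∞` such that
`Ext_A^i(M, N) = 0` for every `A`-module `N` and every `i > n` (and `∞` if no such `n` exists). -/
noncomputable def projDim (A : Type u) [CommRing A] (M : ModuleCat.{u} A) : ℕ∞ :=
  sInf {n : ℕ∞ | ∀ (N : ModuleCat.{u} A) (i : ℕ), n < (i : ℕ∞) →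
    Subsingleton (extGroup A M N i)}

namespace PDAux

open Polynomial

/-- Comparison of the two versions of `Ext` in positive degrees. -/
lemma subsingleton_ext_iff (A : Type u) [CommRing A] (M N : ModuleCat.{u} A) (k : ℕ) :
    Subsingleton (extGroup A M N (k + 1)) ↔ Subsingleton (Abelian.Ext.{u} M N (k + 1)) := by
  let R : ProjectiveResolution M := projectiveResolution M
  have h1 : Subsingleton (extGroup A M N (k + 1)) ↔
      ∀ f : R.complex.X (k + 1) ⟶ N, R.complex.d (k + 2) (k + 1) ≫ f = 0 →
        ∃ g : R.complex.X k ⟶ N, R.complex.d (k + 1) k ≫ g = f := by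
    rw [← ModuleCat.isZero_iff_subsingleton, (R.isoExt (R := A) (k + 1) N).isZero_iff,
      ← HomologicalComplex.exactAt_iff_isZero_homology,
      HomologicalComplex.exactAt_iff' _ k (k + 1) (k + 2) (by simp) (by simp),
      ShortComplex.moduleCat_exact_iff]
    rfl
  rw [h1]
  constructor
  · intro h
    refine ⟨fun x y => ?_⟩
    have key : ∀ z : Abelian.Ext.{u} M N (k + 1), z = 0 := by
      intro z
      obtain ⟨f, hf, rfl⟩ := R.extMk_surjective z (k + 2) rfl
      exact (R.extMk_eq_zero_iff f (k + 2) rfl hf k rfl).2 (h f hf)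
    rw [key x, key y]
  · intro h f hf
    exact (R.extMk_eq_zero_iff f (k + 2) rfl hf k rfl).1 (Subsingleton.elim _ _)

/-- One step of the lower bound. -/
lemma nontrivial_step (A : Type u) [CommRing A] (M N : ModuleCat.{u} A) (x : A) (k : ℕ)
    (reg : IsSMulRegular M x) (hx : ∀ y : N, x • y = 0) (h : Nontrivial (Abelian.Ext.{u} M N k)) :
    Nontrivial (Abelian.Ext.{u} (ModuleCat.of A (QuotSMulTop x M)) N (k + 1)) := by
  have hS := reg.smulShortComplex_shortExact
  obtain ⟨e, he⟩ := exists_ne (0 : Abelian.Ext.{u} M N k)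
  refine ⟨hS.extClass.comp e (add_comm 1 k), 0, fun h0 => he ?_⟩
  obtain ⟨y, hy⟩ := Abelian.Ext.contravariant_sequence_exact₁ hS N e (add_comm 1 k) h0
  rw [← hy]
  have h2 : x • 𝟙 N = 0 := by
    ext z
    exact hx z
  have key : ∀ y' : Abelian.Ext.{u} M N k,
      (Abelian.Ext.mk₀ (x • 𝟙 M)).comp y' (zero_add k) = 0 := by
    intro y'
    rw [Abelian.Ext.mk₀_smul, Abelian.Ext.smul_comp, Abelian.Ext.mk₀_id_comp,
      Abelian.Ext.smul_eq_comp_mk₀, h2, Abelian.Ext.mk₀_zero, Abelian.Ext.comp_zero]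
  exact key y

lemma nontrivial_list (A : Type u) [CommRing A] (N : ModuleCat.{u} A) (rs : List A)
    (hN : ∀ r ∈ rs, ∀ y : N, r • y = 0) (M : ModuleCat.{u} A) (k : ℕ)
    (reg : RingTheory.Sequence.IsWeaklyRegular M rs)
    (h : Nontrivial (Abelian.Ext.{u} M N k)) :
    Nontrivial (Abelian.Ext.{u}
      (ModuleCat.of A (M ⧸ Ideal.ofList rs • (⊤ : Submodule A M))) N (k + rs.length)) := by
  have tr : ∀ {X Y : ModuleCat.{u} A} (e : X ≅ Y) (m : ℕ), Nontrivial (Abelian.Ext.{u} Y N m) →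
      Nontrivial (Abelian.Ext.{u} X N m) := by
    intro X Y e m hY
    obtain ⟨z, hz⟩ := exists_ne (0 : Abelian.Ext.{u} Y N m)
    refine ⟨(Abelian.Ext.mk₀ e.hom).comp z (zero_add m), 0, fun h0 => hz ?_⟩
    have := congrArg (fun w => (Abelian.Ext.mk₀ e.inv).comp w (zero_add m)) h0
    simpa [Abelian.Ext.mk₀_comp_mk₀_assoc] using this
  induction rs generalizing M k with
  | nil =>
    refine tr (Submodule.quotEquivOfEqBot _ ?_).toModuleIso k h
    rw [Ideal.ofList_nil, Submodule.bot_smul]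
  | cons r rs ih =>
    rw [RingTheory.Sequence.isWeaklyRegular_cons_iff] at reg
    have := ih (fun r' hr' => hN r' (List.mem_cons_of_mem _ hr'))
      (ModuleCat.of A (QuotSMulTop r M)) (k + 1) reg.2
      (nontrivial_step A M N r k reg.1 (hN r List.mem_cons_self) h)
    rw [List.length_cons, show k + (rs.length + 1) = k + 1 + rs.length by omega]
    exact tr (Submodule.quotOfListConsSMulTopEquivQuotSMulTopInner M r rs).toModuleIso _ this

lemma pd_list (A : Type u) [CommRing A] (rs : List A) (M : ModuleCat.{u} A) (k : ℕ)
    (reg : RingTheory.Sequence.IsWeaklyRegular M rs)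
    (h : HasProjectiveDimensionLT M k) :
    HasProjectiveDimensionLT
      (ModuleCat.of A (M ⧸ Ideal.ofList rs • (⊤ : Submodule A M))) (k + rs.length) := by
  induction rs generalizing M k with
  | nil =>
    refine hasProjectiveDimensionLT_of_iso
      (Submodule.quotEquivOfEqBot _ ?_).toModuleIso.symm k
    rw [Ideal.ofList_nil, Submodule.bot_smul]
  | cons r rs ih =>
    rw [RingTheory.Sequence.isWeaklyRegular_cons_iff] at reg
    have hS := reg.1.smulShortComplex_shortExact
    have := ih (ModuleCat.of A (QuotSMulTop r M)) (k + 1) reg.2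
      (hS.hasProjectiveDimensionLT_X₃ k h
        (hasProjectiveDimensionLT_of_ge M k (k + 1) (Nat.le_succ k)))
    rw [List.length_cons, show k + (rs.length + 1) = k + 1 + rs.length by omega]
    exact hasProjectiveDimensionLT_of_iso
      (Submodule.quotOfListConsSMulTopEquivQuotSMulTopInner M r rs).toModuleIso.symm _

section base

variable (A : Type u) [CommRing A] (s : A)

/-- The surjection `A[X] → A_s`. -/
noncomputable def projMap : A[X] →ₗ[A] Localization.Away s :=
  (Localization.awayEquivAdjoin s).symm.toLinearMap ∘ₗ
    (AdjoinRoot.mkₐ (R := A) (C s * X - 1)).toLinearMap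

/-- Multiplication by `sX - 1` on `A[X]`. -/
noncomputable def mulMap : A[X] →ₗ[A] A[X] := LinearMap.mulLeft A (C s * X - 1)

lemma mulMap_injective : Function.Injective (mulMap A s) := by
  rw [injective_iff_map_eq_zero]
  intro p hp
  have h : (C s * X - 1) * p = 0 := hp
  ext k
  have hk := fun k => congrArg (fun q => coeff q k) h
  induction k with
  | zero => simpa [sub_mul, mul_assoc] using hk 0
  | succ k ih =>
    have := hk (k + 1)
    simp only [sub_mul, mul_assoc, coeff_sub, coeff_C_mul, coeff_X_mul, one_mul, ih] at this
    simpa using this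

/-- The short complex `A[X] → A[X] → A_s`. -/
noncomputable def baseSC : ShortComplex (ModuleCat.{u} A) :=
  ShortComplex.mk (ModuleCat.ofHom (mulMap A s)) (ModuleCat.ofHom (projMap A s)) (by
    ext p
    simp [mulMap, projMap])

lemma baseSC_shortExact : (baseSC A s).ShortExact where
  exact := by
    rw [ShortComplex.moduleCat_exact_iff]
    intro x hx
    have hx' : (Localization.awayEquivAdjoin s).symm (AdjoinRoot.mk (C s * X - 1) x) = 0 := hx
    rw [map_eq_zero_iff _ (Localization.awayEquivAdjoin s).symm.injective] at hx'
    obtain ⟨q, hq⟩ := AdjoinRoot.mk_eq_zero.1 hx'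
    exact ⟨q, hq.symm⟩
  mono_f := (ModuleCat.mono_iff_injective _).2 (mulMap_injective A s)
  epi_g := (ModuleCat.epi_iff_surjective _).2
    ((Localization.awayEquivAdjoin s).symm.surjective.comp AdjoinRoot.mk_surjective)

lemma base_pd : HasProjectiveDimensionLT (ModuleCat.of A (Localization.Away s)) 2 := by
  have : Projective (ModuleCat.of A A[X]) := inferInstance
  have h1 : HasProjectiveDimensionLT (ModuleCat.of A A[X]) 1 := inferInstance
  exact (baseSC_shortExact A s).hasProjectiveDimensionLT_X₃ 1 h1
    (hasProjectiveDimensionLT_of_ge (ModuleCat.of A A[X]) 1 2 (by omega))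

lemma base_nontrivial (P : Ideal A) (hP : P.IsPrime) (hs : s ∉ P)
    (hPs : P ⊔ Ideal.span {s} ≠ ⊤) :
    Nontrivial (Abelian.Ext.{u} (ModuleCat.of A (Localization.Away s))
      (ModuleCat.of A (A ⧸ P)[X]) 1) := by
  by_contra hn
  rw [not_nontrivial_iff_subsingleton] at hn
  let φ : A[X] →ₗ[A] (A ⧸ P)[X] := (mapAlgHom (Ideal.Quotient.mkₐ A P)).toLinearMap
  obtain ⟨y, hy⟩ := Abelian.Ext.contravariant_sequence_exact₁ (baseSC_shortExact A s)
    (ModuleCat.of A (A ⧸ P)[X]) (Abelian.Ext.mk₀ (ModuleCat.ofHom φ)) (add_zero 1)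
    (hn.elim _ _)
  obtain ⟨ψ, rfl⟩ := (Abelian.Ext.mk₀_bijective _ _).2 y
  rw [Abelian.Ext.mk₀_comp_mk₀] at hy
  replace hy := (Abelian.Ext.mk₀_bijective _ _).1 hy
  let ψ' : A[X] →ₗ[A] (A ⧸ P)[X] := ψ.hom
  let f : ℕ → (A ⧸ P)[X] := fun k => ψ' (X ^ k)
  have hf : ∀ k, s • f (k + 1) - f k = X ^ k := by
    intro k
    have h1 : ψ' ((C s * X - 1) * X ^ k : A[X]) = φ (X ^ k) :=
      congrArg (fun q => q.hom (X ^ k : A[X])) hy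
    have h2 : φ (X ^ k) = X ^ k := by simp [φ]
    have h3 : ((C s * X - 1) * X ^ k : A[X]) = s • X ^ (k + 1) - X ^ k := by
      rw [smul_eq_C_mul]; ring
    rw [h2, h3, map_sub, map_smul] at h1
    exact h1
  let t : A ⧸ P := Ideal.Quotient.mk P s
  have ht : ∀ p : (A ⧸ P)[X], s • p = C t * p := by
    intro p
    ext i
    simp [t, Algebra.smul_def]
  have ht0 : t ≠ 0 := fun h => hs (Ideal.Quotient.eq_zero_iff_mem.1 h)
  have hu : ¬ IsUnit t := by
    intro h
    obtain ⟨b, hb⟩ := h.exists_right_inv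
    obtain ⟨b, rfl⟩ := Ideal.Quotient.mk_surjective b
    rw [← map_mul, ← map_one (Ideal.Quotient.mk P), Ideal.Quotient.eq] at hb
    apply hPs
    rw [Ideal.eq_top_iff_one]
    have h1 : (1 : A) = -(s * b - 1) + s * b := by ring
    rw [h1]
    exact Ideal.add_mem _ (Ideal.mem_sup_left (P.neg_mem hb))
      (Ideal.mem_sup_right (Ideal.mul_mem_right _ _ (Ideal.mem_span_singleton_self s)))
  have hm : ∀ m, ∀ k, k ≤ m → (f 0).coeff m = t ^ k * (f k).coeff m := by
    intro m k
    induction k with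
    | zero => simp
    | succ k ih =>
      intro hk
      have := congrArg (fun q => coeff q m) (hf k)
      simp only [ht, coeff_sub, coeff_C_mul, coeff_X_pow, if_neg (show m ≠ k by omega)] at this
      rw [ih (by omega), sub_eq_zero.1 this |>.symm]
      ring
  have hd : ∀ m, (f 0).coeff m ≠ 0 := by
    intro m h0
    have h1 := hm m m le_rfl
    have h2 := congrArg (fun q => coeff q m) (hf m)
    simp only [ht, coeff_sub, coeff_C_mul, coeff_X_pow, if_true] at h2
    rw [h0] at h1
    have h3 : (f m).coeff m = 0 := (mul_eq_zero.1 h1.symm).resolve_left (pow_ne_zero _ ht0)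
    rw [h3, sub_zero] at h2
    exact hu (IsUnit.of_mul_eq_one _ h2)
  exact hd _ (coeff_natDegree_succ_eq_zero (p := f 0))

end base

end PDAux

theorem projDim_quotient_localizationAway_eq
    (A : Type u) [CommRing A] [IsNoetherianRing A]
    (P : Ideal A) (hP : P.IsPrime) (s : A) (hs : s ∉ P)
    (hPs : P ⊔ Ideal.span {s} ≠ ⊤)
    (n : ℕ) (a : Fin n → A) (ha : ∀ i, a i ∈ P)
    (hreg : RingTheory.Sequence.IsRegular (Localization.Away s)
      (List.ofFn fun i => algebraMap A (Localization.Away s) (a i))) :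
    projDim A (ModuleCat.of A
      (Localization.Away s ⧸
        Ideal.span (Set.range fun i => algebraMap A (Localization.Away s) (a i)))) =
      (n : ℕ∞) + 1 := by
  have hlist : (List.ofFn fun i => algebraMap A (Localization.Away s) (a i)) =
      (List.ofFn a).map (algebraMap A (Localization.Away s)) := by
    rw [List.map_ofFn]; rfl
  have hw : RingTheory.Sequence.IsWeaklyRegular (Localization.Away s) (List.ofFn a) := by
    have := hreg.toIsWeaklyRegular
    rwa [hlist, RingTheory.Sequence.isWeaklyRegular_map_algebraMap_iff] at this
  have hI : (Ideal.ofList (List.ofFn a) • (⊤ : Submodule A (Localization.Away s))) =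
      (Ideal.span (Set.range fun i =>
        algebraMap A (Localization.Away s) (a i))).restrictScalars A := by
    rw [Ideal.smul_top_eq_map, Ideal.map_ofList, ← hlist, Ideal.ofList]
    congr 2
    ext x
    simp [List.mem_ofFn]
  let M := ModuleCat.of A (Localization.Away s)
  let e : ModuleCat.of A (M ⧸ Ideal.ofList (List.ofFn a) • (⊤ : Submodule A M)) ≅
      ModuleCat.of A (Localization.Away s ⧸
        Ideal.span (Set.range fun i => algebraMap A (Localization.Away s) (a i))) :=
    ((Submodule.quotEquivOfEq _ _ hI).trans
      (Submodule.Quotient.restrictScalarsEquiv A _)).toModuleIso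
  have hpd := PDAux.pd_list A (List.ofFn a) M 2 hw (PDAux.base_pd A s)
  have hnt := PDAux.nontrivial_list A (ModuleCat.of A (Polynomial (A ⧸ P))) (List.ofFn a)
    (by
      intro r hr y
      obtain ⟨i, rfl⟩ := (List.mem_ofFn' _ _).1 hr
      ext j
      have : (Ideal.Quotient.mk P) (a i) = 0 := Ideal.Quotient.eq_zero_iff_mem.2 (ha i)
      change (a i • y : Polynomial (A ⧸ P)).coeff j = 0
      rw [Polynomial.coeff_smul, Algebra.smul_def, Ideal.Quotient.algebraMap_eq, this, zero_mul])
    M 1 hw (PDAux.base_nontrivial A s P hP hs hPs)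
  rw [List.length_ofFn] at hpd hnt
  have hpd' := hasProjectiveDimensionLT_of_iso e (2 + n)
  apply le_antisymm
  · refine sInf_le ?_
    intro N i hi
    have hi' : n + 1 < i := by exact_mod_cast hi
    obtain ⟨k, rfl⟩ : ∃ k, i = k + 1 := ⟨i - 1, by omega⟩
    rw [PDAux.subsingleton_ext_iff]
    exact HasProjectiveDimensionLT.subsingleton _ (2 + n) _ (by omega) N
  · refine le_sInf ?_
    intro m hm
    by_contra hlt
    rw [not_le] at hlt
    have h1 := hm (ModuleCat.of A (Polynomial (A ⧸ P))) (n + 1) (by exact_mod_cast hlt)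
    rw [PDAux.subsingleton_ext_iff] at h1
    rw [add_comm 1 n] at hnt
    obtain ⟨z, hz⟩ := exists_ne (0 : Abelian.Ext.{u} (ModuleCat.of A
      (M ⧸ Ideal.ofList (List.ofFn a) • (⊤ : Submodule A M)))
      (ModuleCat.of A (Polynomial (A ⧸ P))) (n + 1))
    apply hz
    have h2 := congrArg (fun w => (Abelian.Ext.mk₀ e.hom).comp w (zero_add (n + 1)))
      (h1.elim ((Abelian.Ext.mk₀ e.inv).comp z (zero_add (n + 1))) 0)
    simpa [Abelian.Ext.mk₀_comp_mk₀_assoc] using h2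
end

section
/- Let A → B be a faithfully flat homomorphism of commutative rings, and let M be an A-module of finite projective dimension. Then the projective dimension of the B-module B ⊗_A M equals the projective dimension of the A-module M. -/
/-!
STATEMENT 3: Let A → B be a faithfully flat homomorphism of commutative rings, and let M
be an A-module of finite projective dimension.  Then the projective dimension of the
B-module B ⊗_A M equals the projective dimension of the A-module M.
-/

open CategoryTheory

universe u

section Descent

open TensorProduct

variable {A : Type*} [CommRing A] {B : Type*} [CommRing B] [Algebra A B]
  [Module.FaithfullyFlat A B]

theorem ffd_sum {A : Type*} [CommRing A] {ι₀ : Type*} [DecidableEq ι₀] (S : Set ι₀)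
    [DecidablePred (· ∉ S)]
    {X : Type*} [AddCommGroup X] [Module A X] (w : ι₀ → X) (hw : ∀ i, i ∈ S → w i = 0)
    (v : ι₀ →₀ A) (G : Finset ι₀) (hsub : v.support.filter (· ∉ S) ⊆ G) (hG : ∀ i ∈ G, i ∉ S) :
    Finsupp.linearCombination A w v = ∑ i : G, v i • w i := by
  rw [Finset.sum_coe_sort G (fun i => v i • w i), Finsupp.linearCombination_apply, Finsupp.sum]
  rw [← Finset.sum_subset hsub, Finset.sum_filter]
  · refine Finset.sum_congr rfl fun i _ => ?_
    by_cases h : i ∈ S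
    · simp [h, hw i h]
    · simp [h]
  · intro i hi hi'
    have h1 := hG i hi
    simp only [Finset.mem_filter, h1, Finsupp.mem_support_iff] at hi'
    have : v i = 0 := by simpa using hi'
    rw [this, zero_smul]

theorem ffd_linSys {N : Type*} [AddCommGroup N] [Module A N]
    {G K : Type*} [Fintype G] [Fintype K] (a : K → G → A) (y : K → N) (z : G → B ⊗[A] N)
    (h : ∀ k, ∑ i, a k i • z i = (1 : B) ⊗ₜ[A] y k) :
    ∃ x : G → N, ∀ k, ∑ i, a k i • x i = y k := by
  classical
  let T : (G → N) →ₗ[A] (K → N) :=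
    LinearMap.pi fun k => ∑ i, a k i • LinearMap.proj (R := A) (φ := fun _ : G => N) i
  have hT : ∀ x k, T x k = ∑ i, a k i • x i := by
    intro x k; simp [T]
  let q := (LinearMap.range T).mkQ
  let Φ : K → N →ₗ[A] ((K → N) ⧸ LinearMap.range T) := fun k =>
    q ∘ₗ LinearMap.single A (fun _ : K => N) k
  have hΦ : ∀ i, ∑ k, a k i • Φ k = 0 := by
    intro i
    ext n
    have : (∑ k, a k i • Φ k) n = q (T (Pi.single i n)) := by
      have h2 : T (Pi.single i n) = ∑ k, a k i • Pi.single k n := by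
        ext k
        rw [hT, Finset.sum_apply]
        rw [Finset.sum_eq_single i, Finset.sum_eq_single k] <;> simp +contextual
      rw [h2, map_sum]
      simp [Φ]
    rw [this]
    simp [q]
  have key : (1 : B) ⊗ₜ[A] q y = 0 := by
    have h1 : q y = ∑ k, Φ k (y k) := by
      conv_lhs => rw [← Finset.univ_sum_single y]
      simp [Φ]
    rw [h1, tmul_sum]
    have h2 : ∀ k, (1 : B) ⊗ₜ[A] Φ k (y k) = ∑ i, (a k i • (Φ k).lTensor B) (z i) := by
      intro k
      rw [← LinearMap.lTensor_tmul, ← h k, map_sum]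
      simp
    simp_rw [h2]
    rw [Finset.sum_comm]
    refine Finset.sum_eq_zero fun i _ => ?_
    have h3 : (∑ k, a k i • (Φ k).lTensor B) = 0 := by
      have := congrArg (LinearMap.lTensor B) (hΦ i)
      simpa [← LinearMap.coe_lTensorHom] using this
    rw [← LinearMap.sum_apply, h3]; rfl
  have h0 : q y = 0 := by
    apply Module.FaithfullyFlat.tensorProduct_mk_injective (A := A) (B := B)
    simpa using key
  obtain ⟨x, hx⟩ := (Submodule.Quotient.mk_eq_zero _).1 h0
  exact ⟨x, fun k => by rw [← hT, hx]⟩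

theorem ffd_step {N : Type*} [AddCommGroup N] [Module A N] {ι₀ ι₁ : Type*}
    (D : ι₁ → ι₀ →₀ A) (R : ι₀ → ι₁ →₀ B)
    (hR : ∀ j, Finsupp.linearCombination A R (D j) = Finsupp.single j 1)
    (f : ι₁ → N) (s : ι₀ → N) (S : Set ι₀)
    (hS : ∀ i ∈ S, ∀ j ∈ (R i).support, Finsupp.linearCombination A s (D j) = f j)
    (F : Finset ι₁) :
    ∃ s' : ι₀ → N, (∀ i ∈ S, s' i = s i) ∧
      ∀ j ∈ F, Finsupp.linearCombination A s' (D j) = f j := by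
  classical
  let y : ι₁ → N := fun j => f j - Finsupp.linearCombination A s (D j)
  let Z : (ι₁ →₀ B) →ₗ[A] B ⊗[A] N :=
    Finsupp.lsum A fun j => (TensorProduct.mk A B N).flip (y j)
  have hZ : ∀ i ∈ S, Z (R i) = 0 := by
    intro i hi
    simp only [Z, Finsupp.lsum_apply]
    refine Finset.sum_eq_zero fun j hj => ?_
    simp [y, hS i hi j hj]
  let G : Finset ι₀ := (F.biUnion fun j => (D j).support).filter (· ∉ S)
  have hsub : ∀ j ∈ F, (D j).support.filter (· ∉ S) ⊆ G := fun j hj =>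
    Finset.filter_subset_filter _ (Finset.subset_biUnion_of_mem (fun j => (D j).support) hj)
  have hG : ∀ i ∈ G, i ∉ S := fun i hi => (Finset.mem_filter.1 hi).2
  obtain ⟨x, hx⟩ := ffd_linSys (B := B) (G := G) (K := F) (fun j i => D j i) (fun j => y j)
    (fun i => Z (R i)) (by
      rintro ⟨j, hj⟩
      have := ffd_sum S (fun i => Z (R i)) hZ (D j) G (hsub j hj) hG
      rw [← this]
      have h2 := Finsupp.apply_linearCombination A Z R (D j)
      rw [hR] at h2
      refine h2.symm.trans ?_
      simp [Z])
  let δ : ι₀ → N := fun i => if h : i ∈ G then x ⟨i, h⟩ else 0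
  have hδ : ∀ i ∈ S, δ i = 0 := fun i hi => dif_neg fun h => hG i h hi
  refine ⟨s + δ, fun i hi => by simp [hδ i hi], fun j hj => ?_⟩
  have h1 : Finsupp.linearCombination A δ (D j) = y j := by
    rw [ffd_sum S δ hδ (D j) G (hsub j hj) hG, ← hx ⟨j, hj⟩]
    refine Finset.sum_congr rfl fun i _ => ?_
    simp [δ]
  have h2 : Finsupp.linearCombination A (s + δ) (D j)
      = Finsupp.linearCombination A s (D j) + Finsupp.linearCombination A δ (D j) := by
    simp [Finsupp.linearCombination_apply, Finsupp.sum, Finset.sum_add_distrib]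
  rw [h2, h1]
  simp [y]

theorem ffd_congr {A : Type*} [CommRing A] {ι₀ : Type*} {N : Type*} [AddCommGroup N] [Module A N]
    (s s' : ι₀ → N) (v : ι₀ →₀ A) (h : ∀ i ∈ v.support, s i = s' i) :
    Finsupp.linearCombination A s v = Finsupp.linearCombination A s' v := by
  simp only [Finsupp.linearCombination_apply]
  exact Finset.sum_congr rfl fun i hi => by simp only [h i hi]

theorem ffd_enlarge {N : Type*} [AddCommGroup N] [Module A N] {ι₀ ι₁ : Type*}
    (D : ι₁ → ι₀ →₀ A) (R : ι₀ → ι₁ →₀ B)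
    (hR : ∀ j, Finsupp.linearCombination A R (D j) = Finsupp.single j 1)
    (f : ι₁ → N) (s : ι₀ → N) (J : Set ι₀)
    (hJ : ∀ i ∈ J, ∀ j ∈ (R i).support, ∀ i' ∈ (D j).support, i' ∈ J)
    (hs : ∀ i ∈ J, ∀ j ∈ (R i).support, Finsupp.linearCombination A s (D j) = f j)
    (i₀ : ι₀) :
    ∃ (J' : Set ι₀) (s' : ι₀ → N), J ⊆ J' ∧ i₀ ∈ J' ∧ (∀ i ∈ J, s' i = s i) ∧
      (∀ i ∈ J', ∀ j ∈ (R i).support, ∀ i' ∈ (D j).support, i' ∈ J') ∧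
      (∀ i ∈ J', ∀ j ∈ (R i).support, Finsupp.linearCombination A s' (D j) = f j) := by
  classical
  let rr : Finset ι₀ → Finset ι₁ := fun E => E.biUnion fun i => (R i).support
  obtain ⟨E, hE0, hE⟩ : ∃ E : ℕ → Finset ι₀, E 0 = {i₀} ∧
      ∀ n, E (n + 1) = E n ∪ (rr (E n)).biUnion fun j => (D j).support :=
    ⟨fun n => Nat.rec (motive := fun _ => Finset ι₀) {i₀}
      (fun _ E => E ∪ (rr E).biUnion fun j => (D j).support) n, rfl, fun _ => rfl⟩
  have hEmono : Monotone E := monotone_nat_of_le_succ fun n => by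
    rw [hE]; exact Finset.subset_union_left
  have hEnext : ∀ n, ∀ i ∈ E n, ∀ j ∈ (R i).support, ∀ i' ∈ (D j).support, i' ∈ E (n + 1) := by
    intro n i hi j hj i' hi'
    rw [hE]
    exact Finset.mem_union_right _ (Finset.mem_biUnion.2 ⟨j, Finset.mem_biUnion.2 ⟨i, hi, hj⟩, hi'⟩)
  let P : ℕ → (ι₀ → N) → Prop := fun n t => (∀ i ∈ J, t i = s i) ∧
    ∀ i ∈ E n, ∀ j ∈ (R i).support, Finsupp.linearCombination A t (D j) = f j
  have hP : ∀ n t, P n t → ∀ i ∈ J ∪ {x | x ∈ E n}, ∀ j ∈ (R i).support,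
      Finsupp.linearCombination A t (D j) = f j := by
    rintro n t ⟨h1, h2⟩ i (hi | hi) j hj
    · rw [← hs i hi j hj]
      exact ffd_congr _ _ _ fun i' hi' => h1 i' (hJ i hi j hj i' hi')
    · exact h2 i hi j hj
  have start : ∃ t, P 0 t := by
    obtain ⟨t, h1, h2⟩ := ffd_step D R hR f s J hs (rr (E 0))
    exact ⟨t, h1, fun i hi j hj => h2 j (Finset.mem_biUnion.2 ⟨i, hi, hj⟩)⟩
  have next : ∀ n t, P n t → ∃ t', P (n + 1) t' ∧ ∀ i ∈ E n, t' i = t i := by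
    intro n t ht
    obtain ⟨t', h1, h2⟩ := ffd_step D R hR f t (J ∪ {x | x ∈ E n}) (hP n t ht) (rr (E (n + 1)))
    exact ⟨t', ⟨fun i hi => (h1 i (Or.inl hi)).trans (ht.1 i hi),
      fun i hi j hj => h2 j (Finset.mem_biUnion.2 ⟨i, hi, hj⟩)⟩, fun i hi => h1 i (Or.inr hi)⟩
  obtain ⟨t₀, ht₀⟩ := start
  choose nx hnx1 hnx2 using next
  let t : (n : ℕ) → {t // P n t} := fun n => Nat.rec ⟨t₀, ht₀⟩
    (fun n t => ⟨nx n t.1 t.2, hnx1 n t.1 t.2⟩) n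
  have ht : ∀ n, ∀ i ∈ E n, (t (n + 1)).1 i = (t n).1 i := fun n i hi =>
    hnx2 n (t n).1 (t n).2 i hi
  have ht' : ∀ n m, n ≤ m → ∀ i ∈ E n, (t m).1 i = (t n).1 i := by
    intro n m hnm
    induction m, hnm using Nat.le_induction with
    | base => intro i _; rfl
    | succ m hm ih => intro i hi; rw [ht m i (hEmono hm hi), ih i hi]
  let s' : ι₀ → N := fun i => if h : ∃ n, i ∈ E n then (t h.choose).1 i else s i
  have hs'E : ∀ n, ∀ i ∈ E n, s' i = (t n).1 i := by
    intro n i hi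
    have h : ∃ n, i ∈ E n := ⟨n, hi⟩
    simp only [s', dif_pos h]
    rcases le_total h.choose n with h' | h'
    · exact (ht' _ _ h' i h.choose_spec).symm
    · exact ht' _ _ h' i hi
  have hs'J : ∀ i ∈ J, s' i = s i := by
    intro i hi
    simp only [s']
    split_ifs with h
    · exact (t _).2.1 i hi
    · rfl
  refine ⟨J ∪ ⋃ n, {x | x ∈ E n}, s', Set.subset_union_left,
    Or.inr (Set.mem_iUnion.2 ⟨0, by simp [hE0]⟩), hs'J, ?_, ?_⟩
  · rintro i (hi | hi) j hj i' hi'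
    · exact Or.inl (hJ i hi j hj i' hi')
    · obtain ⟨n, hn⟩ := Set.mem_iUnion.1 hi
      exact Or.inr (Set.mem_iUnion.2 ⟨n + 1, hEnext n i hn j hj i' hi'⟩)
  · rintro i (hi | hi) j hj
    · rw [← hs i hi j hj]
      exact ffd_congr _ _ _ fun i' hi' => hs'J i' (hJ i hi j hj i' hi')
    · obtain ⟨n, hn⟩ := Set.mem_iUnion.1 hi
      rw [← (t (n + 1)).2.2 i (hEmono n.le_succ hn) j hj]
      exact ffd_congr _ _ _ fun i' hi' => hs'E _ i' (hEnext n i hn j hj i' hi')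

theorem ffd_main {N : Type*} [AddCommGroup N] [Module A N] {ι₀ ι₁ : Type*}
    (D : ι₁ → ι₀ →₀ A) (R : ι₀ → ι₁ →₀ B)
    (hR : ∀ j, Finsupp.linearCombination A R (D j) = Finsupp.single j 1)
    (f : ι₁ → N) : ∃ s : ι₀ → N, ∀ j, Finsupp.linearCombination A s (D j) = f j := by
  classical
  rcases subsingleton_or_nontrivial B with hB | hB
  · have : Subsingleton A :=
      (FaithfulSMul.algebraMap_injective A B).subsingleton
    have : Subsingleton N := Module.subsingleton A N
    exact ⟨0, fun j => Subsingleton.elim _ _⟩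
  let good : Set ι₀ × (ι₀ → N) → Prop := fun p =>
    (∀ i ∈ p.1, ∀ j ∈ (R i).support, ∀ i' ∈ (D j).support, i' ∈ p.1) ∧
      (∀ i ∈ p.1, ∀ j ∈ (R i).support, Finsupp.linearCombination A p.2 (D j) = f j)
  let r : {p // good p} → {p // good p} → Prop := fun p q =>
    p.1.1 ⊆ q.1.1 ∧ ∀ i ∈ p.1.1, q.1.2 i = p.1.2 i
  obtain ⟨m, hm⟩ := exists_maximal_of_chains_bounded (r := r) (by
    intro c hc
    let J : Set ι₀ := {i | ∃ p ∈ c, i ∈ p.1.1}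
    let s : ι₀ → N := fun i => if h : ∃ p ∈ c, i ∈ p.1.1 then h.choose.1.2 i else 0
    have hs : ∀ p ∈ c, ∀ i ∈ p.1.1, s i = p.1.2 i := by
      intro p hp i hi
      have h : ∃ p ∈ c, i ∈ p.1.1 := ⟨p, hp, hi⟩
      simp only [s, dif_pos h]
      by_cases hpq : h.choose = p
      · rw [hpq]
      rcases hc h.choose_spec.1 hp hpq with h' | h'
      · exact (h'.2 i h.choose_spec.2).symm
      · exact h'.2 i hi
    refine ⟨⟨(J, s), ?_, ?_⟩, fun p hp => ⟨fun i hi => ⟨p, hp, hi⟩, hs p hp⟩⟩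
    · rintro i ⟨p, hp, hi⟩ j hj i' hi'
      exact ⟨p, hp, p.2.1 i hi j hj i' hi'⟩
    · rintro i ⟨p, hp, hi⟩ j hj
      rw [← p.2.2 i hi j hj]
      exact ffd_congr _ _ _ fun i' hi' => hs p hp i' (p.2.1 i hi j hj i' hi'))
    (fun {a b c} hab hbc => ⟨hab.1.trans hbc.1, fun i hi =>
      (hbc.2 i (hab.1 hi)).trans (hab.2 i hi)⟩)
  have huniv : ∀ i, i ∈ m.1.1 := by
    intro i
    obtain ⟨J', s', h1, h2, h3, h4, h5⟩ :=
      ffd_enlarge D R hR f m.1.2 m.1.1 m.2.1 m.2.2 i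
    exact (hm ⟨(J', s'), h4, h5⟩ ⟨h1, h3⟩).1 h2
  refine ⟨m.1.2, fun j => ?_⟩
  have : ∃ i, j ∈ (R i).support := by
    by_contra hcon
    push Not at hcon
    have h1 := DFunLike.congr_fun (hR j) j
    rw [Finsupp.linearCombination_apply, Finsupp.sum, Finsupp.finsetSum_apply] at h1
    rw [Finset.sum_eq_zero] at h1
    · simp at h1
    · intro i _
      simp [Finsupp.notMem_support_iff.1 (hcon i)]
  obtain ⟨i, hi⟩ := this
  exact m.2.2 i (huniv i) j hi

end Descent

section Descent2

open TensorProduct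

theorem ffd_split {A : Type*} [CommRing A] {B : Type*} [CommRing B] [Algebra A B]
    [Module.FaithfullyFlat A B] {ι K M : Type*} [AddCommGroup K] [Module A K]
    [AddCommGroup M] [Module A M] [Module.Projective A K]
    (i : K →ₗ[A] (ι →₀ A)) (g : (ι →₀ A) →ₗ[A] M) (hi : Function.Injective i)
    (hg : Function.Surjective g) (hex : Function.Exact i g)
    [hP : Module.Projective B (B ⊗[A] M)] : Module.Projective A M := by
  classical
  obtain ⟨l, hl⟩ := Module.projective_lifting_property (g.baseChange B) LinearMap.id
    (LinearMap.lTensor_surjective B hg)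
  have hexB : Function.Exact (i.baseChange B) (g.baseChange B) := lTensor_exact B hex hg
  have hiB : Function.Injective (i.baseChange B) :=
    Module.Flat.lTensor_preserves_injective_linearMap (M := B) i hi
  have hiff : (∃ l, g.baseChange B ∘ₗ l = LinearMap.id) ↔ ∃ l, l ∘ₗ i.baseChange B = LinearMap.id :=
    (hexB.split_tfae hiB (LinearMap.lTensor_surjective B hg)).out 0 1
  obtain ⟨ρ, hρ⟩ := hiff.1 ⟨l, hl⟩
  obtain ⟨iK, hiK⟩ := Module.projective_def'.1 (inferInstance : Module.Projective A K)
  let π : (K →₀ A) →ₗ[A] K := Finsupp.linearCombination A id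
  have hπ : ∀ k, π (iK k) = k := fun k => LinearMap.congr_fun hiK k
  let e := Finsupp.sumFinsuppLEquivProdFinsupp A (M := A) (α := ι) (β := K)
  let d : (K →₀ A) →ₗ[A] (ι →₀ A) × (K →₀ A) := (i ∘ₗ π).prod (LinearMap.id - iK ∘ₗ π)
  let θ : B ⊗[A] (K →₀ A) →ₗ[A] (K →₀ B) := (TensorProduct.finsuppScalarRight A A B K).toLinearMap
  let r1 : (ι →₀ A) →ₗ[A] B ⊗[A] (K →₀ A) :=
    iK.lTensor B ∘ₗ ρ.restrictScalars A ∘ₗ TensorProduct.mk A B (ι →₀ A) 1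
  let r2 : (K →₀ A) →ₗ[A] B ⊗[A] (K →₀ A) :=
    TensorProduct.mk A B (K →₀ A) 1 ∘ₗ (LinearMap.id - iK ∘ₗ π)
  let r : (ι →₀ A) × (K →₀ A) →ₗ[A] (K →₀ B) := θ ∘ₗ r1.coprod r2
  have hr : ∀ x, r (d x) = θ (1 ⊗ₜ x) := by
    intro x
    have h1 : ρ (1 ⊗ₜ i (π x)) = 1 ⊗ₜ π x := by
      simpa using LinearMap.congr_fun hρ (1 ⊗ₜ π x)
    simp only [r, LinearMap.comp_apply]
    congr 1
    simp [d, r1, r2, h1, hπ, ← tmul_add]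
  obtain ⟨s, hs⟩ := ffd_main (A := A) (B := B) (N := K)
    (fun k => e.symm (d (Finsupp.single k 1))) (fun j => r (e (Finsupp.single j 1))) (by
      intro k
      have h2 : ∀ v : (ι ⊕ K) →₀ A,
          Finsupp.linearCombination A (fun j => r (e (Finsupp.single j 1))) v = r (e v) := by
        intro v
        have : Finsupp.linearCombination A (fun j => r (e (Finsupp.single j 1)))
            = r ∘ₗ e.toLinearMap := by
          apply Finsupp.lhom_ext'
          intro j
          apply LinearMap.ext_ring
          simp
        rw [this]; rfl
      rw [h2, LinearEquiv.apply_symm_apply, hr]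
      simp [θ, TensorProduct.finsuppScalarRight_apply_tmul]) id
  let S : (ι →₀ A) × (K →₀ A) →ₗ[A] K := Finsupp.linearCombination A s ∘ₗ e.symm.toLinearMap
  have hS : S ∘ₗ d = π := by
    apply Finsupp.lhom_ext'
    intro k
    apply LinearMap.ext_ring
    have := hs k
    simpa [S, π] using this
  have hret : (S ∘ₗ LinearMap.inl A _ _) ∘ₗ i = LinearMap.id := by
    ext k
    have h3 := LinearMap.congr_fun hS (iK k)
    rw [hπ, LinearMap.comp_apply] at h3
    have h4 : d (iK k) = (i k, 0) := by simp [d, hπ]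
    rw [h4] at h3
    simpa using h3
  have hiff' : (∃ l, g ∘ₗ l = LinearMap.id) ↔ ∃ l, l ∘ₗ i = LinearMap.id :=
    (hex.split_tfae hi hg).out 0 1
  obtain ⟨l', hl'⟩ := hiff'.2 ⟨_, hret⟩
  exact Module.Projective.of_split l' g hl'

end Descent2

section PD

open TensorProduct

variable (A : Type u) [CommRing A] (B : Type u) [CommRing B] [Algebra A B]

abbrev ffdKer (M : Type u) [AddCommGroup M] [Module A M] : Type u :=
  LinearMap.ker (Finsupp.linearCombination A (id : M → M))

theorem ffd_cover_surj (M : Type u) [AddCommGroup M] [Module A M] :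
    Function.Surjective (Finsupp.linearCombination A (id : M → M)) :=
  fun m => ⟨Finsupp.single m 1, by simp⟩

theorem ffd_pdLT_of_exact {K F M : Type u} [AddCommGroup K] [Module A K] [AddCommGroup M]
    [Module A M] [AddCommGroup F] [Module A F] [Module.Projective A F]
    (i : K →ₗ[A] F) (g : F →ₗ[A] M) (hi : Function.Injective i)
    (hg : Function.Surjective g) (hex : Function.Exact i g) (n : ℕ) :
    HasProjectiveDimensionLT (ModuleCat.of A M) (n + 2) ↔
      HasProjectiveDimensionLT (ModuleCat.of A K) (n + 1) := by
  let S : ShortComplex (ModuleCat.{u} A) :=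
    ShortComplex.mk (ModuleCat.ofHom i) (ModuleCat.ofHom g) (by
      ext x; exact hex.apply_apply_eq_zero x)
  have hS : S.ShortExact :=
    { exact := (ShortComplex.ShortExact.moduleCat_exact_iff_function_exact _).mpr hex
      mono_f := (ModuleCat.mono_iff_injective _).2 hi
      epi_g := (ModuleCat.epi_iff_surjective _).2 hg }
  exact hS.hasProjectiveDimensionLT_X₃_iff n
    ((IsProjective.iff_projective (R := A) F).1 inferInstance)

theorem ffd_pdA (M : Type u) [AddCommGroup M] [Module A M] (n : ℕ) :
    HasProjectiveDimensionLT (ModuleCat.of A M) (n + 2) ↔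
      HasProjectiveDimensionLT (ModuleCat.of A (ffdKer A M)) (n + 1) :=
  ffd_pdLT_of_exact A (LinearMap.ker (Finsupp.linearCombination A (id : M → M))).subtype
    (Finsupp.linearCombination A (id : M → M)) (Submodule.injective_subtype _)
    (ffd_cover_surj A M) (LinearMap.exact_subtype_ker_map _) n

theorem ffd_pdB [Module.Flat A B] (M : Type u) [AddCommGroup M] [Module A M] (n : ℕ) :
    HasProjectiveDimensionLT (ModuleCat.of B (B ⊗[A] M)) (n + 2) ↔
      HasProjectiveDimensionLT (ModuleCat.of B (B ⊗[A] (ffdKer A M))) (n + 1) :=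
  ffd_pdLT_of_exact B
    ((LinearMap.ker (Finsupp.linearCombination A (id : M → M))).subtype.baseChange B)
    ((Finsupp.linearCombination A (id : M → M)).baseChange B)
    (Module.Flat.lTensor_preserves_injective_linearMap (M := B) _ (Submodule.injective_subtype _))
    (LinearMap.lTensor_surjective B (ffd_cover_surj A M))
    (lTensor_exact B (LinearMap.exact_subtype_ker_map _) (ffd_cover_surj A M)) n

theorem ffd_pd_zero (M : Type u) [AddCommGroup M] [Module A M] :
    HasProjectiveDimensionLT (ModuleCat.of A M) 1 ↔ Module.Projective A M := by
  rw [← projective_iff_hasProjectiveDimensionLT_one]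
  exact (IsProjective.iff_projective (R := A) M).symm

theorem ffd_forward [Module.Flat A B] (n : ℕ) (M : Type u) [AddCommGroup M] [Module A M]
    (h : HasProjectiveDimensionLT (ModuleCat.of A M) (n + 1)) :
    HasProjectiveDimensionLT (ModuleCat.of B (B ⊗[A] M)) (n + 1) := by
  induction n generalizing M with
  | zero =>
    rw [zero_add, ffd_pd_zero] at h ⊢
    infer_instance
  | succ n ih => exact (ffd_pdB A B M n).2 (ih _ ((ffd_pdA A M n).1 h))

theorem ffd_backward_zero [Module.FaithfullyFlat A B] (n : ℕ)
    (M : Type u) [AddCommGroup M] [Module A M]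
    (h : HasProjectiveDimensionLT (ModuleCat.of A M) (n + 1))
    (hB : Module.Projective B (B ⊗[A] M)) : Module.Projective A M := by
  induction n generalizing M with
  | zero => exact (ffd_pd_zero A M).1 h
  | succ n ih =>
    have h1 := (ffd_pdA A M n).1 h
    have h2 : HasProjectiveDimensionLT (ModuleCat.of B (B ⊗[A] (ffdKer A M))) 1 := by
      refine (ffd_pdB A B M 0).1 ?_
      have := (ffd_pd_zero B (B ⊗[A] M)).2 hB
      exact hasProjectiveDimensionLT_of_ge _ 1 2 (by norm_num)
    have h3 : Module.Projective A (ffdKer A M) := ih _ h1 ((ffd_pd_zero B _).1 h2)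
    exact ffd_split (B := B) (K := ffdKer A M) (LinearMap.ker (Finsupp.linearCombination A (id : M → M))).subtype
      (Finsupp.linearCombination A (id : M → M)) (Submodule.injective_subtype _)
      (ffd_cover_surj A M) (LinearMap.exact_subtype_ker_map _)

theorem ffd_backward [Module.FaithfullyFlat A B] (m n : ℕ)
    (M : Type u) [AddCommGroup M] [Module A M]
    (h : HasProjectiveDimensionLT (ModuleCat.of A M) (n + 1))
    (hB : HasProjectiveDimensionLT (ModuleCat.of B (B ⊗[A] M)) (m + 1)) :
    HasProjectiveDimensionLT (ModuleCat.of A M) (m + 1) := by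
  induction m generalizing M with
  | zero =>
    exact (ffd_pd_zero A M).2 (ffd_backward_zero A B n M h ((ffd_pd_zero B _).1 hB))
  | succ m ih =>
    refine (ffd_pdA A M m).2 (ih _ ((ffd_pdA A M n).1 ?_) ((ffd_pdB A B M m).1 hB))
    exact hasProjectiveDimensionLT_of_ge _ (n + 1) (n + 2) (by omega)

theorem ffd_ext_iff (M N : ModuleCat.{u} A) (p : ℕ) :
    Subsingleton (extGroup A M N (p + 1)) ↔
      ∀ e : Abelian.Ext.{u} M N (p + 1), e = 0 := by
  let P := ProjectiveResolution.of M
  have h1 : Subsingleton (extGroup A M N (p + 1)) ↔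
      ∀ f : P.complex.X (p + 1) ⟶ N, P.complex.d (p + 2) (p + 1) ≫ f = 0 →
        ∃ g : P.complex.X p ⟶ N, P.complex.d (p + 1) p ≫ g = f := by
    rw [← ModuleCat.isZero_iff_subsingleton, (P.isoExt (R := A) (p + 1) N).isZero_iff,
      ← HomologicalComplex.exactAt_iff_isZero_homology,
      HomologicalComplex.exactAt_iff' _ p (p + 1) (p + 2) (by simp) (by simp),
      ShortComplex.moduleCat_exact_iff]
    rfl
  rw [h1]
  constructor
  · intro h e
    obtain ⟨f, hf, rfl⟩ := P.extMk_surjective e (p + 2) rfl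
    exact (P.extMk_eq_zero_iff f (p + 2) rfl hf p rfl).2 (h f hf)
  · intro h f hf
    exact (P.extMk_eq_zero_iff f (p + 2) rfl hf p rfl).1 (h _)

theorem ffd_projDim_set (M : ModuleCat.{u} A) (n : ℕ) :
    (∀ (N : ModuleCat.{u} A) (i : ℕ), (n : ℕ∞) < (i : ℕ∞) →
      Subsingleton (extGroup A M N i)) ↔ HasProjectiveDimensionLT M (n + 1) := by
  rw [hasProjectiveDimensionLT_iff.{u}]
  constructor
  · intro h i hi Y
    obtain ⟨p, rfl⟩ : ∃ p, i = p + 1 := ⟨i - 1, by omega⟩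
    exact (ffd_ext_iff A M Y p).1 (h Y (p + 1) (by exact_mod_cast hi))
  · intro h N i hi
    have hi' : n + 1 ≤ i := by exact_mod_cast hi
    obtain ⟨p, rfl⟩ : ∃ p, i = p + 1 := ⟨i - 1, by omega⟩
    exact (ffd_ext_iff A M N p).2 fun e => h (p + 1) hi' e

end PD

theorem projDim_tensorProduct_of_faithfullyFlat
    (A : Type u) [CommRing A] (B : Type u) [CommRing B] [Algebra A B]
    [Module.FaithfullyFlat A B]
    (M : Type u) [AddCommGroup M] [Module A M]
    (hM : projDim A (ModuleCat.of A M) ≠ ⊤) :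
    projDim B (ModuleCat.of B (TensorProduct A B M)) = projDim A (ModuleCat.of A M) := by
  obtain ⟨d, hd⟩ : ∃ d : ℕ, HasProjectiveDimensionLT (ModuleCat.of A M) (d + 1) := by
    by_contra hcon
    push Not at hcon
    apply hM
    rw [projDim, sInf_eq_top]
    intro n hn
    by_contra hne
    lift n to ℕ using hne
    exact hcon n ((ffd_projDim_set A _ n).1 hn)
  unfold projDim
  congr 1
  ext n
  simp only [Set.mem_ofPred_eq]
  induction n using ENat.recTopCoe with
  | top => simp
  | coe n =>
    rw [ffd_projDim_set, ffd_projDim_set]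
    exact ⟨ffd_backward A B n d M hd, ffd_forward A B n M⟩
end

section
/- Let A be a commutative noetherian ring of finite Krull dimension d, and let M be a cochain complex of A-modules with bounded nonzero cohomology which is quasi-isomorphic to a bounded complex of flat A-modules. Set inf(M) = inf{ j : H^j(M) ≠ 0 }. Then for every A-module N and every integer k > d − inf(M), one has Hom_{D(A)}(M, N[k]) = 0; that is, the projective dimension of M in the derived category satisfies projdim_A(M) ≤ d − inf(M). -/
/-!
STATEMENT 5: Let A be a commutative noetherian ring of finite Krull dimension d, and let
M be a cochain complex of A-modules with bounded nonzero cohomology which is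
quasi-isomorphic to a bounded complex of flat A-modules.  With i = inf(M)
(= inf{ j : H^j(M) ≠ 0 }), for every A-module N and every integer k > d − i one has
Hom_{D(A)}(M, N[k]) = 0; that is, projdim_A(M) ≤ d − inf(M) in the derived category.
-/

open CategoryTheory Limits

universe u v

open CategoryTheory Limits
open TensorProduct

namespace PDK

section tensor
variable {R : Type*} [CommRing R] {S F S' G' G'' G : Type*}
  [AddCommGroup S] [AddCommGroup F] [AddCommGroup S'] [AddCommGroup G'] [AddCommGroup G'']
  [AddCommGroup G] [Module R S] [Module R F] [Module R S'] [Module R G'] [Module R G'']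
  [Module R G]

lemma lr_comm (i : G' →ₗ[R] G'') (f : S →ₗ[R] F) (x : G' ⊗[R] S) :
    i.rTensor F (f.lTensor G' x) = f.lTensor G'' (i.rTensor S x) := by
  rw [← LinearMap.comp_apply, ← LinearMap.comp_apply, LinearMap.rTensor_comp_lTensor,
    LinearMap.lTensor_comp_rTensor]

/-- T1 -/
lemma rTensor_inj_of_lTensor_inj {f : S →ₗ[R] F} {g : F →ₗ[R] S'}
    (hfg : Function.Exact f g) (hg : Function.Surjective g)
    {i : G' →ₗ[R] G''} {p : G'' →ₗ[R] G} (hip : Function.Exact i p) (hp : Function.Surjective p)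
    (h1 : Function.Injective (f.lTensor G)) (h2 : Function.Injective (i.rTensor F)) :
    Function.Injective (i.rTensor S') := by
  rw [injective_iff_map_eq_zero]
  intro x hx
  obtain ⟨x', rfl⟩ := LinearMap.lTensor_surjective G' hg x
  rw [lr_comm] at hx
  obtain ⟨y, hy⟩ := (lTensor_exact G'' hfg hg _).1 hx
  have hy0 : p.rTensor S y = 0 := by
    apply h1
    rw [map_zero, ← lr_comm, hy]
    exact (rTensor_exact F hip hp _).2 ⟨x', rfl⟩
  obtain ⟨z, rfl⟩ := (rTensor_exact S hip hp _).1 hy0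
  rw [← lr_comm] at hy
  rw [← h2 hy]
  exact (lTensor_exact G' hfg hg _).2 ⟨z, rfl⟩

lemma lTensor_inj_of_rTensor_inj {f : S →ₗ[R] F} {g : F →ₗ[R] S'}
    (hfg : Function.Exact f g) (hg : Function.Surjective g)
    {i : G' →ₗ[R] G''} {p : G'' →ₗ[R] G} (hip : Function.Exact i p) (hp : Function.Surjective p)
    (h1 : Function.Injective (i.rTensor S')) (h2 : Function.Injective (f.lTensor G'')) :
    Function.Injective (f.lTensor G) := by
  rw [injective_iff_map_eq_zero]
  intro x hx
  obtain ⟨x', rfl⟩ := LinearMap.rTensor_surjective S hp x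
  rw [← lr_comm] at hx
  obtain ⟨y, hy⟩ := (rTensor_exact F hip hp _).1 hx
  have hy0 : g.lTensor G' y = 0 := by
    apply h1
    rw [map_zero, lr_comm, hy]
    exact (lTensor_exact _ hfg hg _).2 ⟨x', rfl⟩
  obtain ⟨z, rfl⟩ := (lTensor_exact _ hfg hg _).1 hy0
  rw [lr_comm] at hy
  rw [← h2 hy]
  exact (rTensor_exact _ hip hp _).2 ⟨z, rfl⟩

lemma lTensor_inj_ext {f : S →ₗ[R] F} 
    {i : G' →ₗ[R] G''} {p : G'' →ₗ[R] G} (hip : Function.Exact i p) (hp : Function.Surjective p)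
    (h1 : Function.Injective (f.lTensor G')) (h3 : Function.Injective (f.lTensor G))
    (h2 : Function.Injective (i.rTensor F)) :
    Function.Injective (f.lTensor G'') := by
  rw [injective_iff_map_eq_zero]
  intro x hx
  have hx0 : p.rTensor S x = 0 := by
    apply h3
    rw [map_zero, ← lr_comm, hx, map_zero]
  obtain ⟨z, rfl⟩ := (rTensor_exact _ hip hp _).1 hx0
  rw [← lr_comm] at hx
  rw [h1 (h2 (hx.trans (map_zero (i.rTensor F)).symm) |>.trans (map_zero _).symm), map_zero]

lemma lTensor_inj_of_flat {f : S →ₗ[R] F} {g : F →ₗ[R] S'} (hf : Function.Injective f)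
    (hfg : Function.Exact f g) (hg : Function.Surjective g) [Module.Flat R S']
    (G : Type*) [AddCommGroup G] [Module R G] :
    Function.Injective (f.lTensor G) := by
  let p : (G →₀ R) →ₗ[R] G := Finsupp.linearCombination R id
  have hp : Function.Surjective p := Finsupp.linearCombination_id_surjective R G
  have h1 : Function.Injective (LinearMap.rTensor S' (LinearMap.ker p).subtype) :=
    Module.Flat.rTensor_preserves_injective_linearMap (M := S') (LinearMap.ker p).subtype
      (Submodule.injective_subtype _)
  exact lTensor_inj_of_rTensor_inj (G' := LinearMap.ker p) hfg hg
    (LinearMap.exact_subtype_ker_map p) hp h1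
    (Module.Flat.lTensor_preserves_injective_linearMap _ hf)

lemma flat_left {f : S →ₗ[R] F} {g : F →ₗ[R] S'} (hf : Function.Injective f)
    (hfg : Function.Exact f g) (hg : Function.Surjective g) [Module.Flat R S'] [Module.Flat R F] :
    Module.Flat R S := by
  rw [Module.Flat.iff_rTensor_injective']
  intro N
  have h1 := lTensor_inj_of_flat hf hfg hg N
  have h2 : Function.Injective (N.subtype.rTensor F) :=
    Module.Flat.rTensor_preserves_injective_linearMap _ (Submodule.injective_subtype _)
  intro x y hxy
  apply h1
  apply h2
  rw [lr_comm, lr_comm, hxy]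

lemma one_tmul_eq_zero (I : Ideal R) (y : S) :
    (1 : R ⧸ I) ⊗ₜ[R] y = 0 ↔ y ∈ I • (⊤ : Submodule R S) := by
  rw [← (quotTensorEquivQuotSMul S I).map_eq_zero_iff, quotTensorEquivQuotSMul_mk_one_tmul,
    Submodule.Quotient.mk_eq_zero]

lemma exists_one_tmul (I : Ideal R) (y : (R ⧸ I) ⊗[R] S) : ∃ s, y = (1 : R ⧸ I) ⊗ₜ[R] s := by
  obtain ⟨s, hs⟩ := Submodule.Quotient.mk_surjective _ (quotTensorEquivQuotSMul S I y)
  refine ⟨s, ?_⟩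
  rw [← quotTensorEquivQuotSMul_symm_mk, hs, LinearEquiv.symm_apply_apply]

lemma quot_lTensor_inj_iff (I : Ideal R) (f : S →ₗ[R] F) :
    Function.Injective (f.lTensor (R ⧸ I)) ↔
      ∀ y, f y ∈ I • (⊤ : Submodule R F) → y ∈ I • (⊤ : Submodule R S) := by
  rw [injective_iff_map_eq_zero]
  constructor
  · intro h y hy
    rw [← one_tmul_eq_zero] at hy ⊢
    exact h _ (by simpa using hy)
  · intro h y hy
    obtain ⟨s, rfl⟩ := exists_one_tmul I y
    rw [LinearMap.lTensor_tmul, one_tmul_eq_zero] at hy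
    exact (one_tmul_eq_zero _ _).2 (h _ hy)

end tensor
end PDK

open CategoryTheory Limits
open TensorProduct

namespace PDK

structure IsChain (R : Type u) [CommRing R] {S F : ℕ → Type u} [∀ j, AddCommGroup (S j)]
    [∀ j, AddCommGroup (F j)] [∀ j, Module R (S j)] [∀ j, Module R (F j)]
    (f : ∀ j, S (j + 1) →ₗ[R] F j) (g : ∀ j, F j →ₗ[R] S j) : Prop where
  inj : ∀ j, Function.Injective (f j)
  exact : ∀ j, Function.Exact (f j) (g j)
  surj : ∀ j, Function.Surjective (g j)
  flat : ∀ j, Module.Flat R (F j)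

section
variable {R : Type u} [CommRing R] {S F : ℕ → Type u} [∀ j, AddCommGroup (S j)]
    [∀ j, AddCommGroup (F j)] [∀ j, Module R (S j)] [∀ j, Module R (F j)]
    {f : ∀ j, S (j + 1) →ₗ[R] F j} {g : ∀ j, F j →ₗ[R] S j}

lemma IsChain.baseChange (h : IsChain R f g) (R' : Type u) [CommRing R'] [Algebra R R']
    [Module.Flat R R'] : IsChain R' (S := fun j => R' ⊗[R] S j) (F := fun j => R' ⊗[R] F j)
      (fun j => (f j).baseChange R') (fun j => (g j).baseChange R') where
  inj j := Module.Flat.lTensor_preserves_injective_linearMap (M := R') (f j) (h.inj j)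
  exact j := lTensor_exact R' (h.exact j) (h.surj j)
  surj j := LinearMap.lTensor_surjective R' (h.surj j)
  flat j := by have := h.flat j; infer_instance

lemma IsChain.regular (h : IsChain R f g) {x : R} (hx : x ∈ nonZeroDivisors R) (j : ℕ) :
    IsSMulRegular (S (j + 1)) x := by
  have := h.flat j
  have h1 : IsSMulRegular R x := by
    intro a b hab
    exact (mul_cancel_left_mem_nonZeroDivisors hx).1 (by simpa using hab)
  have h2 : IsSMulRegular (F j) x :=
    (TensorProduct.lid R (F j)).isSMulRegular_congr x |>.1 (h1.rTensor (F j))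
  intro a b hab
  apply h.inj j
  apply h2
  simpa using congrArg (f j) hab

lemma mem_span_singleton_smul_top {M : Type*} [AddCommGroup M] [Module R M] (x : R) (y : M) :
    y ∈ (Ideal.span {x}) • (⊤ : Submodule R M) ↔ ∃ z, y = x • z := by
  rw [Submodule.ideal_span_singleton_smul, Submodule.mem_smul_pointwise_iff_exists]
  simp [eq_comm]

lemma IsChain.quot (h : IsChain R f g) {x : R} (hx : x ∈ nonZeroDivisors R) :
    IsChain (R ⧸ Ideal.span {x}) (S := fun j => (R ⧸ Ideal.span {x}) ⊗[R] S (j + 1))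
      (F := fun j => (R ⧸ Ideal.span {x}) ⊗[R] F (j + 1))
      (fun j => (f (j + 1)).baseChange _) (fun j => (g (j + 1)).baseChange _) where
  inj j := by
    refine (quot_lTensor_inj_iff _ (f (j + 1))).2 ?_
    intro y hy
    rw [mem_span_singleton_smul_top] at hy ⊢
    obtain ⟨z, hz⟩ := hy
    have h0 : g (j + 1) z = 0 := by
      apply h.regular hx j
      simp only
      rw [← map_smul, ← hz, smul_zero]
      exact (h.exact _ _).2 ⟨y, rfl⟩
    obtain ⟨w, rfl⟩ := (h.exact _ _).1 h0
    exact ⟨w, h.inj _ (by rw [hz, map_smul])⟩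
  exact j := lTensor_exact _ (h.exact _) (h.surj _)
  surj j := LinearMap.lTensor_surjective _ (h.surj _)
  flat j := by have := h.flat (j + 1); infer_instance

lemma IsChain.flat_succ (h : IsChain R f g) {n : ℕ} (hn : Module.Flat R (S n)) :
    Module.Flat R (S (n + 1)) := by
  have := h.flat n
  exact flat_left (h.inj n) (h.exact n) (h.surj n)

lemma IsChain.flat_le (h : IsChain R f g) {n : ℕ} (hn : Module.Flat R (S n)) {m : ℕ} (hm : n ≤ m) :
    Module.Flat R (S m) := by
  induction m, hm using Nat.le_induction with
  | base => exact hn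
  | succ m _ ih => exact h.flat_succ ih

end

lemma mem_smul_top_of_colon {R S : Type*} [CommRing R] [AddCommGroup S] [Module R S]
    [Module.Flat R S] {I : Ideal R} {a : R} (ha : I = (⊥ : Submodule R R).colon {a}) {y : S}
    (hy : a • y = 0) : y ∈ I • (⊤ : Submodule R S) := by
  rw [← one_tmul_eq_zero]
  let φ : (R ⧸ I) →ₗ[R] R := Submodule.liftQ I (LinearMap.toSpanSingleton R R a) (by
    intro x hx
    rw [ha, Submodule.mem_colon_singleton] at hx
    simpa using hx)
  have hφ : Function.Injective φ := by
    rw [← LinearMap.ker_eq_bot]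
    apply Submodule.ker_liftQ_eq_bot
    intro x hx
    rw [ha, Submodule.mem_colon_singleton]
    simpa using hx
  have h1 : Function.Injective (φ.rTensor S) :=
    Module.Flat.rTensor_preserves_injective_linearMap _ hφ
  apply h1
  apply (TensorProduct.lid R S).injective
  have : φ 1 = a := by
    have h2 : φ (Submodule.Quotient.mk 1) = (LinearMap.toSpanSingleton R R a) 1 :=
      Submodule.liftQ_apply ..
    simpa using h2
  simp [this, hy]

lemma exists_colon_or_regular (R : Type*) [CommRing R] [IsNoetherianRing R] [IsLocalRing R] :
    (∃ a : R, IsLocalRing.maximalIdeal R = (⊥ : Submodule R R).colon {a}) ∨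
      ∃ x ∈ IsLocalRing.maximalIdeal R, x ∈ nonZeroDivisors R := by
  by_contra! hcon
  obtain ⟨h1, h2⟩ := hcon
  have h3 : (IsLocalRing.maximalIdeal R : Set R) ⊆ ⋃ p ∈ associatedPrimes R R, ((id p : Ideal R) : Set R) := by
    simp only [id]
    rw [biUnion_associatedPrimes_eq_compl_nonZeroDivisors]
    exact fun x hx => h2 x hx
  rw [Ideal.subset_union_prime_finite (associatedPrimes.finite R R) (f := id) ⊥ ⊥
    (fun i hi _ _ => hi.isPrime)] at h3
  obtain ⟨p, hp, hle⟩ := h3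
  obtain ⟨hpp, x, hx⟩ := isAssociatedPrime_iff.1 hp
  have := (IsLocalRing.maximalIdeal.isMaximal R).eq_of_le hpp.ne_top hle
  exact h1 x (this.trans hx)

open IsLocalRing in
lemma mem_of_regular_quot (j : ℕ) : ∀ {R : Type u} [CommRing R] [IsNoetherianRing R] [IsLocalRing R]
    (_ : ringKrullDim R ≤ j) {S F : ℕ → Type u} [∀ j, AddCommGroup (S j)]
    [∀ j, AddCommGroup (F j)] [∀ j, Module R (S j)] [∀ j, Module R (F j)]
    {f : ∀ j, S (j + 1) →ₗ[R] F j} {g : ∀ j, F j →ₗ[R] S j} (_ : IsChain R f g)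
    (_ : Module.Flat R (S (j + 1))) (y : S (j + 1)),
    f j y ∈ maximalIdeal R • (⊤ : Submodule R (F j)) →
    y ∈ maximalIdeal R • (⊤ : Submodule R (S (j + 1))) := by
  induction j with
  | zero =>
    intro R _ _ _ hdim S F _ _ _ _ f g h hS y hy
    rcases exists_colon_or_regular R with ⟨a, ha⟩ | ⟨x, hx, hreg⟩
    · apply mem_smul_top_of_colon ha
      apply h.inj
      rw [map_smul, map_zero]
      refine Submodule.smul_induction_on hy ?_ ?_
      · intro r hr n _
        rw [ha, Submodule.mem_colon_singleton, Submodule.mem_bot, smul_eq_mul] at hr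
        rw [smul_smul, mul_comm, hr, zero_smul]
      · intro u v hu hv
        rw [smul_add, hu, hv, add_zero]
    · exfalso
      have h1 := (ringKrullDim_quotient_succ_le_of_nonZeroDivisor hreg).trans hdim
      have : Nontrivial (R ⧸ Ideal.span {x}) := by
        apply Ideal.Quotient.nontrivial_iff.2
        rw [Ideal.ne_top_iff_exists_maximal]
        exact ⟨_, maximalIdeal.isMaximal R, by simpa using hx⟩
      have h2 := ringKrullDim_nonneg_of_nontrivial (R := R ⧸ Ideal.span {x})
      have h3 : (0 : WithBot ℕ∞) + 1 ≤ 0 := (by gcongr : _ ≤ _ ).trans h1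
      exact absurd h3 (by rw [zero_add]; exact not_le.mpr zero_lt_one)
  | succ j ih =>
    intro R _ _ _ hdim S F _ _ _ _ f g h hS y hy
    rcases exists_colon_or_regular R with ⟨a, ha⟩ | ⟨x, hx, hreg⟩
    · apply mem_smul_top_of_colon ha
      apply h.inj
      rw [map_smul, map_zero]
      refine Submodule.smul_induction_on hy ?_ ?_
      · intro r hr n _
        rw [ha, Submodule.mem_colon_singleton, Submodule.mem_bot, smul_eq_mul] at hr
        rw [smul_smul, mul_comm, hr, zero_smul]
      · intro u v hu hv
        rw [smul_add, hu, hv, add_zero]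
    · have h1 := (ringKrullDim_quotient_succ_le_of_nonZeroDivisor hreg).trans hdim
      have hnt : Nontrivial (R ⧸ Ideal.span {x}) := by
        apply Ideal.Quotient.nontrivial_iff.2
        rw [Ideal.ne_top_iff_exists_maximal]
        exact ⟨_, maximalIdeal.isMaximal R, by simpa using hx⟩
      have hloc : IsLocalRing (R ⧸ Ideal.span {x}) :=
        IsLocalRing.of_surjective' (Ideal.Quotient.mk _) Ideal.Quotient.mk_surjective
      have hdim' : ringKrullDim (R ⧸ Ideal.span {x}) ≤ j := by
        push_cast at h1
        exact ENat.WithBot.add_le_add_one_right_iff.1 h1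
      have hmax : ∀ r : R, Ideal.Quotient.mk (Ideal.span {x}) r ∈ maximalIdeal (R ⧸ Ideal.span {x}) ↔
          r ∈ maximalIdeal R := by
        intro r
        have : IsLocalHom (Ideal.Quotient.mk (Ideal.span {x})) :=
          IsLocalHom.of_surjective _ Ideal.Quotient.mk_surjective
        rw [mem_maximalIdeal, mem_maximalIdeal, mem_nonunits_iff, mem_nonunits_iff, isUnit_map_iff]
      have key := ih hdim' (h.quot hreg) (by
        show Module.Flat (R ⧸ Ideal.span {x}) ((R ⧸ Ideal.span {x}) ⊗[R] S (j + 1 + 1))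
        infer_instance) (1 ⊗ₜ y) ?_
      · have key2 : ∀ z ∈ maximalIdeal (R ⧸ Ideal.span {x}) •
            (⊤ : Submodule (R ⧸ Ideal.span {x}) ((R ⧸ Ideal.span {x}) ⊗[R] S (j + 1 + 1))),
            quotTensorEquivQuotSMul (S (j + 1 + 1)) (Ideal.span {x}) z ∈
              (maximalIdeal R • (⊤ : Submodule R (S (j + 1 + 1)))).map
              (Submodule.mkQ (Ideal.span {x} • (⊤ : Submodule R (S (j + 1 + 1))))) := by
          intro z hz
          refine Submodule.smul_induction_on hz ?_ ?_
          · intro r hr n _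
            obtain ⟨r, rfl⟩ := Ideal.Quotient.mk_surjective r
            rw [hmax] at hr
            obtain ⟨s, rfl⟩ := exists_one_tmul _ n
            have : (Ideal.Quotient.mk (Ideal.span {x}) r) • ((1 : R ⧸ Ideal.span {x}) ⊗ₜ[R] s) =
              (1 : R ⧸ Ideal.span {x}) ⊗ₜ[R] (r • s) := by
              rw [TensorProduct.tmul_smul]
              rfl
            rw [this, quotTensorEquivQuotSMul_mk_one_tmul]
            exact ⟨r • s, Submodule.smul_mem_smul hr trivial, rfl⟩
          · intro u v hu hv
            rw [map_add]
            exact add_mem hu hv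
        obtain ⟨w, hw, hwy⟩ := key2 _ key
        rw [quotTensorEquivQuotSMul_mk_one_tmul] at hwy
        have h4 := (Submodule.Quotient.eq _).1 hwy
        have h5 : Ideal.span {x} • (⊤ : Submodule R (S (j + 1 + 1))) ≤ maximalIdeal R • ⊤ :=
          Submodule.smul_mono_left (by simpa using hx)
        have := sub_mem hw (h5 h4)
        simpa using this
      · show ((1 : R ⧸ Ideal.span {x}) ⊗ₜ[R] (f (j + 1) y)) ∈ _
        refine Submodule.smul_induction_on hy ?_ ?_
        · intro r hr n _
          have : (1 : R ⧸ Ideal.span {x}) ⊗ₜ[R] (r • n) = (Ideal.Quotient.mk (Ideal.span {x}) r) •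
            ((1 : R ⧸ Ideal.span {x}) ⊗ₜ[R] n) := by
            rw [TensorProduct.tmul_smul]
            rfl
          rw [this]
          exact Submodule.smul_mem_smul ((hmax r).2 hr) trivial
        · intro u v hu hv
          rw [TensorProduct.tmul_add]
          exact add_mem hu hv

end PDK

open CategoryTheory Limits
open TensorProduct

namespace PDK

section
variable {R : Type u} [CommRing R] 

lemma lTensor_inj_congr {S F G G' : Type*} [AddCommGroup S] [AddCommGroup F] [AddCommGroup G]
    [AddCommGroup G'] [Module R S] [Module R F] [Module R G] [Module R G'] (f : S →ₗ[R] F)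
    (e : G ≃ₗ[R] G') (h : Function.Injective (f.lTensor G)) : Function.Injective (f.lTensor G') := by
  have h2 : f.lTensor G' = (e.toLinearMap.rTensor F) ∘ₗ (f.lTensor G) ∘ₗ (e.symm.toLinearMap.rTensor S) := by
    ext x y; simp
  rw [h2]
  exact ((e.rTensor F).injective.comp h).comp (e.symm.rTensor S).injective

/-- flatness of the quotient checked on primes -/
lemma flat_of_prime_quot [IsNoetherianRing R] {S F S' : Type u} [AddCommGroup S] [AddCommGroup F]
    [AddCommGroup S'] [Module R S] [Module R F] [Module R S'] [Module.Flat R F]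
    {f : S →ₗ[R] F} {g : F →ₗ[R] S'}
    (hfg : Function.Exact f g) (hg : Function.Surjective g)
    (H : ∀ p : PrimeSpectrum R, Function.Injective (f.lTensor (R ⧸ p.asIdeal))) :
    Module.Flat R S' := by
  have key : ∀ (M : Type u) [AddCommGroup M] [Module R M] (_ : Module.Finite R M),
      Function.Injective (f.lTensor M) := by
    intro M _ _ hM
    induction hM using IsNoetherianRing.induction_on_isQuotientEquivQuotientPrime R with
    | subsingleton N =>
      exact Function.injective_of_subsingleton _
    | quotient N p e => exact lTensor_inj_congr f e.symm (H p)
    | exact N₁ N₂ N₃ i p hi hp hip h₁ h₃ =>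
      exact lTensor_inj_ext hip hp h₁ h₃ (Module.Flat.rTensor_preserves_injective_linearMap _ hi)
  rw [Module.Flat.iff_rTensor_injective']
  intro I
  exact rTensor_inj_of_lTensor_inj hfg hg (p := Submodule.mkQ I)
    (LinearMap.exact_subtype_mkQ I) (Submodule.mkQ_surjective I)
    (key (R ⧸ I) inferInstance)
    (Module.Flat.rTensor_preserves_injective_linearMap _ (Submodule.injective_subtype _))

/-- injectivity from local flatness plus regularity -/
lemma lTensor_inj_of_local (q : Ideal R) [q.IsPrime] {S F S' : Type u} [AddCommGroup S]
    [AddCommGroup F]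
    [AddCommGroup S'] [Module R S] [Module R F] [Module R S'] 
    {f : S →ₗ[R] F} {g : F →ₗ[R] S'} (hf : Function.Injective f)
    (hfg : Function.Exact f g) (hg : Function.Surjective g)
    (hfl : Module.Flat (Localization.AtPrime q) (Localization.AtPrime q ⊗[R] S'))
    (G : Type u) [AddCommGroup G] [Module R G]
    (hreg : ∀ s ∈ q.primeCompl, IsSMulRegular (G ⊗[R] S) s) :
    Function.Injective (f.lTensor G) := by
  let Rq := Localization.AtPrime q
  have : Module.Flat R (Rq ⊗[R] S') := Module.Flat.trans R Rq _
  have h1 : Function.Injective ((f.lTensor Rq).lTensor G) :=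
    lTensor_inj_of_flat (Module.Flat.lTensor_preserves_injective_linearMap _ hf)
      (lTensor_exact Rq hfg hg) (LinearMap.lTensor_surjective Rq hg) G
  rw [injective_iff_map_eq_zero]
  intro x hx
  have hη : (TensorProduct.mk R Rq S 1).lTensor G x = 0 := by
    apply h1
    rw [map_zero, ← LinearMap.comp_apply, ← LinearMap.lTensor_comp]
    have : (f.lTensor Rq) ∘ₗ (TensorProduct.mk R Rq S 1) = (TensorProduct.mk R Rq F 1) ∘ₗ f := by
      ext y; simp
    rw [this, LinearMap.lTensor_comp, LinearMap.comp_apply, hx, map_zero]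
  -- transport to `Rq ⊗ (G ⊗ S)`
  have h2 : (TensorProduct.mk R Rq (G ⊗[R] S) 1) x = 0 := by
    have : (TensorProduct.mk R Rq (G ⊗[R] S) 1) =
        (TensorProduct.leftComm R G Rq S).toLinearMap ∘ₗ (TensorProduct.mk R Rq S 1).lTensor G := by
      ext a b; simp
    rw [this, LinearMap.comp_apply, hη, map_zero]
  obtain ⟨s, hs⟩ := (IsLocalizedModule.eq_zero_iff q.primeCompl
    (TensorProduct.mk R Rq (G ⊗[R] S) 1)).1 h2
  exact hreg s.1 s.2 (show s.1 • x = s.1 • 0 by rw [smul_zero]; exact hs)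

end

open IsLocalRing in
theorem flat_of_dim_le (h : ℕ) : ∀ {R : Type u} [CommRing R] [IsNoetherianRing R] [IsLocalRing R]
    (_ : ringKrullDim R ≤ h) {S F : ℕ → Type u} [∀ j, AddCommGroup (S j)]
    [∀ j, AddCommGroup (F j)] [∀ j, Module R (S j)] [∀ j, Module R (F j)]
    {f : ∀ j, S (j + 1) →ₗ[R] F j} {g : ∀ j, F j →ₗ[R] S j} (_ : IsChain R f g)
    {n : ℕ} (_ : Module.Flat R (S n)) {j : ℕ} (_ : h ≤ j), Module.Flat R (S j) := by
  induction h using Nat.strong_induction_on with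
  | _ h ih =>
    intro R _ _ _ hdim S F _ _ _ _ f g hc n hn j hj
    have hstart : Module.Flat R (S (max n j)) := hc.flat_le hn (le_max_left _ _)
    refine Nat.decreasingInduction' (m := j) (n := max n j) (P := fun k => Module.Flat R (S k))
      ?_ (le_max_right _ _) hstart
    intro k _ hjk hk
    have := hc.flat k
    refine flat_of_prime_quot (hc.exact k) (hc.surj k) ?_
    intro p
    by_cases hp : p.asIdeal = maximalIdeal R
    · rw [quot_lTensor_inj_iff, hp]
      apply mem_of_regular_quot k (hdim.trans _) hc hk
      exact_mod_cast hj.trans hjk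
    · have hlt : p.asIdeal < maximalIdeal R := lt_of_le_of_ne (le_maximalIdeal p.2.ne_top) hp
      have h1 : p.asIdeal.height < (maximalIdeal R).height :=
        Ideal.height_strict_mono_of_isPrime_of_isPrime hlt
      have h2 : ((maximalIdeal R).height : WithBot ℕ∞) ≤ (h : ℕ∞) := by
        rw [maximalIdeal_height_eq_ringKrullDim]; exact hdim
      have h3 : p.asIdeal.height < h := lt_of_lt_of_le h1 (by exact_mod_cast h2)
      obtain ⟨h', hh'⟩ := ENat.ne_top_iff_exists.1 (ne_top_of_lt h3)
      have hlt' : h' < h := by rw [← hh'] at h3; exact_mod_cast h3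
      have hdim' : ringKrullDim (Localization.AtPrime p.asIdeal) ≤ h' := by
        rw [IsLocalization.AtPrime.ringKrullDim_eq_height p.asIdeal, ← hh']
        exact le_rfl
      have hloc := ih h' hlt' hdim' (hc.baseChange (Localization.AtPrime p.asIdeal)) (n := n)
        (by infer_instance) (j := k) (by omega)
      refine lTensor_inj_of_local p.asIdeal (hc.inj k) (hc.exact k) (hc.surj k) hloc _ ?_
      intro s hs
      refine IsSMulRegular.rTensor (S (k+1)) ?_
      intro a b hab
      obtain ⟨a, rfl⟩ := Ideal.Quotient.mk_surjective a
      obtain ⟨b, rfl⟩ := Ideal.Quotient.mk_surjective b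
      have hab' : Ideal.Quotient.mk p.asIdeal s * Ideal.Quotient.mk p.asIdeal a =
        Ideal.Quotient.mk p.asIdeal s * Ideal.Quotient.mk p.asIdeal b := hab
      have hs0 : Ideal.Quotient.mk p.asIdeal s ≠ 0 := by
        rw [Ne, Ideal.Quotient.eq_zero_iff_mem]; exact hs
      exact mul_left_cancel₀ hs0 hab'

/-- local flatness at small height -/
theorem flat_localization_of_height_le {R : Type u} [CommRing R] [IsNoetherianRing R]
    {S F : ℕ → Type u} [∀ j, AddCommGroup (S j)]
    [∀ j, AddCommGroup (F j)] [∀ j, Module R (S j)] [∀ j, Module R (F j)]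
    {f : ∀ j, S (j + 1) →ₗ[R] F j} {g : ∀ j, F j →ₗ[R] S j} (hc : IsChain R f g)
    {n : ℕ} (hn : Module.Flat R (S n)) {j : ℕ} (p : Ideal R) [p.IsPrime] (hj : p.height ≤ j) :
    Module.Flat (Localization.AtPrime p) (Localization.AtPrime p ⊗[R] S j) := by
  refine flat_of_dim_le j ?_ (hc.baseChange (Localization.AtPrime p)) (n := n)
    (by infer_instance) le_rfl
  rw [IsLocalization.AtPrime.ringKrullDim_eq_height p]
  exact_mod_cast hj

theorem flat_of_ringKrullDim_le {R : Type u} [CommRing R] [IsNoetherianRing R]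
    {S F : ℕ → Type u} [∀ j, AddCommGroup (S j)]
    [∀ j, AddCommGroup (F j)] [∀ j, Module R (S j)] [∀ j, Module R (F j)]
    {f : ∀ j, S (j + 1) →ₗ[R] F j} {g : ∀ j, F j →ₗ[R] S j} (hc : IsChain R f g)
    {n : ℕ} (hn : Module.Flat R (S n)) {j : ℕ} (hd : ringKrullDim R ≤ j) :
    Module.Flat R (S j) := by
  refine Module.flat_of_isLocalized_maximal (S := R) (R := R) (S j)
    (fun P _ => Localization.AtPrime P ⊗[R] S j)
    (fun P _ => TensorProduct.mk R (Localization.AtPrime P) (S j) 1) ?_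
  intro P hP
  have h1 : ((P.height : ℕ∞) : WithBot ℕ∞) ≤ (j : ℕ∞) := (Ideal.height_le_ringKrullDim_of_ne_top
    hP.ne_top).trans hd
  have := flat_localization_of_height_le hc hn P (j := j) (by exact_mod_cast h1)
  exact Module.Flat.trans R (Localization.AtPrime P) _

end PDK

open CategoryTheory Limits
open TensorProduct

namespace PDK

/-- all elements outside `q` act bijectively -/
def LocAt {A : Type*} [CommRing A] (q : Ideal A) (T : Type*) [AddCommGroup T] [Module A T] : Prop :=
  ∀ s ∉ q, Function.Bijective (fun t : T => s • t)

/-- the map `(t_i) ↦ ∑ t_i ⊗ s_i` -/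
noncomputable def sumTmul (A : Type*) [CommRing A] {I S : Type*} [AddCommGroup S] [Module A S] (s : I → S)
    (T : Type*) [AddCommGroup T] [Module A T] : (I →₀ T) →ₗ[A] T ⊗[A] S :=
  Finsupp.lsum A fun i => (TensorProduct.mk A T S).flip (s i)

section
variable {A : Type u} [CommRing A] (q : Ideal A) 
  {I S : Type u} [AddCommGroup S] [Module A S] (s : I → S)
  {T T' : Type u} [AddCommGroup T] [Module A T] [AddCommGroup T'] [Module A T']

@[simp]
lemma sumTmul_single (i : I) (t : T) : sumTmul A s T (Finsupp.single i t) = t ⊗ₜ s i := by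
  simp [sumTmul]

lemma sumTmul_map (φ : T →ₗ[A] T') (x : I →₀ T) :
    sumTmul A s T' (Finsupp.mapRange.linearMap φ x) = φ.rTensor S (sumTmul A s T x) := by
  rw [← LinearMap.comp_apply, ← LinearMap.comp_apply]
  congr 1
  ext i t
  simp

lemma sumTmul_bij_congr (e : T ≃ₗ[A] T') (h : Function.Bijective (sumTmul A s T)) :
    Function.Bijective (sumTmul A s T') := by
  have : sumTmul A s T' = (e.rTensor S).toLinearMap ∘ₗ (sumTmul A s T) ∘ₗ
      (Finsupp.mapRange.linearEquiv e.symm).toLinearMap := by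
    ext i t; simp
  rw [this]
  exact ((e.rTensor S).bijective.comp h).comp (Finsupp.mapRange.linearEquiv e.symm).bijective

variable [q.IsPrime]

variable {q} in
lemma LocAt.tensor (h : LocAt q T) : LocAt q (T ⊗[A] S) := by
  intro r hr
  have h1 := h r hr
  let e : T ≃ₗ[A] T := LinearEquiv.ofBijective (LinearMap.lsmul A T r) h1
  have : (fun t : T ⊗[A] S => r • t) = (e.rTensor S) := by
    funext t
    induction t with
    | zero => simp
    | tmul x y => rw [TensorProduct.smul_tmul']; rfl
    | add x y hx hy => rw [smul_add, map_add, ← hx, ← hy]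
  rw [this]
  exact (e.rTensor S).bijective

/-- `T ≃ A_q ⊗ T` -/
noncomputable def LocAt.equiv {q : Ideal A} [q.IsPrime] (h : LocAt q T) :
    T ≃ₗ[A] Localization.AtPrime q ⊗[A] T :=
  have : IsLocalizedModule q.primeCompl (LinearMap.id : T →ₗ[A] T) :=
    ⟨fun x => by
      rw [Module.End.isUnit_iff]
      exact h x.1 x.2, fun y => ⟨(y, 1), by simp⟩, fun {a b} hab => ⟨1, by simpa using hab⟩⟩
  IsLocalizedModule.linearEquiv q.primeCompl LinearMap.id
    (TensorProduct.mk A (Localization.AtPrime q) T 1)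

open IsLocalRing in
variable (S) in
lemma exists_basis : ∃ (I : Type u) (s : I → S),
    ∃ b : Module.Basis I (Localization.AtPrime q ⧸ maximalIdeal (Localization.AtPrime q))
      ((Localization.AtPrime q ⧸ maximalIdeal (Localization.AtPrime q)) ⊗[A] S),
      ∀ i, b i = 1 ⊗ₜ s i := by
  let K := Localization.AtPrime q ⧸ maximalIdeal (Localization.AtPrime q)
  let _ : Field K := Ideal.Quotient.field _
  let st : Set (K ⊗[A] S) := Set.range (fun y : S => (1 : K) ⊗ₜ[A] y)
  have hst : ⊤ ≤ Submodule.span K st := by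
    intro x _
    induction x with
    | zero => exact zero_mem _
    | tmul k y =>
      have : k ⊗ₜ[A] y = k • ((1 : K) ⊗ₜ[A] y) := by
        rw [TensorProduct.smul_tmul', smul_eq_mul, mul_one]
      rw [this]
      exact Submodule.smul_mem _ _ (Submodule.subset_span ⟨y, rfl⟩)
    | add x y hx hy => exact add_mem (hx trivial) (hy trivial)
  let b := Module.Basis.ofSpan hst
  have hb : ∀ i, ∃ y : S, (1 : K) ⊗ₜ[A] y = b i := fun i => Module.Basis.ofSpan_subset hst ⟨i, rfl⟩
  choose s hs using hb
  exact ⟨_, s, b, fun i => (hs i).symm⟩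

end
end PDK

open CategoryTheory Limits
open TensorProduct

namespace PDK
set_option linter.unusedSectionVars false

section
variable {A : Type u} [CommRing A] {q : Ideal A} [q.IsPrime]
  {I S : Type u} [AddCommGroup S] [Module A S] {s : I → S}
  {T T' : Type u} [AddCommGroup T] [Module A T] [AddCommGroup T'] [Module A T']

open IsLocalRing

lemma sumTmul_bij_killed 
    (b : Module.Basis I (Localization.AtPrime q ⧸ maximalIdeal (Localization.AtPrime q))
      ((Localization.AtPrime q ⧸ maximalIdeal (Localization.AtPrime q)) ⊗[A] S))
    (hb : ∀ i, b i = 1 ⊗ₜ s i) (hT : LocAt q T) (hq : ∀ a ∈ q, ∀ t : T, a • t = 0) :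
    Function.Bijective (sumTmul A s T) := by
  refine sumTmul_bij_congr s hT.equiv.symm ?_
  let R := Localization.AtPrime q
  let K := R ⧸ maximalIdeal R
  have htor : Module.IsTorsionBySet R (R ⊗[A] T) (maximalIdeal R) := by
    rw [← Localization.AtPrime.map_eq_maximalIdeal, Ideal.map, Ideal.span, ← Module.isTorsionBySet_iff_is_torsion_by_span]
    rintro x ⟨_, ⟨a, ha, rfl⟩⟩
    show algebraMap A R a • x = 0
    rw [algebraMap_smul]
    induction x with
    | zero => simp
    | tmul x y => rw [← TensorProduct.tmul_smul, hq a ha, TensorProduct.tmul_zero]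
    | add x y hx hy => rw [smul_add, hx, hy, add_zero]
  let _ : Module K (R ⊗[A] T) := htor.module
  have : IsScalarTower A K (R ⊗[A] T) := htor.isScalarTower
  classical
  let e1 := (TensorProduct.equivFinsuppOfBasisRight (M := R ⊗[A] T) b).symm
  let e2 := TensorProduct.AlgebraTensorModule.cancelBaseChange A K K (R ⊗[A] T) S
  have : (sumTmul A s (R ⊗[A] T) : (I →₀ R ⊗[A] T) → _) = fun x => e2 (e1 x) := by
    funext x
    induction x using Finsupp.induction_linear with
    | zero => rw [map_zero, map_zero, map_zero]
    | add x y hx hy => rw [map_add, hx, hy, map_add, map_add]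
    | single i t =>
      rw [sumTmul_single]
      simp only [e1, TensorProduct.equivFinsuppOfBasisRight_symm_apply]
      rw [Finsupp.sum_single_index (by simp), hb]
      refine Eq.symm ((AlgebraTensorModule.cancelBaseChange_tmul (R := A) (A := K) (B := K) t (s i) 1).trans ?_)
      rw [one_smul]
  rw [this]
  exact e2.bijective.comp e1.bijective

lemma rTensor_inj_of_local (hfl : Module.Flat (Localization.AtPrime q) (Localization.AtPrime q ⊗[A] S))
    (hT : LocAt q T') (i : T' →ₗ[A] T) (hi : Function.Injective i) :
    Function.Injective (i.rTensor S) := by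
  let Rq := Localization.AtPrime q
  have : Module.Flat A (Rq ⊗[A] S) := Module.Flat.trans A Rq _
  rw [injective_iff_map_eq_zero]
  intro x hx
  have hη : (TensorProduct.mk A Rq S 1).lTensor T' x = 0 := by
    apply Module.Flat.rTensor_preserves_injective_linearMap (M := Rq ⊗[A] S) i hi
    rw [map_zero, lr_comm, hx, map_zero]
  have h2 : (TensorProduct.mk A Rq (T' ⊗[A] S) 1) x = 0 := by
    have : (TensorProduct.mk A Rq (T' ⊗[A] S) 1) =
        (TensorProduct.leftComm A T' Rq S).toLinearMap ∘ₗ (TensorProduct.mk A Rq S 1).lTensor T' := by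
      ext a b; simp
    rw [this, LinearMap.comp_apply, hη, map_zero]
  obtain ⟨r, hr⟩ := (IsLocalizedModule.eq_zero_iff q.primeCompl
    (TensorProduct.mk A Rq (T' ⊗[A] S) 1)).1 h2
  exact (hT.tensor r.1 r.2).1 (show r.1 • x = r.1 • 0 by rw [smul_zero]; exact hr)

lemma LocAt.torsion (hT : LocAt q T) (J : Ideal A) : LocAt q (Submodule.torsionBySet A T J) := by
  intro r hr
  constructor
  · intro x y hxy
    exact Subtype.ext ((hT r hr).1 (congrArg Subtype.val hxy))
  · rintro ⟨y, hy⟩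
    obtain ⟨x, rfl⟩ := (hT r hr).2 y
    refine ⟨⟨x, ?_⟩, rfl⟩
    rw [Submodule.mem_torsionBySet_iff] at hy ⊢
    intro a
    apply (hT r hr).1
    simp only
    rw [smul_comm, hy, smul_zero]

lemma LocAt.quot_torsion (hT : LocAt q T) (J : Ideal A) :
    LocAt q (T ⧸ Submodule.torsionBySet A T J) := by
  intro r hr
  constructor
  · refine (injective_iff_map_eq_zero (LinearMap.lsmul A (T ⧸ Submodule.torsionBySet A T J) r)).2 ?_
    intro y hy
    obtain ⟨y, rfl⟩ := Submodule.mkQ_surjective _ y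
    rw [LinearMap.lsmul_apply, ← map_smul, Submodule.mkQ_apply, Submodule.Quotient.mk_eq_zero,
      Submodule.mem_torsionBySet_iff] at hy
    rw [Submodule.mkQ_apply, Submodule.Quotient.mk_eq_zero, Submodule.mem_torsionBySet_iff]
    intro a
    apply (hT r hr).1
    have := hy a
    simp only
    rw [smul_comm, this, smul_zero]
  · intro y
    obtain ⟨y, rfl⟩ := Submodule.mkQ_surjective _ y
    obtain ⟨x, rfl⟩ := (hT r hr).2 y
    exact ⟨Submodule.mkQ _ x, (map_smul _ _ _).symm⟩

lemma sumTmul_bij_pow 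
    (b : Module.Basis I (Localization.AtPrime q ⧸ maximalIdeal (Localization.AtPrime q))
      ((Localization.AtPrime q ⧸ maximalIdeal (Localization.AtPrime q)) ⊗[A] S))
    (hb : ∀ i, b i = 1 ⊗ₜ s i)
    (hfl : Module.Flat (Localization.AtPrime q) (Localization.AtPrime q ⊗[A] S)) (n : ℕ) :
    ∀ {T : Type u} [AddCommGroup T] [Module A T] (_ : LocAt q T) (_ : ∀ a ∈ q ^ n, ∀ t : T, a • t = 0),
    Function.Bijective (sumTmul A s T) := by
  induction n with
  | zero =>
    intro T _ _ hT hq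
    have : Subsingleton T := ⟨fun x y => by
      have h1 := hq 1 (by simp) x
      have h2 := hq 1 (by simp) y
      rw [one_smul] at h1 h2
      rw [h1, h2]⟩
    exact ⟨Function.injective_of_subsingleton _, Function.surjective_to_subsingleton _⟩
  | succ n ih =>
    intro T _ _ hT hq
    let T1 := Submodule.torsionBySet A T q
    have b1 : Function.Bijective (sumTmul A s T1) := sumTmul_bij_killed b hb (hT.torsion q)
      (fun a ha t => Subtype.ext (by
        have := (Submodule.mem_torsionBySet_iff _ _).1 t.2 ⟨a, ha⟩
        exact this))
    have b3 : Function.Bijective (sumTmul A s (T ⧸ T1)) := by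
      apply ih (hT.quot_torsion q)
      intro a ha t
      obtain ⟨t, rfl⟩ := Submodule.mkQ_surjective _ t
      rw [← map_smul, Submodule.mkQ_apply, Submodule.Quotient.mk_eq_zero,
        Submodule.mem_torsionBySet_iff]
      rintro ⟨c, hc⟩
      show c • a • t = 0
      rw [smul_smul, hq _ (by rw [pow_succ']; exact Ideal.mul_mem_mul hc ha)]
    have ex1 : Function.Exact (T1.subtype.rTensor S) (T1.mkQ.rTensor S) :=
      rTensor_exact S (LinearMap.exact_subtype_mkQ T1) (Submodule.mkQ_surjective T1)
    have in1 : Function.Injective (T1.subtype.rTensor S) :=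
      rTensor_inj_of_local hfl (hT.torsion q) _ (Submodule.injective_subtype _)
    constructor
    · rw [injective_iff_map_eq_zero]
      intro x hx
      have h1 : Finsupp.mapRange.linearMap T1.mkQ x = 0 := by
        apply b3.1
        rw [sumTmul_map, hx, map_zero, map_zero]
      have h2 : ∀ i, x i ∈ T1 := by
        intro i
        have := DFunLike.congr_fun h1 i
        simpa using this
      obtain ⟨x', rfl⟩ : ∃ x', Finsupp.mapRange.linearMap T1.subtype x' = x := by
        refine ⟨Finsupp.onFinset x.support (fun i => ⟨x i, h2 i⟩) ?_, ?_⟩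
        · intro i hi
          rw [Finsupp.mem_support_iff]
          intro h; exact hi (Subtype.ext h)
        · ext i; simp
      rw [sumTmul_map] at hx
      have := b1.1 (in1 (hx.trans (map_zero _).symm) |>.trans (map_zero _).symm)
      rw [this, map_zero]
    · intro y
      obtain ⟨x, hx⟩ := b3.2 (T1.mkQ.rTensor S y)
      obtain ⟨x, rfl⟩ := Finsupp.mapRange_surjective _ (map_zero _) (Submodule.mkQ_surjective T1) x
      have h1 : T1.mkQ.rTensor S (y - sumTmul A s T x) = 0 := by
        rw [map_sub, ← hx, ← sumTmul_map, sub_eq_zero]; rfl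
      obtain ⟨z, hz⟩ := (ex1 _).1 h1
      obtain ⟨w, rfl⟩ := b1.2 z
      rw [← sumTmul_map] at hz
      exact ⟨Finsupp.mapRange.linearMap T1.subtype w + x, by rw [map_add, hz]; abel⟩

lemma sumTmul_bij
    (b : Module.Basis I (Localization.AtPrime q ⧸ maximalIdeal (Localization.AtPrime q))
      ((Localization.AtPrime q ⧸ maximalIdeal (Localization.AtPrime q)) ⊗[A] S))
    (hb : ∀ i, b i = 1 ⊗ₜ s i)
    (hfl : Module.Flat (Localization.AtPrime q) (Localization.AtPrime q ⊗[A] S))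
    (hT : LocAt q T) (hq : ∀ t : T, ∃ n, ∀ a ∈ q ^ n, a • t = 0) :
    Function.Bijective (sumTmul A s T) := by
  let Tn : ℕ → Submodule A T := fun n => Submodule.torsionBySet A T (q ^ n : Ideal A)
  have mono : ∀ m n, m ≤ n → Tn m ≤ Tn n := by
    intro m n hmn t ht
    simp only [Tn, Submodule.mem_torsionBySet_iff] at ht ⊢
    intro a
    exact ht ⟨a.1, Ideal.pow_le_pow_right hmn a.2⟩
  have hmem : ∀ t, ∃ n, t ∈ Tn n := by
    intro t
    obtain ⟨n, hn⟩ := hq t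
    exact ⟨n, (Submodule.mem_torsionBySet_iff _ _).2 fun a => hn a.1 a.2⟩
  have bn : ∀ n, Function.Bijective (sumTmul A s (Tn n)) := fun n =>
    sumTmul_bij_pow b hb hfl n (hT.torsion _) (fun a ha t => Subtype.ext
      ((Submodule.mem_torsionBySet_iff _ _).1 t.2 ⟨a, ha⟩))
  constructor
  · rw [injective_iff_map_eq_zero]
    intro x hx
    choose N hN using hmem
    let n := x.support.sup (fun i => N (x i))
    have h2 : ∀ i, x i ∈ Tn n := by
      intro i
      by_cases hi : i ∈ x.support
      · exact mono _ _ (Finset.le_sup (f := fun i => N (x i)) hi) (hN (x i))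
      · rw [Finsupp.notMem_support_iff.1 hi]; exact zero_mem _
    clear_value n
    obtain ⟨x', rfl⟩ : ∃ x', Finsupp.mapRange.linearMap (Tn n).subtype x' = x := by
      refine ⟨Finsupp.onFinset x.support (fun i => ⟨x i, h2 i⟩) ?_, ?_⟩
      · intro i hi
        rw [Finsupp.mem_support_iff]
        intro h; exact hi (Subtype.ext h)
      · ext i; simp
    rw [sumTmul_map] at hx
    have in1 : Function.Injective ((Tn n).subtype.rTensor S) :=
      rTensor_inj_of_local hfl (hT.torsion _) _ (Submodule.injective_subtype _)
    have := (bn n).1 (in1 (hx.trans (map_zero _).symm) |>.trans (map_zero _).symm)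
    rw [this, map_zero]
  · intro y
    induction y with
    | zero => exact ⟨0, map_zero _⟩
    | add x y hx hy =>
      obtain ⟨a, rfl⟩ := hx
      obtain ⟨b, rfl⟩ := hy
      exact ⟨a + b, map_add _ _ _⟩
    | tmul t y =>
      obtain ⟨n, hn⟩ := hmem t
      obtain ⟨w, hw⟩ := (bn n).2 ((⟨t, hn⟩ : Tn n) ⊗ₜ y)
      refine ⟨Finsupp.mapRange.linearMap (Tn n).subtype w, ?_⟩
      rw [sumTmul_map, hw]
      rfl

/-- main output of this section -/
theorem exists_sumTmul_bij (q : Ideal A) [q.IsPrime] (S : Type u) [AddCommGroup S] [Module A S]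
    (hfl : Module.Flat (Localization.AtPrime q) (Localization.AtPrime q ⊗[A] S)) :
    ∃ (I : Type u) (s : I → S), ∀ (T : Type u) [AddCommGroup T] [Module A T], LocAt q T →
      (∀ t : T, ∃ n, ∀ a ∈ q ^ n, a • t = 0) → Function.Bijective (sumTmul A s T) := by
  obtain ⟨I, s, b, hb⟩ := exists_basis q S
  exact ⟨I, s, fun T _ _ hT hq => sumTmul_bij b hb hfl hT hq⟩

end
end PDK

open CategoryTheory Limits
open TensorProduct

namespace PDK
set_option linter.unusedSectionVars false

section
variable {A : Type u} [CommRing A]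
  {X Y : Type u} [AddCommGroup X] [Module A X] [AddCommGroup Y] [Module A Y]

lemma inf_le_ann (x y : X) : Ideal.torsionOf A X x ⊓ Ideal.torsionOf A X y ≤ Ideal.torsionOf A X (x + y) := by
  intro a ha
  have h1 := (Ideal.mem_torsionOf_iff _ _).1 ha.1
  have h2 := (Ideal.mem_torsionOf_iff _ _).1 ha.2
  rw [Ideal.mem_torsionOf_iff, smul_add, h1, h2, add_zero]

/-- Elements whose annihilator is only contained in primes of `W`. -/
def Gam (W : Set (PrimeSpectrum A)) (X : Type u) [AddCommGroup X] [Module A X] :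
    Submodule A X where
  carrier := {x | ∀ p : PrimeSpectrum A, Ideal.torsionOf A X x ≤ p.asIdeal → p ∈ W}
  add_mem' {x y} hx hy p hp := by
    rcases (p.2.inf_le).1 ((inf_le_ann x y).trans hp) with h | h
    exacts [hx p h, hy p h]
  zero_mem' p hp := absurd (hp (by simp : (1 : A) ∈ _)) ((Ideal.ne_top_iff_one _).1 p.2.ne_top)
  smul_mem' a x hx p hp := hx p (le_trans (fun b hb => by
    rw [Ideal.mem_torsionOf_iff] at hb ⊢
    rw [smul_comm, hb, smul_zero]) hp)

lemma mem_Gam {W : Set (PrimeSpectrum A)} {x : X} :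
    x ∈ Gam W X ↔ ∀ p : PrimeSpectrum A, Ideal.torsionOf A X x ≤ p.asIdeal → p ∈ W := Iff.rfl

lemma Gam_mono {W W' : Set (PrimeSpectrum A)} (h : W ⊆ W') : Gam W X ≤ Gam W' X :=
  fun _ hx p hp => h (hx p hp)

lemma Gam_univ : Gam (Set.univ : Set (PrimeSpectrum A)) X = ⊤ :=
  top_le_iff.1 fun _ _ _ _ => trivial

lemma Gam_inter (W W' : Set (PrimeSpectrum A)) : Gam (W ∩ W') X = Gam W X ⊓ Gam W' X :=
  le_antisymm (le_inf (Gam_mono Set.inter_subset_left) (Gam_mono Set.inter_subset_right))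
    fun _ hx p hp => ⟨hx.1 p hp, hx.2 p hp⟩

lemma Gam_empty : Gam (∅ : Set (PrimeSpectrum A)) X = ⊥ := by
  refine le_bot_iff.1 fun x hx => ?_
  by_contra h
  have : Ideal.torsionOf A X x ≠ ⊤ := fun h' => h (by
    have : (1 : A) ∈ Ideal.torsionOf A X x := h' ▸ trivial
    simpa using this)
  obtain ⟨m, hm, hle⟩ := Ideal.exists_le_maximal _ this
  exact hx ⟨m, hm.isPrime⟩ hle

lemma Gam_map {W : Set (PrimeSpectrum A)} (f : X →ₗ[A] Y) {x : X} (hx : x ∈ Gam W X) :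
    f x ∈ Gam W Y := fun p hp => hx p (le_trans (fun b hb => by
    rw [Ideal.mem_torsionOf_iff] at hb ⊢
    rw [← map_smul, hb, map_zero]) hp)

lemma Gam_map_iff {W : Set (PrimeSpectrum A)} (f : X →ₗ[A] Y) (hf : Function.Injective f) {x : X} :
    f x ∈ Gam W Y ↔ x ∈ Gam W X := by
  refine ⟨fun hx p hp => hx p (le_trans (fun b hb => ?_) hp), Gam_map f⟩
  rw [Ideal.mem_torsionOf_iff] at hb ⊢
  rw [← map_smul] at hb
  exact hf (by rw [hb, map_zero])

/-- If `a` kills `x` and `V(a)` lies in `W` then `x` is in `Gam W`. -/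
lemma mem_Gam_of_kill {W : Set (PrimeSpectrum A)} {x : X} (a : Ideal A)
    (ha : ∀ b ∈ a, b • x = 0) (h : ∀ p : PrimeSpectrum A, a ≤ p.asIdeal → p ∈ W) :
    x ∈ Gam W X := fun p hp => h p (le_trans (fun b hb => by
    rw [Ideal.mem_torsionOf_iff, ha b hb]) hp)

lemma mem_Gam_zeroLocus [IsNoetherianRing A] {q : Ideal A} {x : X} :
    x ∈ Gam {p | q ≤ p.asIdeal} X ↔ ∃ n, ∀ a ∈ q ^ n, a • x = 0 := by
  constructor
  · intro hx
    have : q ≤ (Ideal.torsionOf A X x).radical := by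
      rw [Ideal.radical_eq_sInf]
      refine le_sInf fun p hp => ?_
      exact hx ⟨p, hp.2⟩ hp.1
    obtain ⟨n, hn⟩ := Ideal.exists_pow_le_of_le_radical_of_fg this (IsNoetherian.noetherian q)
    exact ⟨n, fun a ha => (Ideal.mem_torsionOf_iff _ _).1 (hn ha)⟩
  · rintro ⟨n, hn⟩
    exact mem_Gam_of_kill (q ^ n) hn fun p hp => p.2.le_of_pow_le hp

lemma Baer_Gam [IsNoetherianRing A] (hX : Module.Baer A X) (W : Set (PrimeSpectrum A)) :
    Module.Baer A (Gam W X) := by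
  intro I f
  have hinj := hX.injective
  set 𝔞 : Ideal A := Module.annihilator A (LinearMap.range f) with h𝔞
  have hW : ∀ p : PrimeSpectrum A, 𝔞 ≤ p.asIdeal → p ∈ W := by
    intro p hp
    have hfg : (LinearMap.range f).FG := by
      rw [LinearMap.range_eq_map]
      exact (IsNoetherian.noetherian (⊤ : Submodule A I)).map f
    obtain ⟨s, hs⟩ := hfg
    have h1 : s.inf (fun y => Ideal.torsionOf A _ y) ≤ 𝔞 := by
      intro a ha
      rw [h𝔞, Module.mem_annihilator]
      rintro ⟨y, hy0⟩
      have hy : y ∈ Submodule.span A (s : Set (Gam W X)) := hs ▸ hy0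
      refine Subtype.ext ?_
      change a • y = 0
      clear hy0
      induction hy using Submodule.span_induction with
      | mem x hx =>
        have := Finset.inf_le (f := fun y => Ideal.torsionOf A _ y) hx ha
        exact (Ideal.mem_torsionOf_iff _ _).1 this
      | zero => simp
      | add x y _ _ h1 h2 => rw [smul_add, h1, h2, add_zero]
      | smul b x _ h => rw [smul_comm, h, smul_zero]
    obtain ⟨y, hy, hyp⟩ := (p.2.inf_le').1 (h1.trans hp)
    refine y.2 p (le_trans ?_ hyp)
    intro b hb
    rw [Ideal.mem_torsionOf_iff] at hb ⊢
    exact Subtype.ext hb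
  obtain ⟨k, hk⟩ := Ideal.exists_pow_inf_eq_pow_smul 𝔞 (N := (I : Submodule A A))
  have hk1 := hk (k + 1) (by omega)
  rw [show k + 1 - k = 1 by omega, pow_one] at hk1
  let φ : I →ₗ[A] A ⧸ 𝔞 ^ (k + 1) := (Submodule.mkQ (𝔞 ^ (k + 1))) ∘ₗ I.subtype
  let F : I →ₗ[A] X := (Gam W X).subtype ∘ₗ f
  have hF : LinearMap.ker φ ≤ LinearMap.ker F := by
    rintro ⟨x, hx⟩ hxφ
    have hx2 : x ∈ 𝔞 ^ (k + 1) := by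
      exact (Submodule.Quotient.mk_eq_zero _).1 hxφ
    have hx3 : x ∈ 𝔞 • (I : Submodule A A) := by
      have : x ∈ 𝔞 ^ (k + 1) • (⊤ : Submodule A A) ⊓ I := ⟨by simpa using hx2, hx⟩
      rw [hk1] at this
      exact Submodule.smul_mono le_rfl inf_le_right this
    have key : ∀ x ∈ 𝔞 • (I : Submodule A A), ∃ h : x ∈ I, f ⟨x, h⟩ = 0 := by
      intro x hx
      induction hx using Submodule.smul_induction_on' with
      | smul r hr n hn =>
        refine ⟨I.mul_mem_left _ hn, ?_⟩
        have := (Module.mem_annihilator.1 hr) ⟨f ⟨n, hn⟩, ⟨_, rfl⟩⟩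
        have h2 := congrArg Subtype.val this
        have h3 : r • f ⟨n, hn⟩ = 0 := h2
        rw [← map_smul] at h3
        exact h3
      | add x hx y hy h1 h2 =>
        obtain ⟨h1, h1'⟩ := h1
        obtain ⟨h2, h2'⟩ := h2
        refine ⟨I.add_mem h1 h2, ?_⟩
        rw [show (⟨x + y, I.add_mem h1 h2⟩ : I) = ⟨x, h1⟩ + ⟨y, h2⟩ from rfl, map_add, h1', h2', add_zero]
    obtain ⟨h, h'⟩ := key x hx3
    simp [F, h']
  obtain ⟨g, hg⟩ := hinj.out ((LinearMap.ker φ).liftQ φ le_rfl)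
    (LinearMap.ker_eq_bot.1 (by simp [Submodule.ker_liftQ])) ((LinearMap.ker φ).liftQ F hF)
  have hmem : ∀ a : A, g (Submodule.mkQ _ a) ∈ Gam W X := by
    intro a
    refine mem_Gam_of_kill (𝔞 ^ (k + 1)) (fun b hb => ?_) fun p hp => hW p (p.2.le_of_pow_le hp)
    rw [← map_smul, ← map_smul]
    have : (Submodule.mkQ (𝔞 ^ (k + 1))) (b • a) = 0 := by
      rw [Submodule.mkQ_apply, Submodule.Quotient.mk_eq_zero]
      exact Ideal.mul_mem_right _ _ hb
    rw [this, map_zero]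
  refine ⟨LinearMap.codRestrict (Gam W X) (g ∘ₗ Submodule.mkQ _) hmem, fun x hx => Subtype.ext ?_⟩
  have := hg (Submodule.Quotient.mk ⟨x, hx⟩)
  simpa [φ, F] using this

lemma exists_pow_smul [IsNoetherianRing A] (hX : Module.Baer A X) (s : A) (u : X) :
    ∃ (r : ℕ) (v : X), s ^ (r + 1) • v = s ^ r • u := by
  let K : ℕ →o Submodule A A :=
    ⟨fun r => LinearMap.ker (LinearMap.lsmul A A (s ^ r)), fun a b hab x hx => by
      simp only [LinearMap.mem_ker, LinearMap.lsmul_apply, smul_eq_mul] at hx ⊢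
      obtain ⟨c, rfl⟩ := Nat.exists_eq_add_of_le hab
      rw [pow_add, mul_comm (s ^ a), mul_assoc, hx, mul_zero]⟩
  obtain ⟨r, hr⟩ := monotone_stabilizes_iff_noetherian.2 (inferInstance : IsNoetherian A A) K
  have hr1 : K r = K (r + 1) := hr (r + 1) (by omega)
  let i := LinearMap.lsmul A A (s ^ (r + 1))
  let g := LinearMap.toSpanSingleton A X (s ^ r • u)
  have hg : LinearMap.ker i ≤ LinearMap.ker g := by
    intro x hx
    change x ∈ K (r + 1) at hx
    rw [← hr1] at hx
    have hx' : s ^ r * x = 0 := by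
      have := LinearMap.mem_ker.1 hx
      simpa using this
    simp only [g, LinearMap.mem_ker, LinearMap.toSpanSingleton_apply]
    rw [smul_smul, mul_comm, hx', zero_smul]
  obtain ⟨h, hh⟩ := hX.extension_property ((LinearMap.ker i).liftQ i le_rfl)
    (LinearMap.ker_eq_bot.1 (by simp [Submodule.ker_liftQ])) ((LinearMap.ker i).liftQ g hg)
  refine ⟨r, h 1, ?_⟩
  have := LinearMap.congr_fun hh (Submodule.Quotient.mk 1)
  simp only [LinearMap.comp_apply, Submodule.liftQ_apply, i, g, LinearMap.lsmul_apply,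
    LinearMap.toSpanSingleton_apply, one_smul] at this
  rw [← this, ← map_smul]
end
end PDK

open CategoryTheory Limits
open TensorProduct

namespace PDK
set_option linter.unusedSectionVars false

section
variable {A : Type u} [CommRing A]
  {X Y Z : Type u} [AddCommGroup X] [Module A X] [AddCommGroup Y] [Module A Y]
  [AddCommGroup Z] [Module A Z]

/-- `Γ_W X / Γ_{W'} X` -/
abbrev DM (W W' : Set (PrimeSpectrum A)) (X : Type u) [AddCommGroup X] [Module A X] : Type u :=
  Gam W X ⧸ (Gam W' X).comap (Gam W X).subtype

variable {W W' W1 W1' W2 W2' W3 W3' W'' : Set (PrimeSpectrum A)}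

def dmk (W') (x : X) (hx : x ∈ Gam W X) : DM W W' X := Submodule.Quotient.mk ⟨x, hx⟩

lemma dmk_surj (t : DM W W' X) : ∃ x hx, dmk W' x hx = t := by
  obtain ⟨⟨x, hx⟩, rfl⟩ := Submodule.Quotient.mk_surjective _ t
  exact ⟨x, hx, rfl⟩

lemma dmk_eq_zero {x : X} {hx : x ∈ Gam W X} : dmk W' x hx = 0 ↔ x ∈ Gam W' X := by
  rw [dmk, Submodule.Quotient.mk_eq_zero]; rfl

lemma smul_dmk {x : X} {hx : x ∈ Gam W X} (a : A) :
    a • dmk W' x hx = dmk W' (a • x) (Submodule.smul_mem _ _ hx) := rfl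

def dmap (h : W1 ⊆ W2) (h' : W1' ⊆ W2') (f : X →ₗ[A] Y) : DM W1 W1' X →ₗ[A] DM W2 W2' Y :=
  Submodule.mapQ _ _ (f.restrict fun _ hx => Gam_mono h (Gam_map f hx))
    (fun _ hx => Gam_mono h' (Gam_map f hx))

@[simp] lemma dmap_dmk (h : W1 ⊆ W2) (h' : W1' ⊆ W2') (f : X →ₗ[A] Y) (x : X) (hx) :
    dmap h h' f (dmk W1' x hx) = dmk W2' (f x) (Gam_mono h (Gam_map f hx)) := rfl

lemma dmap_dmap (h : W1 ⊆ W2) (h' : W1' ⊆ W2') (f : X →ₗ[A] Y)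
    (k : W2 ⊆ W3) (k' : W2' ⊆ W3') (g : Y →ₗ[A] Z) (t : DM W1 W1' X) :
    dmap k k' g (dmap h h' f t) = dmap (h.trans k) (h'.trans k') (g ∘ₗ f) t := by
  obtain ⟨x, hx, rfl⟩ := dmk_surj t
  rfl

lemma dmap_id (t : DM W W' X) : dmap le_rfl le_rfl (LinearMap.id : X →ₗ[A] X) t = t := by
  obtain ⟨x, hx, rfl⟩ := dmk_surj t
  rfl

lemma dmap_add (h : W1 ⊆ W2) (h' : W1' ⊆ W2') (f g : X →ₗ[A] Y) :
    dmap h h' (f + g) = dmap h h' f + dmap h h' g := by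
  ext t
  rfl

lemma d_inj (h : W1 ⊆ W2) (h' : W1' ⊆ W2') (hh : W1 ∩ W2' ⊆ W1') :
    Function.Injective (dmap h h' (LinearMap.id : X →ₗ[A] X)) := by
  rw [injective_iff_map_eq_zero]
  intro t ht
  obtain ⟨x, hx, rfl⟩ := dmk_surj t
  rw [dmap_dmk, dmk_eq_zero] at ht
  rw [dmk_eq_zero]
  refine Gam_mono hh ?_
  rw [Gam_inter]
  exact ⟨hx, ht⟩

lemma d_surj (h' : W1' ⊆ W2') :
    Function.Surjective (dmap le_rfl h' (LinearMap.id : X →ₗ[A] X) : DM W W1' X →ₗ[A] DM W W2' X) := by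
  intro t
  obtain ⟨x, hx, rfl⟩ := dmk_surj t
  exact ⟨dmk _ x hx, rfl⟩

lemma d_exact (h : W' ⊆ W) (h' : W'' ⊆ W') :
    Function.Exact (dmap h le_rfl (LinearMap.id : X →ₗ[A] X) : DM W' W'' X →ₗ[A] DM W W'' X)
      (dmap le_rfl h' (LinearMap.id : X →ₗ[A] X) : DM W W'' X →ₗ[A] DM W W' X) := by
  intro t
  obtain ⟨x, hx, rfl⟩ := dmk_surj t
  rw [dmap_dmk, dmk_eq_zero]
  constructor
  · intro hx'
    exact ⟨dmk _ x hx', rfl⟩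
  · rintro ⟨s, hs⟩
    obtain ⟨y, hy, rfl⟩ := dmk_surj s
    rw [dmap_dmk, ← sub_eq_zero] at hs
    have : dmk W'' (y - x) (sub_mem (Gam_mono h hy) hx) = 0 := hs
    rw [dmk_eq_zero] at this
    have h2 := sub_mem hy (Gam_mono h' this)
    simpa using h2

/-- closed and punctured closed sets -/
abbrev Vc (q : Ideal A) : Set (PrimeSpectrum A) := {p | q ≤ p.asIdeal}
abbrev Vo (q : Ideal A) : Set (PrimeSpectrum A) := {p | q < p.asIdeal}

abbrev TM (q : Ideal A) (X : Type u) [AddCommGroup X] [Module A X] : Type u := DM (Vc q) (Vo q) X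

lemma Tq_inj {q : Ideal A} [hq : q.IsPrime] {s : A} (hs : s ∉ q) {t : TM q X} (h : s • t = 0) :
    t = 0 := by
  obtain ⟨x, hx, rfl⟩ := dmk_surj t
  rw [smul_dmk, dmk_eq_zero] at h
  rw [dmk_eq_zero]
  intro p hp
  refine lt_of_le_of_ne (show q ≤ p.asIdeal from hx p hp) ?_
  rintro rfl
  have := mt (h p) (show ¬ (p.asIdeal < p.asIdeal) from lt_irrefl _)
  obtain ⟨b, hb, hb'⟩ := SetLike.not_le_iff_exists.1 this
  rw [Ideal.mem_torsionOf_iff, smul_smul] at hb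
  have h3 := hp ((Ideal.mem_torsionOf_iff _ _).2 hb)
  rcases hq.mem_or_mem h3 with h4 | h4
  exacts [hb' h4, hs h4]

lemma Tq_tors [IsNoetherianRing A] {q : Ideal A} (t : TM q X) : ∃ n, ∀ a ∈ q ^ n, a • t = 0 := by
  obtain ⟨x, hx, rfl⟩ := dmk_surj t
  obtain ⟨n, hn⟩ := mem_Gam_zeroLocus.1 hx
  refine ⟨n, fun a ha => ?_⟩
  rw [smul_dmk, dmk_eq_zero, hn a ha]
  exact zero_mem _

lemma Tq_locAt [IsNoetherianRing A] {q : Ideal A} [hq : q.IsPrime] (hX : Module.Baer A X) :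
    LocAt q (TM q X) := by
  intro s hs
  constructor
  · intro a b hab
    refine sub_eq_zero.1 (Tq_inj hs ?_)
    rw [smul_sub]
    exact sub_eq_zero.2 hab
  · intro t
    obtain ⟨⟨x, hx⟩, rfl⟩ := Submodule.Quotient.mk_surjective _ t
    obtain ⟨r, v, hv⟩ := exists_pow_smul (Baer_Gam hX (Vc q)) s ⟨x, hx⟩
    refine ⟨Submodule.Quotient.mk v, ?_⟩
    refine sub_eq_zero.1 (Tq_inj (q := q) (s := s ^ r) (fun h => hs (hq.mem_of_pow_mem _ h)) ?_)
    change s ^ r • (s • Submodule.Quotient.mk v - Submodule.Quotient.mk _) = _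
    rw [smul_sub, smul_smul, ← pow_succ, ← Submodule.Quotient.mk_smul, hv, ← Submodule.Quotient.mk_smul,
      sub_self]

lemma tors_inf (hX : Module.Baer A X) (a b : Ideal A) (x : X) (hx : ∀ c ∈ a ⊓ b, c • x = 0) :
    ∃ y z, (∀ c ∈ a, c • y = 0) ∧ (∀ c ∈ b, c • z = 0) ∧ x = y + z := by
  let i : A →ₗ[A] (A ⧸ a) × (A ⧸ b) := (Submodule.mkQ a).prod (Submodule.mkQ b)
  let g := LinearMap.toSpanSingleton A X x
  have hg : LinearMap.ker i ≤ LinearMap.ker g := by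
    intro c hc
    have hc' : i c = 0 := hc
    have h1 : c ∈ a := (Submodule.Quotient.mk_eq_zero _).1 (congrArg Prod.fst hc')
    have h2 : c ∈ b := (Submodule.Quotient.mk_eq_zero _).1 (congrArg Prod.snd hc')
    exact hx c ⟨h1, h2⟩
  obtain ⟨h, hh⟩ := hX.extension_property ((LinearMap.ker i).liftQ i le_rfl)
    (LinearMap.ker_eq_bot.1 (by simp [Submodule.ker_liftQ])) ((LinearMap.ker i).liftQ g hg)
  refine ⟨h (Submodule.mkQ a 1, 0), h (0, Submodule.mkQ b 1), fun c hc => ?_, fun c hc => ?_, ?_⟩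
  · rw [← map_smul, Prod.smul_mk, smul_zero, ← map_smul]
    have : Submodule.mkQ a (c • 1) = 0 := (Submodule.Quotient.mk_eq_zero _).2 (by simpa using hc)
    rw [this]; exact map_zero _
  · rw [← map_smul, Prod.smul_mk, smul_zero, ← map_smul]
    have : Submodule.mkQ b (c • 1) = 0 := (Submodule.Quotient.mk_eq_zero _).2 (by simpa using hc)
    rw [this]; exact map_zero _
  · rw [← map_add, Prod.mk_add_mk, zero_add, add_zero]
    have := LinearMap.congr_fun hh (Submodule.Quotient.mk 1)
    simp only [LinearMap.comp_apply, Submodule.liftQ_apply, g,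
      LinearMap.toSpanSingleton_apply, one_smul] at this
    exact this.symm

lemma Gam_le_iSup [IsNoetherianRing A] (hX : Module.Baer A X) (W : Set (PrimeSpectrum A)) :
    Gam W X ≤ ⨆ p : W, Gam (Vc p.1.asIdeal) X := by
  intro x hx
  obtain ⟨s, hs, hprim⟩ := Submodule.isLasker A A (Ideal.torsionOf A X x)
  have key : ∀ t : Finset (Submodule A A), (∀ I ∈ t, I ∈ s) → ∀ y : X, (∀ c ∈ t.inf id, c • y = 0) →
      y ∈ ⨆ p : W, Gam (Vc p.1.asIdeal) X := by
    classical
    intro t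
    induction t using Finset.induction_on with
    | empty =>
      intro _ y hy
      have := hy 1 (by simp)
      rw [one_smul] at this
      rw [this]; exact zero_mem _
    | insert I t hI ih =>
      intro hts y hy
      rw [Finset.inf_insert] at hy
      obtain ⟨y1, y2, h1, h2, rfl⟩ := tors_inf hX I (t.inf id) y hy
      refine add_mem ?_ (ih (fun J hJ => hts J (Finset.mem_insert_of_mem hJ)) y2 h2)
      have hIs := hts I (Finset.mem_insert_self _ _)
      have hI1 : Ideal.IsPrimary I := hprim hIs
      have hprime : (Ideal.radical I).IsPrime := Ideal.isPrime_radical hI1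
      have hle : Ideal.torsionOf A X x ≤ I := by rw [← hs]; exact Finset.inf_le (f := id) hIs
      have hmem := hx ⟨_, hprime⟩ (hle.trans Ideal.le_radical)
      refine Submodule.mem_iSup_of_mem (⟨⟨_, hprime⟩, hmem⟩ : W) ?_
      exact mem_Gam_of_kill I h1 fun p hp => p.2.radical_le_iff.2 hp
  exact key s (fun _ h => h) x fun c hc => by
    rw [hs] at hc
    exact (Ideal.mem_torsionOf_iff _ _).1 hc
end
end PDK

open CategoryTheory Limits
open TensorProduct

namespace PDK
set_option linter.unusedSectionVars false

section
variable {A : Type u} [CommRing A]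
  {I : Type v} {X : I → Type u} {Y : Type u} [∀ i, AddCommGroup (X i)] [∀ i, Module A (X i)]
  [AddCommGroup Y] [Module A Y]

/-- universal property of the direct sum -/
def IsDS (α : ∀ i, X i →ₗ[A] Y) : Prop :=
  ∀ (Z : Type u) [AddCommGroup Z] [Module A Z] (f : ∀ i, X i →ₗ[A] Z),
    (∃ g : Y →ₗ[A] Z, ∀ i x, g (α i x) = f i x) ∧
    ∀ g g' : Y →ₗ[A] Z, (∀ i x, g (α i x) = f i x) → (∀ i x, g' (α i x) = f i x) → g = g'

lemma IsDS.of_bij [DecidableEq I] (α : ∀ i, X i →ₗ[A] Y)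
    (h : Function.Bijective (DirectSum.toModule A I Y α)) : IsDS α := by
  let e := LinearEquiv.ofBijective _ h
  have he : ∀ i x, e (DirectSum.lof A I X i x) = α i x := fun i x => by
    simp [e]
  intro Z _ _ f
  refine ⟨⟨DirectSum.toModule A I Z f ∘ₗ e.symm.toLinearMap, fun i x => ?_⟩, fun g g' hg hg' => ?_⟩
  · rw [← he]
    simp
  · have : g ∘ₗ e.toLinearMap = g' ∘ₗ e.toLinearMap := by
      refine DirectSum.linearMap_ext _ fun i => LinearMap.ext fun x => ?_
      simp only [LinearMap.comp_apply, LinearEquiv.coe_coe, he, hg, hg']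
    ext y
    obtain ⟨x, rfl⟩ := e.surjective y
    exact LinearMap.congr_fun this x

lemma IsDS.rTensor {α : ∀ i, X i →ₗ[A] Y} (h : IsDS α) (S : Type u) [AddCommGroup S] [Module A S] :
    IsDS (fun i => (α i).rTensor S) := by
  intro Z _ _ f
  constructor
  · obtain ⟨g, hg⟩ := (h (S →ₗ[A] Z) (fun i => TensorProduct.curry (f i))).1
    refine ⟨TensorProduct.lift g, fun i x => ?_⟩
    induction x with
    | zero => simp
    | add x y hx hy => simp [hx, hy]
    | tmul x s => simp [hg]
  · intro g g' hg hg'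
    refine TensorProduct.curry_injective ?_
    refine (h (S →ₗ[A] Z) (fun i => TensorProduct.curry (f i))).2 _ _ (fun i x => ?_) (fun i x => ?_)
    · ext s
      simp [← hg]
    · ext s
      simp [← hg']

lemma IsDS.injective {I : Type u} {X : I → Type u} [∀ i, AddCommGroup (X i)] [∀ i, Module A (X i)]
    {α : ∀ i, X i →ₗ[A] Y} (h : IsDS α)
    {X' : I → Type u} {Y' : Type u} [∀ i, AddCommGroup (X' i)] [∀ i, Module A (X' i)]
    [AddCommGroup Y'] [Module A Y'] {β : ∀ i, X' i →ₗ[A] Y'} (h' : IsDS β)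
    (φ : ∀ i, X i →ₗ[A] X' i) (ψ : Y →ₗ[A] Y') (hφ : ∀ i x, ψ (α i x) = β i (φ i x))
    (hinj : ∀ i, Function.Injective (φ i)) : Function.Injective ψ := by
  classical
  obtain ⟨g, hg⟩ := (h _ (fun i => DirectSum.lof A I X i)).1
  obtain ⟨g', hg'⟩ := (h' _ (fun i => DirectSum.lof A I X' i)).1
  have h1 : DirectSum.toModule A I Y α ∘ₗ g = LinearMap.id := by
    refine (h Y α).2 _ _ (fun i x => ?_) (fun i x => rfl)
    simp [hg]
  have h2 : g' ∘ₗ ψ = DirectSum.lmap φ ∘ₗ g := by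
    refine (h _ (fun i => DirectSum.lof A I X' i ∘ₗ φ i)).2 _ _ (fun i x => ?_) (fun i x => ?_)
    · simp [hφ, hg']
    · simp [hg]
  rw [injective_iff_map_eq_zero]
  intro y hy
  have h3 := LinearMap.congr_fun h2 y
  simp only [LinearMap.comp_apply, hy, map_zero] at h3
  have h4 : g y = 0 := by
    refine DFinsupp.ext fun i => hinj i ?_
    have := DFunLike.congr_fun h3.symm i
    rw [DirectSum.lmap_apply] at this
    rw [this]
    exact (map_zero _).symm
  have h5 := LinearMap.congr_fun h1 y
  simpa [h4] using h5.symm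

end

section
variable {A : Type u} [CommRing A] {I : Type v} {T : Type u} [AddCommGroup T] [Module A T]
  {Y : Type u} [AddCommGroup Y] [Module A Y]

lemma IsDS.of_finsupp (φ : (I →₀ T) →ₗ[A] Y) (h : Function.Bijective φ) :
    IsDS (fun i => φ ∘ₗ Finsupp.lsingle i : I → T →ₗ[A] Y) := by
  let e := LinearEquiv.ofBijective _ h
  have he : ∀ x, e x = φ x := fun x => rfl
  intro Z _ _ f
  refine ⟨⟨Finsupp.lsum A f ∘ₗ e.symm.toLinearMap, fun i x => ?_⟩, fun g g' hg hg' => ?_⟩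
  · change Finsupp.lsum A f (e.symm (φ (Finsupp.lsingle i x))) = _
    rw [← he]
    simp
  · have : g ∘ₗ e.toLinearMap = g' ∘ₗ e.toLinearMap := by
      refine Finsupp.lhom_ext fun i x => ?_
      have h1 := hg i x
      have h2 := hg' i x
      simp only [LinearMap.comp_apply, Finsupp.lsingle_apply] at h1 h2
      simp only [LinearMap.comp_apply, LinearEquiv.coe_coe, he, h1, h2]
    ext y
    obtain ⟨x, rfl⟩ := e.surjective y
    exact LinearMap.congr_fun this x
end

section
variable {A : Type u} [CommRing A] [IsNoetherianRing A]
  {X : Type u} [AddCommGroup X] [Module A X]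

/-- Specialization closed subsets. -/
def SC (W : Set (PrimeSpectrum A)) : Prop := ∀ p q : PrimeSpectrum A, p ∈ W → p ≤ q → q ∈ W

lemma SC.Vc_sub {W : Set (PrimeSpectrum A)} (h : SC W) {p : PrimeSpectrum A} (hp : p ∈ W) :
    Vc p.asIdeal ⊆ W := fun q hq => h p q hp hq

/-- The hypotheses on a pair making the quotient a direct sum of the `T_q`. -/
structure Nice (W W' : Set (PrimeSpectrum A)) : Prop where
  sc : SC W
  sc' : SC W'
  min : ∀ q ∈ W, q ∉ W' → Vo q.asIdeal ⊆ W'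

def Nice.α {W W' : Set (PrimeSpectrum A)} (h : Nice W W') (X : Type u) [AddCommGroup X] [Module A X]
    (q : (W \ W' : Set (PrimeSpectrum A))) : TM q.1.asIdeal X →ₗ[A] DM W W' X :=
  dmap (h.sc.Vc_sub q.2.1) (h.min _ q.2.1 q.2.2) LinearMap.id

lemma Nice.isDS {W W' : Set (PrimeSpectrum A)} (h : Nice W W') (hX : Module.Baer A X) :
    IsDS (h.α X) := by
  classical
  refine IsDS.of_bij _ ⟨?_, ?_⟩
  · have key : ∀ (q : (W \ W' : Set (PrimeSpectrum A)))
        (z : DirectSum (W \ W' : Set (PrimeSpectrum A)) fun q => TM q.1.asIdeal X),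
        ∃ s ∉ q.1.asIdeal, s • z = s • DirectSum.lof A _ (fun q => TM q.1.asIdeal X) q (z q) := by
      intro q z
      induction z using DirectSum.induction_on with
      | zero => exact ⟨1, (Ideal.ne_top_iff_one _).1 q.1.2.ne_top, by simp⟩
      | of q' t =>
        by_cases hqq : q' = q
        · subst hqq
          refine ⟨1, (Ideal.ne_top_iff_one _).1 q'.1.2.ne_top, ?_⟩
          rw [DirectSum.of_eq_same]; rfl
        · have hnle : ¬ q'.1.asIdeal ≤ q.1.asIdeal := by
            intro hle
            rcases hle.lt_or_eq with hlt | heq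
            · exact q.2.2 (h.min _ q'.2.1 q'.2.2 hlt)
            · exact hqq (Subtype.ext (PrimeSpectrum.ext heq))
          obtain ⟨n, hn⟩ := Tq_tors t
          have : ¬ q'.1.asIdeal ^ n ≤ q.1.asIdeal := fun h => hnle (q.1.2.le_of_pow_le h)
          obtain ⟨s, hs, hs'⟩ := SetLike.not_le_iff_exists.1 this
          refine ⟨s, hs', ?_⟩
          rw [DirectSum.of_eq_of_ne _ _ _ (Ne.symm hqq), map_zero, smul_zero]
          change s • DirectSum.lof A _ (fun q : (W \ W' : Set (PrimeSpectrum A)) => TM q.1.asIdeal X) q' t = 0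
          rw [← map_smul, hn s hs, map_zero]
      | add x y hx hy =>
        obtain ⟨s, hs, hs'⟩ := hx
        obtain ⟨t, ht, ht'⟩ := hy
        refine ⟨s * t, fun hst => (q.1.2.mem_or_mem hst).elim hs ht, ?_⟩
        have e1 : (s * t) • x = t • s • x := by rw [mul_comm, mul_smul]
        have e2 : (s * t) • y = s • t • y := by rw [mul_smul]
        rw [DirectSum.add_apply, map_add, smul_add, smul_add, e1, e2, hs', ht', smul_smul, smul_smul,
          mul_comm t s]
    rw [injective_iff_map_eq_zero]
    intro z hz
    refine DFinsupp.ext fun q => ?_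
    obtain ⟨s, hs, hs'⟩ := key q z
    have := congrArg (DirectSum.toModule A _ _ (h.α X)) hs'
    rw [map_smul, hz, smul_zero, map_smul, DirectSum.toModule_lof, ← map_smul] at this
    have hinj : Function.Injective (h.α X q) := d_inj _ _ fun p hp =>
      lt_of_le_of_ne hp.1 fun heq => q.2.2 (by
        have : q.1 = p := PrimeSpectrum.ext heq
        rw [this]; exact hp.2)
    exact Tq_inj hs (hinj (by rw [← this, map_zero]))
  · set φ := DirectSum.toModule A _ _ (h.α X)
    let N := ((LinearMap.range φ).comap (Submodule.mkQ _)).map (Gam W X).subtype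
    have hN : (⨆ p : W, Gam (Vc p.1.asIdeal) X) ≤ N := by
      refine iSup_le fun p x hx => ?_
      have hxW := Gam_mono (h.sc.Vc_sub p.2) hx
      refine ⟨⟨x, hxW⟩, ?_, rfl⟩
      change dmk W' x hxW ∈ LinearMap.range φ
      by_cases hp : p.1 ∈ W'
      · have : dmk W' x hxW = 0 := dmk_eq_zero.2 (Gam_mono (h.sc'.Vc_sub hp) hx)
        rw [this]; exact zero_mem _
      · refine ⟨DirectSum.lof A _ (fun q : (W \ W' : Set (PrimeSpectrum A)) => TM q.1.asIdeal X)
          ⟨p.1, p.2, hp⟩ (dmk _ x hx), ?_⟩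
        rw [DirectSum.toModule_lof]
        rfl
    intro t
    obtain ⟨x, hx, rfl⟩ := dmk_surj t
    obtain ⟨⟨y, hy⟩, h1, h2⟩ := hN (Gam_le_iSup hX W hx)
    change y = x at h2
    subst h2
    exact h1
end
end PDK

open CategoryTheory Limits
open TensorProduct

namespace PDK
set_option linter.unusedSectionVars false

section
variable {A : Type u} [CommRing A] [HasDerivedCategory (ModuleCat.{u} A)]
open CategoryTheory.Pretriangulated DerivedCategory

abbrev Cpx (A : Type u) [CommRing A] := CochainComplex (ModuleCat.{u} A) ℤ

/-- the target object -/
noncomputable abbrev Yob (N : ModuleCat.{u} A) : DerivedCategory (ModuleCat.{u} A) :=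
  Q.obj ((HomologicalComplex.single (ModuleCat.{u} A) (ComplexShape.up ℤ) 0).obj N)

def V (N : ModuleCat.{u} A) (K : Cpx A) (r : ℤ) : Prop :=
  ∀ f : Q.obj K ⟶ (Yob N)⟦r⟧, f = 0

variable {N : ModuleCat.{u} A} {K L : Cpx A} {r : ℤ}

lemma V.of_iso (h : V N K r) (e : Q.obj K ≅ Q.obj L) : V N L r := fun f => by
  rw [← cancel_epi e.hom, h (e.hom ≫ f), comp_zero]

lemma V.shift_one {s : ℤ} (hs : s + 1 = r) (h : V N K s) (f : (Q.obj K)⟦(1 : ℤ)⟧ ⟶ (Yob N)⟦r⟧) : f = 0 := by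
  obtain ⟨g, hg⟩ := (shiftFunctor (DerivedCategory (ModuleCat.{u} A)) (1 : ℤ)).map_surjective
    (f ≫ (shiftFunctorAdd' _ s 1 r hs).hom.app (Yob N))
  rw [h g, Functor.map_zero] at hg
  rw [← cancel_mono ((shiftFunctorAdd' _ s 1 r hs).hom.app (Yob N)), ← hg, zero_comp]

lemma V.surj1 {S : ShortComplex (Cpx A)} (hS : S.ShortExact) (h : V N S.X₁ r) (f : Q.obj S.X₂ ⟶ (Yob N)⟦r⟧) : ∃ g, f = Q.map S.g ≫ g :=
  Triangle.yoneda_exact₂ _ (triangleOfSES_distinguished hS) f (h _)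

lemma V.mid {S : ShortComplex (Cpx A)} (hS : S.ShortExact) (h1 : V N S.X₁ r) (h3 : V N S.X₃ r) : V N S.X₂ r := fun f => by
  obtain ⟨g, rfl⟩ := V.surj1 hS h1 f
  rw [h3 g, comp_zero]

lemma V.right {S : ShortComplex (Cpx A)} (hS : S.ShortExact) {s : ℤ} (hs : s + 1 = r) (h1 : V N S.X₁ s) (h2 : V N S.X₂ r) : V N S.X₃ r := fun f => by
  obtain ⟨g, hg⟩ : ∃ g : (Q.obj S.X₁)⟦(1 : ℤ)⟧ ⟶ (Yob N)⟦r⟧, f = triangleOfSESδ hS ≫ g :=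
    Triangle.yoneda_exact₃ _ (triangleOfSES_distinguished hS) f (h2 _)
  rw [hg, h1.shift_one hs g, comp_zero]

lemma V.surj2 {S : ShortComplex (Cpx A)} (hS : S.ShortExact) {s : ℤ} (hs : r + 1 = s) (h : V N S.X₃ s) (f : Q.obj S.X₁ ⟶ (Yob N)⟦r⟧) :
    ∃ g, f = Q.map S.f ≫ g := by
  have hz : triangleOfSESδ hS ≫ f⟦(1 : ℤ)⟧' = 0 := by
    rw [← cancel_mono ((shiftFunctorAdd' _ r 1 s hs).inv.app (Yob N)), zero_comp]
    exact h _
  obtain ⟨g, hg⟩ : ∃ g : (Q.obj S.X₂)⟦(1 : ℤ)⟧ ⟶ ((Yob N)⟦r⟧)⟦(1 : ℤ)⟧,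
      f⟦(1 : ℤ)⟧' = (-(Q.map S.f)⟦(1 : ℤ)⟧') ≫ g := Triangle.yoneda_exact₂ _ (rot_of_distTriang _ (rot_of_distTriang _ (triangleOfSES_distinguished hS))) (f⟦(1 : ℤ)⟧') hz
  obtain ⟨g', hg'⟩ := (shiftFunctor (DerivedCategory (ModuleCat.{u} A)) (1 : ℤ)).map_surjective g
  refine ⟨-g', (shiftFunctor (DerivedCategory (ModuleCat.{u} A)) (1 : ℤ)).map_injective ?_⟩
  rw [hg, ← hg', Functor.map_comp, Functor.map_neg, Preadditive.neg_comp, Preadditive.comp_neg]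

lemma V.left {S : ShortComplex (Cpx A)} (hS : S.ShortExact) {s : ℤ} (hs : r + 1 = s) (h2 : V N S.X₂ r) (h3 : V N S.X₃ s) : V N S.X₁ r := fun f => by
  obtain ⟨g, rfl⟩ := V.surj2 hS hs h3 f
  rw [h2 g, comp_zero]

end

section
variable {A : Type u} [CommRing A] [HasDerivedCategory (ModuleCat.{u} A)]
open DerivedCategory

noncomputable abbrev Ein (N : ModuleCat.{u} A) : Cpx A := (injectiveResolution N).cochainComplex

noncomputable def isoOfQis {K L : Cpx A} (f : K ⟶ L) [QuasiIso f] : Q.obj K ≅ Q.obj L :=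
  asIso (Q.map f)

noncomputable def YE (N : ModuleCat.{u} A) (r : ℤ) : (Yob N)⟦r⟧ ≅ Q.obj ((Ein N)⟦r⟧) :=
  (shiftFunctor _ r).mapIso (isoOfQis (K := (CochainComplex.singleFunctor _ 0).obj N) (injectiveResolution N).ι') ≪≫
    ((Q.commShiftIso r).symm.app (Ein N))

lemma V_iff {N : ModuleCat.{u} A} {K : Cpx A} {r : ℤ} :
    V N K r ↔ ∀ g : K ⟶ (Ein N)⟦r⟧, Nonempty (Homotopy g 0) := by
  have hKI : ((Ein N)⟦r⟧).IsKInjective := inferInstance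
  constructor
  · intro h g
    have h1 : Q.map g = 0 := by
      rw [← cancel_mono (YE N r).inv, zero_comp]
      exact h _
    refine ⟨HomotopyCategory.homotopyOfEq _ _ ?_⟩
    refine (CochainComplex.IsKInjective.Qh_map_bijective _ _).injective ?_
    rw [Functor.map_zero, Functor.map_zero, ← cancel_mono ((quotientCompQhIso _).hom.app _), zero_comp]
    have := (quotientCompQhIso (ModuleCat.{u} A)).hom.naturality g
    refine Eq.trans this ?_
    rw [h1, comp_zero]
  · intro h f
    rw [← cancel_mono (YE N r).hom, zero_comp]
    obtain ⟨g, hg⟩ := (CochainComplex.IsKInjective.Qh_map_bijective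
      ((HomotopyCategory.quotient _ _).obj K) ((Ein N)⟦r⟧)).surjective
      ((quotientCompQhIso _).hom.app K ≫ f ≫ (YE N r).hom ≫ (quotientCompQhIso _).inv.app _)
    obtain ⟨g, rfl⟩ := (HomotopyCategory.quotient _ _).map_surjective g
    obtain ⟨hh⟩ := h g
    rw [HomotopyCategory.eq_of_homotopy _ _ hh, Functor.map_zero, Functor.map_zero] at hg
    rw [← cancel_epi ((quotientCompQhIso _).hom.app K), 
      ← cancel_mono ((quotientCompQhIso _).inv.app ((Ein N)⟦r⟧)), comp_zero, zero_comp, hg]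
    simp only [Category.assoc]

open CochainComplex.HomComplex in
lemma V.coprod {I : Type v} {N : ModuleCat.{u} A} {K : I → Cpx A} {L : Cpx A} {r : ℤ}
    (α : ∀ i, K i ⟶ L) (hα : ∀ n, IsDS fun i => ((α i).f n).hom) (h : ∀ i, V N (K i) r) :
    V N L r := by
  rw [V_iff]
  intro g
  have hi : ∀ i, Nonempty (Homotopy (α i ≫ g) 0) := fun i => V_iff.1 (h i) _
  let z := fun i => Cochain.equivHomotopy _ _ (hi i).some
  have hz := fun (p q : ℤ) (hpq : p + (-1) = q) =>
    (hα p _ (fun i => ((z i).1.v p q hpq).hom)).1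
  let w : Cochain L ((Ein N)⟦r⟧) (-1) := Cochain.mk (fun p q hpq => ModuleCat.ofHom (hz p q hpq).choose)
  have hw : ∀ i, (Cochain.ofHom (α i)).comp w (zero_add _) = (z i).1 := by
    intro i
    ext p q hpq x
    rw [Cochain.zero_cochain_comp_v, Cochain.ofHom_v]
    exact (hz p q hpq).choose_spec i x
  refine ⟨(Cochain.equivHomotopy _ _).symm ⟨w, ?_⟩⟩
  rw [Cochain.ofHom_zero, add_zero]
  have h2 : ∀ i, (Cochain.ofHom (α i)).comp (Cochain.ofHom g) (zero_add _) =
    (Cochain.ofHom (α i)).comp (δ (-1) 0 w) (zero_add _) := by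
    intro i
    rw [← δ_ofHom_comp, hw, ← Cochain.ofHom_comp]
    refine (z i).2.trans ?_
    generalize (z i).1 = y
    rw [Cochain.ofHom_zero, add_zero]
  ext p : 1
  apply ModuleCat.hom_ext
  refine (hα p _ (fun i => ((α i ≫ g).f p).hom)).2 _ _ (fun i x => ?_) (fun i x => ?_)
  · rw [Cochain.ofHom_v]
    rfl
  · have := Cochain.congr_v (h2 i) p p (add_zero p)
    rw [Cochain.zero_cochain_comp_v, Cochain.zero_cochain_comp_v, Cochain.ofHom_v, Cochain.ofHom_v] at this
    have h3 := congrArg (fun f => f.hom x) this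
    exact h3.symm
end
end PDK

open CategoryTheory Limits
open TensorProduct

namespace PDK
set_option linter.unusedSectionVars false

section
variable {A : Type u} [CommRing A] 

abbrev mapC (G : ModuleCat.{u} A ⥤ ModuleCat.{u} A) [G.Additive] (J : Cpx A) : Cpx A :=
  (G.mapHomologicalComplex (ComplexShape.up ℤ)).obj J

abbrev ntC {G G' : ModuleCat.{u} A ⥤ ModuleCat.{u} A} [G.Additive] [G'.Additive] (a : G ⟶ G')
    (J : Cpx A) : mapC G J ⟶ mapC G' J :=
  (NatTrans.mapHomologicalComplex a (ComplexShape.up ℤ)).app J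

variable {G₁ G₂ G₃ : ModuleCat.{u} A ⥤ ModuleCat.{u} A} [G₁.Additive] [G₂.Additive] [G₃.Additive]

structure ExF (a : G₁ ⟶ G₂) (b : G₂ ⟶ G₃) : Prop where
  inj : ∀ X : ModuleCat.{u} A, Module.Baer A X → Function.Injective (a.app X).hom
  ex : ∀ X : ModuleCat.{u} A, Module.Baer A X → Function.Exact (a.app X).hom (b.app X).hom
  surj : ∀ X : ModuleCat.{u} A, Module.Baer A X → Function.Surjective (b.app X).hom

variable {J : Cpx A} (hJ : ∀ n, Module.Baer A (J.X n))

lemma ExF.w {a : G₁ ⟶ G₂} {b : G₂ ⟶ G₃} (h : ExF a b) (hJ : ∀ n, Module.Baer A (J.X n)) :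
    ntC a J ≫ ntC b J = 0 := by
  ext n x
  exact (h.ex _ (hJ n)).apply_apply_eq_zero x

abbrev ExF.S {a : G₁ ⟶ G₂} {b : G₂ ⟶ G₃} (h : ExF a b) (hJ : ∀ n, Module.Baer A (J.X n)) :
    ShortComplex (Cpx A) := ShortComplex.mk (ntC a J) (ntC b J) (h.w hJ)

lemma ExF.se {a : G₁ ⟶ G₂} {b : G₂ ⟶ G₃} (h : ExF a b) (hJ : ∀ n, Module.Baer A (J.X n)) :
    (h.S hJ).ShortExact := by
  refine HomologicalComplex.shortExact_of_degreewise_shortExact _ fun n => ?_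
  refine ShortComplex.ShortExact.mk' ?_ ?_ ?_
  · rw [ShortComplex.ShortExact.moduleCat_exact_iff_function_exact]
    exact h.ex _ (hJ n)
  · rw [ModuleCat.mono_iff_injective]
    exact h.inj _ (hJ n)
  · rw [ModuleCat.epi_iff_surjective]
    exact h.surj _ (hJ n)

lemma isIso_ntC (a : G₁ ⟶ G₂) (hJ : ∀ n, Module.Baer A (J.X n))
    (h : ∀ X : ModuleCat.{u} A, Module.Baer A X → Function.Bijective (a.app X).hom) : IsIso (ntC a J) := by
  have : ∀ n, IsIso ((ntC a J).f n) := fun n => by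
    rw [ConcreteCategory.isIso_iff_bijective]
    exact h _ (hJ n)
  exact HomologicalComplex.Hom.isIso_of_components _

section
variable [HasDerivedCategory (ModuleCat.{u} A)] {N : ModuleCat.{u} A} {r : ℤ}

lemma V_iff_of_bij (a : G₁ ⟶ G₂) (hJ : ∀ n, Module.Baer A (J.X n))
    (h : ∀ X : ModuleCat.{u} A, Module.Baer A X → Function.Bijective (a.app X).hom) :
    V N (mapC G₁ J) r ↔ V N (mapC G₂ J) r := by
  have := isIso_ntC a hJ h
  exact ⟨fun h => h.of_iso (DerivedCategory.Q.mapIso (asIso (ntC a J))),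
    fun h => h.of_iso (DerivedCategory.Q.mapIso (asIso (ntC a J))).symm⟩

lemma V.coprodF {I : Type v} {G : I → ModuleCat.{u} A ⥤ ModuleCat.{u} A} [∀ i, (G i).Additive]
    (α : ∀ i, G i ⟶ G₁) (hJ : ∀ n, Module.Baer A (J.X n))
    (hα : ∀ X : ModuleCat.{u} A, Module.Baer A X → IsDS (fun i => ((α i).app X).hom))
    (h : ∀ i, V N (mapC (G i) J) r) : V N (mapC G₁ J) r :=
  V.coprod (fun i => ntC (α i) J) (fun n => hα _ (hJ n)) h
end
end

section functors
variable {A : Type u} [CommRing A]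

/-- `X ↦ Γ_W X / Γ_{W'} X`. -/
def D0 (W W' : Set (PrimeSpectrum A)) : ModuleCat.{u} A ⥤ ModuleCat.{u} A where
  obj X := ModuleCat.of A (DM W W' X)
  map f := ModuleCat.ofHom (dmap le_rfl le_rfl f.hom)
  map_id X := ModuleCat.hom_ext (LinearMap.ext fun t => dmap_id t)
  map_comp f g := ModuleCat.hom_ext (LinearMap.ext fun t =>
    (dmap_dmap le_rfl le_rfl f.hom le_rfl le_rfl g.hom t).symm)

instance (W W' : Set (PrimeSpectrum A)) : (D0 W W').Additive where
  map_add {X Y f g} := by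
    exact ModuleCat.hom_ext (dmap_add le_rfl le_rfl f.hom g.hom)

/-- `X ↦ (Γ_W X / Γ_{W'} X) ⊗ S`. -/
def DT (W W' : Set (PrimeSpectrum A)) (S : Type u) [AddCommGroup S] [Module A S] :
    ModuleCat.{u} A ⥤ ModuleCat.{u} A where
  obj X := ModuleCat.of A (DM W W' X ⊗[A] S)
  map f := ModuleCat.ofHom ((dmap le_rfl le_rfl f.hom).rTensor S)
  map_id X := by
    apply ModuleCat.hom_ext
    have : dmap le_rfl le_rfl (𝟙 X : X ⟶ X).hom = (LinearMap.id : DM W W' X →ₗ[A] DM W W' X) := by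
      ext t; rfl
    change (dmap le_rfl le_rfl (𝟙 X : X ⟶ X).hom).rTensor S = LinearMap.id
    rw [this, LinearMap.rTensor_id]
  map_comp f g := by
    apply ModuleCat.hom_ext
    refine TensorProduct.ext' fun t s => ?_
    obtain ⟨x, hx, rfl⟩ := dmk_surj t
    rfl

instance (W W' : Set (PrimeSpectrum A)) (S : Type u) [AddCommGroup S] [Module A S] :
    (DT W W' S).Additive where
  map_add {X Y f g} := by
    apply ModuleCat.hom_ext
    refine TensorProduct.ext' fun t s => ?_
    obtain ⟨x, hx, rfl⟩ := dmk_surj t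
    exact TensorProduct.add_tmul (dmk W' (f.hom x) (Gam_map f.hom hx))
      (dmk W' (g.hom x) (Gam_map g.hom hx)) s

variable {W W' W1 W1' W2 W2' W3 W3' W'' : Set (PrimeSpectrum A)}
variable {S S' S'' : Type u} [AddCommGroup S] [Module A S] [AddCommGroup S'] [Module A S']
  [AddCommGroup S''] [Module A S'']

/-- the natural maps between these functors -/
def dt (h : W1 ⊆ W2) (h' : W1' ⊆ W2') (f : S →ₗ[A] S') : DT W1 W1' S ⟶ DT W2 W2' S' where
  app X := ModuleCat.ofHom (TensorProduct.map (dmap h h' LinearMap.id) f)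
  naturality X Y g := by
    apply ModuleCat.hom_ext
    refine TensorProduct.ext' fun t s => ?_
    obtain ⟨x, hx, rfl⟩ := dmk_surj t
    rfl

lemma dt_comp (h : W1 ⊆ W2) (h' : W1' ⊆ W2') (f : S →ₗ[A] S') (k : W2 ⊆ W3) (k' : W2' ⊆ W3')
    (g : S' →ₗ[A] S'') : dt h h' f ≫ dt k k' g = dt (h.trans k) (h'.trans k') (g ∘ₗ f) := by
  ext X : 2
  apply ModuleCat.hom_ext
  refine TensorProduct.ext' fun t s => ?_
  obtain ⟨x, hx, rfl⟩ := dmk_surj t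
  rfl

/-- exactness in the support variable, `S` flat or a Tor-vanishing condition. -/
lemma ExF_supp (h : W' ⊆ W) (h' : W'' ⊆ W')
    (hinj : ∀ X : ModuleCat.{u} A, Module.Baer A X →
      Function.Injective ((dmap h le_rfl LinearMap.id : DM W' W'' X →ₗ[A] DM W W'' X).rTensor S)) :
    ExF (dt h le_rfl LinearMap.id : DT W' W'' S ⟶ DT W W'' S)
      (dt le_rfl h' LinearMap.id : DT W W'' S ⟶ DT W W' S) where
  inj X hX := hinj X hX
  ex _ _ := rTensor_exact S (d_exact h h') (d_surj h')
  surj _ _ := LinearMap.rTensor_surjective S (d_surj h')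

lemma ExF_mod {f : S →ₗ[A] S'} {g : S' →ₗ[A] S''} (hfg : Function.Exact f g)
    (hg : Function.Surjective g)
    (hinj : ∀ X : ModuleCat.{u} A, Module.Baer A X → Function.Injective (f.lTensor (DM W W' X))) :
    ExF (dt le_rfl le_rfl f : DT W W' S ⟶ DT W W' S') (dt le_rfl le_rfl g) := by
  have key : ∀ (X : ModuleCat.{u} A) {S S' : Type u} [AddCommGroup S] [Module A S] [AddCommGroup S']
      [Module A S'] (f : S →ₗ[A] S'),
    ((dt le_rfl le_rfl f : DT W W' S ⟶ DT W W' S').app X).hom = f.lTensor (DM W W' X) := by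
    intro X S S' _ _ _ _ f
    refine TensorProduct.ext' fun t s => ?_
    obtain ⟨x, hx, rfl⟩ := dmk_surj t
    rfl
  constructor
  · intro X hX
    rw [key]; exact hinj X hX
  · intro X hX
    rw [key, key]
    exact lTensor_exact _ hfg hg
  · intro X hX
    rw [key]; exact LinearMap.lTensor_surjective _ hg
end functors
end PDK

open CategoryTheory Limits
open TensorProduct

namespace PDK
set_option linter.unusedSectionVars false
set_option linter.unusedVariables false

section
variable {A : Type u} [CommRing A] (x : A) {M M' : Type u} [AddCommGroup M] [Module A M]
  [AddCommGroup M'] [Module A M']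

noncomputable def psi (M : Type u) [AddCommGroup M] [Module A M] : (ℕ →₀ M) →ₗ[A] (ℕ →₀ M) :=
  LinearMap.id - x • Finsupp.lmapDomain M A Nat.succ

lemma psi_single (m : ℕ) (u : M) :
    psi x M (Finsupp.single m u) = Finsupp.single m u - Finsupp.single (m + 1) (x • u) := by
  simp [psi, Finsupp.mapDomain_single]

lemma psi_inj : Function.Injective (psi x M) := by
  rw [injective_iff_map_eq_zero]
  intro w hw
  have h0 : w 0 = 0 := by
    have := DFunLike.congr_fun hw 0
    simp only [psi, LinearMap.sub_apply, LinearMap.id_apply, LinearMap.smul_apply,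
      Finsupp.lmapDomain_apply, Finsupp.sub_apply, Finsupp.smul_apply, Finsupp.zero_apply] at this
    rw [Finsupp.mapDomain_of_notMem_range _ _ (by simp)] at this
    simpa using this
  have hs : ∀ n, w (n + 1) = x • w n := by
    intro n
    have := DFunLike.congr_fun hw (n + 1)
    simp only [psi, LinearMap.sub_apply, LinearMap.id_apply, LinearMap.smul_apply,
      Finsupp.lmapDomain_apply, Finsupp.sub_apply, Finsupp.smul_apply, Finsupp.zero_apply] at this
    rw [show n + 1 = Nat.succ n from rfl, Finsupp.mapDomain_apply Nat.succ_injective] at this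
    exact sub_eq_zero.1 this
  ext n
  induction n with
  | zero => exact h0
  | succ n ih => rw [hs, ih]; simp

abbrev CM (M : Type u) [AddCommGroup M] [Module A M] : Type u := (ℕ →₀ M) ⧸ LinearMap.range (psi x M)

noncomputable def iC (M : Type u) [AddCommGroup M] [Module A M] : M →ₗ[A] CM x M :=
  Submodule.mkQ _ ∘ₗ Finsupp.lsingle 0

lemma iC_ker {u : M} : iC x M u = 0 ↔ ∃ r : ℕ, x ^ r • u = 0 := by
  have hstep : ∀ r : ℕ, (Submodule.mkQ (LinearMap.range (psi x M)) (Finsupp.single r (x ^ r • u))) = iC x M u := by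
    intro r
    induction r with
    | zero => simp [iC]
    | succ r ih =>
      rw [← ih, ← sub_eq_zero, ← map_sub, Submodule.mkQ_apply, Submodule.Quotient.mk_eq_zero]
      refine ⟨-Finsupp.single r (x ^ r • u), ?_⟩
      rw [map_neg, psi_single, smul_smul, ← pow_succ', neg_sub]
  constructor
  · intro h
    obtain ⟨w, hw⟩ := (Submodule.Quotient.mk_eq_zero _).1 h
    obtain ⟨r, hr⟩ : ∃ r, ∀ n ∈ w.support, n < r := ⟨w.support.sup id + 1, fun n hn =>
      Nat.lt_succ_of_le (Finset.le_sup (f := id) hn)⟩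
    let L : (ℕ →₀ M) →ₗ[A] M := Finsupp.lsum A fun m => if m ≤ r then x ^ (r - m) • LinearMap.id else 0
    have hL : ∀ m < r, ∀ u : M, L (psi x M (Finsupp.single m u)) = 0 := by
      intro m hm u
      rw [psi_single, map_sub]
      simp only [L, Finsupp.lsum_single, if_pos hm.le, if_pos (Nat.succ_le_of_lt hm)]
      simp only [LinearMap.smul_apply, LinearMap.id_apply, smul_smul, ← pow_succ]
      rw [show r - (m + 1) + 1 = r - m by omega, sub_self]
    have h1 : L (psi x M w) = 0 := by
      conv_lhs => rw [← Finsupp.sum_single w]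
      rw [Finsupp.sum, map_sum, map_sum]
      exact Finset.sum_eq_zero fun n hn => hL n (hr n hn) _
    rw [hw] at h1
    refine ⟨r, ?_⟩
    simpa [L] using h1
  · rintro ⟨r, hr⟩
    rw [← hstep r, hr]
    simp

lemma iC_surj [IsNoetherianRing A] (hM : Module.Baer A M) : Function.Surjective (iC x M) := by
  have hstep : ∀ (r m : ℕ) (u : M), (Submodule.mkQ (LinearMap.range (psi x M)) (Finsupp.single (m + r) (x ^ r • u))) = 
      Submodule.mkQ (LinearMap.range (psi x M)) (Finsupp.single m u) := by
    intro r m u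
    induction r with
    | zero => simp
    | succ r ih =>
      rw [← ih, ← sub_eq_zero, ← map_sub, Submodule.mkQ_apply, Submodule.Quotient.mk_eq_zero]
      refine ⟨-Finsupp.single (m + r) (x ^ r • u), ?_⟩
      rw [map_neg, psi_single, smul_smul, ← pow_succ', neg_sub]
      rfl
  have hrange : ∀ w : ℕ →₀ M, Submodule.mkQ (LinearMap.range (psi x M)) w ∈ LinearMap.range (iC x M) := by
    intro w
    induction w using Finsupp.induction_linear with
    | zero => simp
    | add f g hf hg => rw [map_add]; exact add_mem hf hg
    | single m u =>
      obtain ⟨r, v, hv⟩ := exists_pow_smul hM (x ^ m) u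
      refine ⟨v, ?_⟩
      rw [← hstep (m * r) m u, pow_mul, ← hv, ← pow_mul]
      have := hstep (m * (r + 1)) 0 v
      rw [zero_add] at this
      rw [show m + m * r = m * (r + 1) by ring]
      exact this.symm
  intro t
  obtain ⟨w, rfl⟩ := Submodule.Quotient.mk_surjective _ t
  exact hrange w

noncomputable def CMmap (f : M →ₗ[A] M') : CM x M →ₗ[A] CM x M' :=
  Submodule.mapQ _ _ (Finsupp.mapRange.linearMap f) (by
    rintro _ ⟨w, rfl⟩
    refine ⟨Finsupp.mapRange.linearMap f w, ?_⟩
    refine LinearMap.congr_fun (f := psi x M' ∘ₗ Finsupp.mapRange.linearMap f)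
      (g := Finsupp.mapRange.linearMap f ∘ₗ psi x M) ?_ w
    refine Finsupp.lhom_ext fun m u => ?_
    simp [psi_single, map_sub])

lemma CM_hom_ext {Z : Type u} [AddCommGroup Z] [Module A Z] {f g : CM x M →ₗ[A] Z}
    (h : ∀ m u, f (Submodule.mkQ _ (Finsupp.single m u)) = g (Submodule.mkQ _ (Finsupp.single m u))) : f = g := by
  refine Submodule.linearMap_qext _ (Finsupp.lhom_ext h)

lemma CMmap_mk (f : M →ₗ[A] M') (m : ℕ) (u : M) :
    CMmap x f (Submodule.mkQ _ (Finsupp.single m u)) = Submodule.mkQ _ (Finsupp.single m (f u)) := by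
  simp [CMmap]

end

section
variable {A : Type u} [CommRing A] (x : A)

lemma mR {M M' : Type u} [AddCommGroup M] [Module A M] [AddCommGroup M'] [Module A M'] (f : M →ₗ[A] M') (m : ℕ)
    (u : M) : Finsupp.mapRange.linearMap (α := ℕ) f (Finsupp.single m u) = Finsupp.single m (f u) := by
  simp

lemma mR_psi {M M' : Type u} [AddCommGroup M] [Module A M] [AddCommGroup M'] [Module A M'] (f : M →ₗ[A] M') :
    psi x M' ∘ₗ Finsupp.mapRange.linearMap f = Finsupp.mapRange.linearMap f ∘ₗ psi x M := by
  refine Finsupp.lhom_ext fun m u => ?_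
  simp [psi_single, map_sub]

noncomputable def FsN (A : Type u) [CommRing A] : ModuleCat.{u} A ⥤ ModuleCat.{u} A where
  obj M := ModuleCat.of A (ℕ →₀ M)
  map f := ModuleCat.ofHom (Finsupp.mapRange.linearMap f.hom)
  map_id M := by apply ModuleCat.hom_ext; simp
  map_comp f g := by
    apply ModuleCat.hom_ext
    exact Finsupp.mapRange.linearMap_comp _ _

instance : (FsN A).Additive where
  map_add {X Y f g} := by
    apply ModuleCat.hom_ext
    refine Finsupp.lhom_ext fun m u => ?_
    refine (mR _ m u).trans (Eq.trans ?_ (congrArg₂ (· + ·) (mR f.hom m u) (mR g.hom m u)).symm)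
    exact Finsupp.single_add _ _ _

noncomputable def CN : ModuleCat.{u} A ⥤ ModuleCat.{u} A where
  obj M := ModuleCat.of A (CM x M)
  map f := ModuleCat.ofHom (CMmap x f.hom)
  map_id M := by
    apply ModuleCat.hom_ext
    refine CM_hom_ext x fun m u => ?_
    exact CMmap_mk x LinearMap.id m u
  map_comp f g := by
    apply ModuleCat.hom_ext
    refine CM_hom_ext x fun m u => ?_
    exact (CMmap_mk x (g.hom ∘ₗ f.hom) m u).trans
      ((congrArg _ (CMmap_mk x f.hom m u)).trans (CMmap_mk x g.hom m (f.hom u))).symm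

instance : (CN x).Additive where
  map_add {X Y f g} := by
    apply ModuleCat.hom_ext
    refine CM_hom_ext x fun m u => ?_
    refine (CMmap_mk x _ m u).trans ?_
    refine Eq.trans ?_ (congrArg₂ (· + ·) (CMmap_mk x f.hom m u) (CMmap_mk x g.hom m u)).symm
    change _ = _ + _
    rw [← map_add, ← Finsupp.single_add]
    rfl

noncomputable def singN (i : ℕ) : 𝟭 (ModuleCat.{u} A) ⟶ FsN A where
  app M := ModuleCat.ofHom (Finsupp.lsingle i)
  naturality M M' f := by
    apply ModuleCat.hom_ext
    refine LinearMap.ext fun u => ?_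
    exact (mR f.hom i u).symm

noncomputable def psiN : FsN A ⟶ FsN A where
  app M := ModuleCat.ofHom (psi x M)
  naturality M M' f := by
    apply ModuleCat.hom_ext
    exact mR_psi x f.hom

noncomputable def piN : FsN A ⟶ CN x where
  app M := ModuleCat.ofHom (Submodule.mkQ _)
  naturality M M' f := by
    apply ModuleCat.hom_ext
    rfl

noncomputable def iN : 𝟭 (ModuleCat.{u} A) ⟶ CN x := singN 0 ≫ piN x

variable {W W' : Set (PrimeSpectrum A)}

lemma ExF_psi (G : ModuleCat.{u} A ⥤ ModuleCat.{u} A) [G.Additive] :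
    ExF (Functor.whiskerLeft G (psiN x)) (Functor.whiskerLeft G (piN x)) where
  inj X _ := psi_inj x
  ex X _ := LinearMap.exact_map_mkQ_range _
  surj X _ := Submodule.mkQ_surjective _

def d0 {W1 W2 W1' W2' : Set (PrimeSpectrum A)} (h : W1 ⊆ W2) (h' : W1' ⊆ W2') : D0 W1 W1' ⟶ D0 W2 W2' where
  app X := ModuleCat.ofHom (dmap h h' LinearMap.id)
  naturality X Y g := by
    apply ModuleCat.hom_ext
    refine LinearMap.ext fun t => ?_
    obtain ⟨x, hx, rfl⟩ := dmk_surj t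
    rfl

lemma Baer_DM [IsNoetherianRing A] {X : Type u} [AddCommGroup X] [Module A X] (hX : Module.Baer A X) :
    Module.Baer A (DM W ∅ X) := by
  have : (Gam (∅ : Set (PrimeSpectrum A)) X).comap (Gam W X).subtype = ⊥ := by
    rw [Gam_empty]
    exact LinearMap.ker_eq_bot.2 (Submodule.subtype_injective _)
  exact Module.Baer.of_equiv (Submodule.quotEquivOfEqBot _ this).symm (Baer_Gam hX W)

lemma ExF_iN [IsNoetherianRing A] :
    ExF (G₃ := D0 W ∅ ⋙ CN x)
    (d0 (Set.inter_subset_left) le_rfl : D0 (W ∩ Vc (Ideal.span {x})) ∅ ⟶ D0 W ∅)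
      (Functor.whiskerLeft (D0 W ∅) (iN x)) where
  inj X _ := d_inj Set.inter_subset_left le_rfl fun p hp => hp.2
  ex X hX := by
    intro t
    refine (iC_ker (M := DM W ∅ X) x (u := t)).trans ?_
    obtain ⟨y, hy, rfl⟩ := dmk_surj t
    constructor
    · rintro ⟨r, hr⟩
      rw [smul_dmk, dmk_eq_zero, Gam_empty] at hr
      have hy' : y ∈ Gam (W ∩ Vc (Ideal.span {x})) X := by
        rw [Gam_inter]
        refine ⟨hy, mem_Gam_zeroLocus.2 ⟨r, fun a ha => ?_⟩⟩
        rw [Ideal.span_singleton_pow, Ideal.mem_span_singleton'] at ha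
        obtain ⟨b, rfl⟩ := ha
        rw [mul_smul, (Submodule.mem_bot A).1 hr, smul_zero]
      exact ⟨dmk _ y hy', rfl⟩
    · rintro ⟨s, hs⟩
      obtain ⟨z, hz, rfl⟩ := dmk_surj (W := W ∩ Vc (Ideal.span {x})) (W' := ∅) (X := X) s
      rw [← hs]
      have hz2 := hz
      rw [Gam_inter] at hz2
      obtain ⟨r, hr⟩ := mem_Gam_zeroLocus.1 hz2.2
      refine ⟨r, ?_⟩
      change x ^ r • dmk (W := W) ∅ z (Gam_mono Set.inter_subset_left hz) = 0
      rw [smul_dmk, dmk_eq_zero, Gam_empty]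
      exact hr _ (Ideal.pow_mem_pow (Ideal.mem_span_singleton_self x) r)
  surj X hX := iC_surj x (Baer_DM hX)

variable [HasDerivedCategory (ModuleCat.{u} A)] {N : ModuleCat.{u} A} {n : ℤ} {J : Cpx A}
  [IsNoetherianRing A]

lemma V_FsN (hJ : ∀ n, Module.Baer A (J.X n)) (G : ModuleCat.{u} A ⥤ ModuleCat.{u} A) [G.Additive] {r : ℤ}
    (h : V N (mapC G J) r) : V N (mapC (G ⋙ FsN A) J) r := by
  refine V.coprodF (G := fun _ : ℕ => G) (fun i => Functor.whiskerLeft G (singN i)) hJ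
    (fun X _ => ?_) (fun _ => h)
  have := IsDS.of_finsupp (LinearMap.id : (ℕ →₀ (G.obj X)) →ₗ[A] (ℕ →₀ (G.obj X))) Function.bijective_id
  exact this

lemma step4 (hJ : ∀ n, Module.Baer A (J.X n)) (h : ∀ r > n, V N (mapC (D0 W ∅) J) r) :
    ∀ r > n, V N (mapC (D0 (W ∩ Vc (Ideal.span {x})) ∅) J) r := by
  intro r hr
  have h3 : V N (mapC (D0 W ∅ ⋙ CN x) J) (r + 1) :=
    V.right ((ExF_psi x (D0 W ∅)).se hJ) rfl (V_FsN hJ _ (h r hr)) (V_FsN hJ _ (h _ (by omega)))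
  exact V.left ((ExF_iN x).se hJ) rfl (h r hr) h3

def d0id (A : Type u) [CommRing A] : 𝟭 (ModuleCat.{u} A) ⟶ D0 Set.univ ∅ where
  app X := ModuleCat.ofHom (Submodule.mkQ _ ∘ₗ LinearMap.codRestrict _ LinearMap.id (fun x => by
    rw [Gam_univ]; trivial))
  naturality X Y f := rfl

lemma d0id_bij (X : ModuleCat.{u} A) : Function.Bijective ((d0id A).app X).hom := by
  constructor
  · rw [injective_iff_map_eq_zero]
    intro a ha
    have : a ∈ Gam (∅ : Set (PrimeSpectrum A)) X := (dmk_eq_zero (W := Set.univ) (hx := by rw [Gam_univ]; trivial)).1 ha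
    rwa [Gam_empty] at this
  · intro t
    obtain ⟨y, hy, rfl⟩ := dmk_surj (W := Set.univ) (W' := ∅) (X := X) t
    exact ⟨y, rfl⟩

lemma V_Vc (hJ : ∀ n, Module.Baer A (J.X n)) (h : ∀ r > n, V N J r) (q : Ideal A) :
    ∀ r > n, V N (mapC (D0 (Vc q) ∅) J) r := by
  have key : ∀ s : Finset A, ∀ r > n, V N (mapC (D0 (Vc (Ideal.span (s : Set A))) ∅) J) r := by
    classical
    intro s
    induction s using Finset.induction_on with
    | empty =>
      have : Vc (Ideal.span ((∅ : Finset A) : Set A)) = Set.univ := by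
        ext p; simp [Vc]
      rw [this]
      intro r hr
      exact (V_iff_of_bij (d0id A) hJ (fun X _ => d0id_bij X)).1 (h r hr)
    | insert a s ha ih =>
      have : Vc (Ideal.span ((insert a s : Finset A) : Set A)) =
          Vc (Ideal.span (s : Set A)) ∩ Vc (Ideal.span {a}) := by
        ext p
        rw [Finset.coe_insert, Ideal.span_insert]
        simp only [Vc, Set.mem_ofPred_eq, Set.mem_inter_iff, sup_le_iff]
        exact and_comm
      rw [this]
      exact step4 a hJ ih
  obtain ⟨s, rfl⟩ := IsNoetherian.noetherian q
  exact key s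
end
end PDK

open CategoryTheory Limits
open TensorProduct

namespace PDK
set_option linter.unusedSectionVars false
set_option linter.unusedVariables false

section
variable {A : Type u} [CommRing A]

/-- primes of height at least `m` -/
def Wh (A : Type u) [CommRing A] (m : ℕ) : Set (PrimeSpectrum A) := {p | (m : ℕ∞) ≤ p.asIdeal.height}

lemma mem_Wh {m : ℕ} {p : PrimeSpectrum A} : p ∈ Wh A m ↔ (m : ℕ∞) ≤ p.asIdeal.height := Iff.rfl

lemma Wh_SC (m : ℕ) : SC (Wh A m) := fun p q hp hpq =>
  le_trans (mem_Wh.1 hp) (Ideal.height_mono hpq)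

lemma Wh_anti {m n : ℕ} (h : m ≤ n) : Wh A n ⊆ Wh A m := fun p hp =>
  le_trans (by exact_mod_cast h) (mem_Wh.1 hp)

lemma Wh_zero : Wh A 0 = Set.univ := Set.eq_univ_of_forall fun p => mem_Wh.2 (by simp)

lemma Wh_top {d : ℕ} (hd : ringKrullDim A = (d : WithBot ℕ∞)) : Wh A (d + 1) = ∅ := by
  refine Set.eq_empty_of_forall_notMem fun p hp => ?_
  have h1 := (Ideal.height_le_ringKrullDim_of_ne_top p.2.ne_top).trans hd.le
  have h2 : p.asIdeal.height ≤ (d : ℕ∞) := by exact_mod_cast h1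
  have h3 := (mem_Wh.1 hp).trans h2
  have h4 : d + 1 ≤ d := by exact_mod_cast h3
  omega

variable [IsNoetherianRing A]

lemma SC.inter {W W' : Set (PrimeSpectrum A)} (h : SC W) (h' : SC W') : SC (W ∩ W') :=
  fun p q hp hpq => ⟨h p q hp.1 hpq, h' p q hp.2 hpq⟩

lemma SC_univ : SC (Set.univ : Set (PrimeSpectrum A)) := fun _ _ _ _ => trivial

lemma height_lt {p q : PrimeSpectrum A} (h : p.asIdeal < q.asIdeal) : p.asIdeal.height + 1 ≤ q.asIdeal.height := by
  have h1 := Ideal.height_strict_mono_of_isPrime_of_isPrime h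
  exact Order.add_one_le_of_lt h1

lemma Nice_Wh {W : Set (PrimeSpectrum A)} (h : SC W) (m : ℕ) : Nice (W ∩ Wh A m) (W ∩ Wh A (m + 1)) where
  sc := h.inter (Wh_SC m)
  sc' := h.inter (Wh_SC _)
  min q hq hq' p hp := by
    refine ⟨h q p hq.1 (le_of_lt (show q.asIdeal < p.asIdeal from hp)), ?_⟩
    have h1 := height_lt (p := q) (q := p) hp
    refine mem_Wh.2 (le_trans ?_ h1)
    push_cast
    exact add_le_add_left (mem_Wh.1 hq.2) 1

lemma Nice_empty : Nice (∅ : Set (PrimeSpectrum A)) ∅ where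
  sc := fun _ _ h _ => h
  sc' := fun _ _ h _ => h
  min := fun q hq => hq.elim

variable {S : Type u} [AddCommGroup S] [Module A S]

/-- `t ↦ t ⊗ s` -/
noncomputable def tm (W W' : Set (PrimeSpectrum A)) (s : S) : D0 W W' ⟶ DT W W' S where
  app X := ModuleCat.ofHom ((TensorProduct.mk A (DM W W' X) S).flip s)
  naturality X Y f := rfl

variable [HasDerivedCategory (ModuleCat.{u} A)] {N : ModuleCat.{u} A} {J : Cpx A} {r : ℤ}

lemma V_D0_iff {W W' : Set (PrimeSpectrum A)} (hJ : ∀ n, Module.Baer A (J.X n)) :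
    V N (mapC (D0 W W') J) r ↔ V N (mapC (DT W W' A) J) r := by
  refine V_iff_of_bij (tm W W' (1 : A)) hJ fun X _ => ?_
  exact (TensorProduct.rid A (DM W W' X)).symm.bijective

lemma V_nice {W W' : Set (PrimeSpectrum A)} (h : Nice W W') (hJ : ∀ n, Module.Baer A (J.X n))
    (hV : ∀ q ∈ W, q ∉ W' → V N (mapC (DT (Vc q.asIdeal) (Vo q.asIdeal) S) J) r) :
    V N (mapC (DT W W' S) J) r := by
  refine V.coprodF (I := (W \ W' : Set (PrimeSpectrum A)))
    (G := fun q => DT (Vc q.1.asIdeal) (Vo q.1.asIdeal) S)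
    (fun q => dt (h.sc.Vc_sub q.2.1) (h.min _ q.2.1 q.2.2) LinearMap.id) hJ (fun X hX => ?_)
    (fun q => hV q.1 q.2.1 q.2.2)
  exact (h.isDS hX).rTensor S

lemma ExF_supp_flat [Module.Flat A S] {W W' W'' : Set (PrimeSpectrum A)} (h : W' ⊆ W) (h' : W'' ⊆ W') :
    ExF (dt h le_rfl LinearMap.id : DT W' W'' S ⟶ DT W W'' S)
      (dt le_rfl h' LinearMap.id : DT W W'' S ⟶ DT W W' S) :=
  ExF_supp h h' fun X _ => Module.Flat.rTensor_preserves_injective_linearMap _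
    (d_inj h le_rfl fun p hp => hp.2)

lemma V_fil {d : ℕ} (hd : ringKrullDim A = (d : WithBot ℕ∞)) [Module.Flat A S]
    {W : Set (PrimeSpectrum A)} (h : SC W) (hJ : ∀ n, Module.Baer A (J.X n))
    (hV : ∀ q ∈ W, V N (mapC (DT (Vc q.asIdeal) (Vo q.asIdeal) S) J) r) :
    V N (mapC (DT W ∅ S) J) r := by
  have key : ∀ m ≤ d + 1, V N (mapC (DT (W ∩ Wh A m) ∅ S) J) r := by
    intro m hm
    induction hm using Nat.decreasingInduction with
    | self =>
      rw [Wh_top hd, Set.inter_empty]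
      exact V_nice Nice_empty hJ fun q hq => hq.elim
    | of_succ m hm ih =>
      refine V.mid ((ExF_supp_flat (S := S) (W := W ∩ Wh A m) (W' := W ∩ Wh A (m + 1)) (W'' := ∅)
        (Set.inter_subset_inter_right _ (Wh_anti (Nat.le_succ m))) (Set.empty_subset _)).se hJ) ih ?_
      exact V_nice (Nice_Wh h m) hJ fun q hq _ => hV q hq.1
  have := key 0 (Nat.zero_le _)
  rwa [Wh_zero, Set.inter_univ] at this

lemma V_Tq_A {d : ℕ} (hd : ringKrullDim A = (d : WithBot ℕ∞)) (hJ : ∀ n, Module.Baer A (J.X n))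
    (hV : ∀ r > 0, V N J r) : ∀ m ≤ d + 1, ∀ q ∈ Wh A m, ∀ r > (d : ℤ) - m,
      V N (mapC (DT (Vc q.asIdeal) (Vo q.asIdeal) A) J) r := by
  intro m hm
  induction hm using Nat.decreasingInduction with
  | self =>
    rw [Wh_top hd]
    exact fun q hq => hq.elim
  | of_succ m hm ih =>
    intro q hq r hr
    have hsub : Vo q.asIdeal ⊆ Vc q.asIdeal := fun p hp => le_of_lt (show q.asIdeal < p.asIdeal from hp)
    have hsc : SC (Vo q.asIdeal) := fun p p' hp hpp => lt_of_lt_of_le (show q.asIdeal < p.asIdeal from hp) hpp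
    refine V.right ((ExF_supp_flat (S := A) hsub (Set.empty_subset _)).se hJ) (s := r - 1) (by omega) ?_ ?_
    · refine V_fil hd hsc hJ fun p hp => ih p ?_ _ ?_
      · refine mem_Wh.2 (le_trans ?_ (height_lt (p := q) (q := p) hp))
        push_cast
        exact add_le_add_left (mem_Wh.1 hq) 1
      · push_cast; omega
    · exact (V_D0_iff hJ).1 (V_Vc hJ hV q.asIdeal r (by omega))

lemma V_Tq {d : ℕ} (hd : ringKrullDim A = (d : WithBot ℕ∞)) (hJ : ∀ n, Module.Baer A (J.X n))
    (hV : ∀ r > 0, V N J r) (m : ℕ) (hm : m ≤ d + 1) (q : PrimeSpectrum A) (hq : q ∈ Wh A m)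
    (hfl : Module.Flat (Localization.AtPrime q.asIdeal) (Localization.AtPrime q.asIdeal ⊗[A] S))
    (r : ℤ) (hr : r > (d : ℤ) - m) :
      V N (mapC (DT (Vc q.asIdeal) (Vo q.asIdeal) S) J) r := by
  obtain ⟨I, s, hs⟩ := exists_sumTmul_bij q.asIdeal S hfl
  refine V.coprodF (I := I) (G := fun _ => D0 (Vc q.asIdeal) (Vo q.asIdeal))
    (fun i => tm _ _ (s i)) hJ (fun X hX => ?_)
    (fun _ => (V_D0_iff hJ).2 (V_Tq_A hd hJ hV m hm q hq r hr))
  have := IsDS.of_finsupp _ (hs (TM q.asIdeal X) (Tq_locAt hX) Tq_tors)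
  have e : (fun i => sumTmul A s (TM q.asIdeal X) ∘ₗ Finsupp.lsingle i) =
      fun i => (TensorProduct.mk A (TM q.asIdeal X) S).flip (s i) :=
    funext fun i => LinearMap.ext fun t => sumTmul_single s i t
  rw [e] at this
  exact this

end
end PDK

open CategoryTheory Limits
open TensorProduct

namespace PDK
set_option linter.unusedSectionVars false
set_option linter.unusedVariables false

section
variable {A : Type u} [CommRing A] [IsNoetherianRing A]
  {S F S' : Type u} [AddCommGroup S] [Module A S] [AddCommGroup F] [Module A F] [AddCommGroup S'] [Module A S']
  {f : S →ₗ[A] F} {g : F →ₗ[A] S'} {X : Type u} [AddCommGroup X] [Module A X]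

lemma nice_lTensor_inj (hf : Function.Injective f)
    (hfg : Function.Exact f g) (hg : Function.Surjective g) {W W' : Set (PrimeSpectrum A)} (h : Nice W W')
    (hX : Module.Baer A X)
    (hfl : ∀ q ∈ W, q ∉ W' → Module.Flat (Localization.AtPrime q.asIdeal) (Localization.AtPrime q.asIdeal ⊗[A] S')) :
    Function.Injective (f.lTensor (DM W W' X)) := by
  refine IsDS.injective ((h.isDS hX).rTensor S) ((h.isDS hX).rTensor F)
    (fun q => f.lTensor (TM q.1.asIdeal X)) _ (fun q x => (lr_comm _ _ _).symm) (fun q => ?_)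
  refine lTensor_inj_of_local q.1.asIdeal hf hfg hg (hfl _ q.2.1 q.2.2) _ fun s hs => ?_
  exact ((Tq_locAt hX).tensor s hs).injective

lemma Wh_lTensor_inj [Module.Flat A F] (hf : Function.Injective f)
    (hfg : Function.Exact f g) (hg : Function.Surjective g) (m : ℕ)
    (hX : Module.Baer A X)
    (hfl : ∀ q ∉ Wh A m, Module.Flat (Localization.AtPrime q.asIdeal) (Localization.AtPrime q.asIdeal ⊗[A] S')) :
    Function.Injective (f.lTensor (DM Set.univ (Wh A m) X)) := by
  induction m with
  | zero =>
    refine nice_lTensor_inj hf hfg hg ⟨SC_univ, Wh_SC 0, ?_⟩ hX ?_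
    · intro q _ hq
      rw [Wh_zero] at hq
      exact (hq trivial).elim
    · intro q _ hq
      rw [Wh_zero] at hq
      exact (hq trivial).elim
  | succ k ih =>
    have hs : Wh A (k + 1) ⊆ Wh A k := Wh_anti (Nat.le_succ k)
    have hu := Set.subset_univ (Wh A k)
    refine lTensor_inj_ext (d_exact hu hs) (d_surj hs) ?_ (ih fun q hq => hfl q fun h => hq (hs h)) ?_
    · have := Nice_Wh (SC_univ (A := A)) k
      rw [Set.univ_inter, Set.univ_inter] at this
      exact nice_lTensor_inj hf hfg hg this hX fun q _ hq => hfl q hq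
    · exact Module.Flat.rTensor_preserves_injective_linearMap _ (d_inj hu le_rfl fun p hp => hp.2)

lemma Wh_rTensor_inj [Module.Flat A F] (hf : Function.Injective f)
    (hfg : Function.Exact f g) (hg : Function.Surjective g) (m : ℕ)
    (hX : Module.Baer A X)
    (hfl : ∀ q ∉ Wh A m, Module.Flat (Localization.AtPrime q.asIdeal) (Localization.AtPrime q.asIdeal ⊗[A] S')) :
    Function.Injective ((dmap (Set.subset_univ (Wh A m)) le_rfl LinearMap.id :
      DM (Wh A m) (Wh A (m + 1)) X →ₗ[A] DM Set.univ (Wh A (m + 1)) X).rTensor S') := by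
  have hs : Wh A (m + 1) ⊆ Wh A m := Wh_anti (Nat.le_succ m)
  have hu := Set.subset_univ (Wh A m)
  refine rTensor_inj_of_lTensor_inj hfg hg (d_exact hu hs) (d_surj hs)
    (Wh_lTensor_inj hf hfg hg m hX hfl) ?_
  exact Module.Flat.rTensor_preserves_injective_linearMap _ (d_inj hu le_rfl fun p hp => hp.2)
end

section
variable {A : Type u} [CommRing A] [IsNoetherianRing A]
  {S F : ℕ → Type u} [∀ j, AddCommGroup (S j)]
    [∀ j, AddCommGroup (F j)] [∀ j, Module A (S j)] [∀ j, Module A (F j)]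
    {f : ∀ j, S (j + 1) →ₗ[A] F j} {g : ∀ j, F j →ₗ[A] S j}
variable [HasDerivedCategory (ModuleCat.{u} A)] {N : ModuleCat.{u} A} {J : Cpx A}

lemma ntC_comp {G₁ G₂ G₃ : ModuleCat.{u} A ⥤ ModuleCat.{u} A} [G₁.Additive] [G₂.Additive] [G₃.Additive]
    (a : G₁ ⟶ G₂) (b : G₂ ⟶ G₃) : ntC (a ≫ b) J = ntC a J ≫ ntC b J := rfl

theorem key_induction (hc : IsChain A f g) {n : ℕ} (hn : Module.Flat A (S n))
    {d : ℕ} (hd : ringKrullDim A = (d : WithBot ℕ∞)) (hJ : ∀ n, Module.Baer A (J.X n))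
    (hV : ∀ r > 0, V N J r) (hF : ∀ j, ∀ r > 0, V N (mapC (DT Set.univ ∅ (F j)) J) r) :
    ∀ j ≤ d, ∀ r : ℤ, r > 0 → r > (d : ℤ) - j → V N (mapC (DT Set.univ (Wh A (j + 1)) (S j)) J) r := by
  have hfl : ∀ (j : ℕ) (q : PrimeSpectrum A), q ∉ Wh A (j + 1) → 
      Module.Flat (Localization.AtPrime q.asIdeal) (Localization.AtPrime q.asIdeal ⊗[A] S j) := by
    intro j q hq
    refine flat_localization_of_height_le hc hn q.asIdeal ?_
    rw [mem_Wh, not_le] at hq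
    refine Order.le_of_lt_add_one ?_
    exact_mod_cast hq
  have hfF : ∀ j, Module.Flat A (F j) := hc.flat
  have hgr : ∀ j ≤ d, ∀ r : ℤ, r > (d : ℤ) - j →
      V N (mapC (DT (Wh A j) (Wh A (j + 1)) (S j)) J) r := by
    intro j hj r hr
    have := Nice_Wh (SC_univ (A := A)) j
    rw [Set.univ_inter, Set.univ_inter] at this
    exact V_nice this hJ fun q hq hq' => V_Tq hd hJ hV j (by omega) q hq (hfl j q hq') r hr
  intro j
  induction j with
  | zero =>
    intro h0 r _ hr
    have := hgr 0 h0 r hr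
    rwa [Wh_zero] at this
  | succ j ih =>
    intro hj r hr0 hr φ
    have hs : Wh A (j + 1 + 1) ⊆ Wh A (j + 1) := Wh_anti (Nat.le_succ _)
    have E1 := ExF_supp (S := S (j + 1)) (Set.subset_univ (Wh A (j + 1))) hs fun X hX =>
      Wh_rTensor_inj (hc.inj (j + 1)) (hc.exact (j + 1)) (hc.surj (j + 1)) (j + 1) hX
        (fun q hq => hfl (j + 1) q fun h => hq (hs h))
    obtain ⟨φ', hφ'⟩ := V.surj1 (E1.se hJ) (hgr (j + 1) hj r hr) φ
    have E2 := ExF_mod (W := Set.univ) (W' := Wh A (j + 1)) (hc.exact j) (hc.surj j) fun X hX =>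
      Wh_lTensor_inj (hc.inj j) (hc.exact j) (hc.surj j) (j + 1) hX (hfl j)
    obtain ⟨φ'', hφ''⟩ := V.surj2 (E2.se hJ) rfl (ih (by omega) (r + 1) (by omega) (by push_cast at hr; omega)) φ'
    have hmid : V N (mapC (DT Set.univ (Wh A (j + 1 + 1)) (F j)) J) r := by
      refine V.right ((ExF_supp_flat (S := F j) (Set.subset_univ (Wh A (j + 1 + 1)))
        (Set.empty_subset _)).se hJ) (s := r - 1) (by omega) ?_ (hF j r hr0)
      refine V_fil hd (Wh_SC _) hJ fun q hq => V_Tq hd hJ hV (j + 1 + 1) (by omega) q hq inferInstance _ ?_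
      push_cast at hr ⊢
      omega
    have hcomp : ntC (dt le_rfl hs LinearMap.id : DT Set.univ (Wh A (j + 1 + 1)) (S (j + 1)) ⟶ _) J ≫
        ntC (dt le_rfl le_rfl (f j)) J =
        ntC (dt le_rfl le_rfl (f j) : DT Set.univ (Wh A (j + 1 + 1)) (S (j + 1)) ⟶ _) J ≫
          ntC (dt le_rfl hs LinearMap.id) J := by
      rw [← ntC_comp, ← ntC_comp, dt_comp, dt_comp]
      rfl
    rw [hφ', hφ'']
    have h3 := congrArg (fun z => DerivedCategory.Q.map z) hcomp
    simp only [Functor.map_comp] at h3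
    have h4 := hmid (DerivedCategory.Q.map (ntC (dt le_rfl hs LinearMap.id) J) ≫ φ'')
    refine (Category.assoc _ _ _).symm.trans ?_
    refine (congrArg (· ≫ φ'') h3).trans ?_
    refine (Category.assoc _ _ _).trans ?_
    rw [h4, comp_zero]
end
end PDK

open CategoryTheory Limits
open TensorProduct

namespace PDK
set_option linter.unusedSectionVars false
set_option linter.unusedVariables false

section
variable {A : Type u} [CommRing A] [IsNoetherianRing A] [HasDerivedCategory (ModuleCat.{u} A)] {N : ModuleCat.{u} A}
open DerivedCategory

/-- a module as a complex in degree `0` -/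
noncomputable abbrev sg (M : ModuleCat.{u} A) : Cpx A :=
  (HomologicalComplex.single (ModuleCat.{u} A) (ComplexShape.up ℤ) 0).obj M

lemma V_sg_of_iso {M M' : ModuleCat.{u} A} (e : M ≅ M') {r : ℤ} (h : V N (sg M) r) : V N (sg M') r :=
  h.of_iso (Q.mapIso ((HomologicalComplex.single (ModuleCat.{u} A) (ComplexShape.up ℤ) 0).mapIso e))

lemma V_sg_proj (P : ModuleCat.{u} A) [Projective P] {r : ℤ} (hr : 0 < r) : V N (sg P) r := by
  intro f
  have hLE : (((CochainComplex.singleFunctor (ModuleCat.{u} A) 0).obj N)⟦r⟧).IsStrictlyLE (-r) :=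
    CochainComplex.isStrictlyLE_shift _ 0 r (-r) (by omega)
  have h := from_singleFunctor_obj_eq_zero_of_projective (P := P)
    (L := ((CochainComplex.singleFunctor (ModuleCat.{u} A) 0).obj N)⟦r⟧) (i := 0)
    (f ≫ (Q.commShiftIso r).inv.app _) (-r) (by omega)
  rw [← cancel_mono ((Q.commShiftIso r).inv.app _), zero_comp]
  exact h

lemma V_sg_right {S₁ S₂ S₃ : ModuleCat.{u} A} (f : S₁ →ₗ[A] S₂) (g : S₂ →ₗ[A] S₃) (hf : Function.Injective f)
    (hfg : Function.Exact f g) (hg : Function.Surjective g) {r s : ℤ} (hs : s + 1 = r)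
    (h1 : V N (sg S₁) s) (h2 : V N (sg S₂) r) : V N (sg S₃) r := by
  let T : ShortComplex (ModuleCat.{u} A) := ShortComplex.mk (ModuleCat.ofHom f) (ModuleCat.ofHom g) (by
    apply ModuleCat.hom_ext
    exact hfg.linearMap_comp_eq_zero)
  have hT : T.ShortExact := by
    refine ShortComplex.ShortExact.mk' ?_ ?_ ?_
    · rw [ShortComplex.ShortExact.moduleCat_exact_iff_function_exact]; exact hfg
    · rw [ModuleCat.mono_iff_injective]; exact hf
    · rw [ModuleCat.epi_iff_surjective]; exact hg
  exact V.right (hT.map_of_exact (HomologicalComplex.single (ModuleCat.{u} A) (ComplexShape.up ℤ) 0)) hs h1 h2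

noncomputable def d0e (X : ModuleCat.{u} A) : X ≃ₗ[A] DM Set.univ (∅ : Set (PrimeSpectrum A)) X :=
  LinearEquiv.ofBijective _ (d0id_bij X)

lemma DT_exact (S : Type u) [AddCommGroup S] [Module A S] [Module.Flat A S] :
    (DT Set.univ (∅ : Set (PrimeSpectrum A)) S).PreservesHomology := by
  refine Functor.preservesHomology_of_map_exact _ fun T hT => ?_
  rw [ShortComplex.ShortExact.moduleCat_exact_iff_function_exact] at hT ⊢
  refine Module.Flat.rTensor_exact S ?_
  intro y
  obtain ⟨x, rfl⟩ := (d0e T.X₂).surjective y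
  have h1 : dmap le_rfl le_rfl T.g.hom (d0e T.X₂ x) = d0e T.X₃ (T.g.hom x) := rfl
  have h2 : ∀ z, dmap le_rfl le_rfl T.f.hom (d0e T.X₁ z) = d0e T.X₂ (T.f.hom z) := fun z => rfl
  rw [h1, LinearEquiv.map_eq_zero_iff]
  refine (hT x).trans ⟨?_, ?_⟩
  · rintro ⟨z, rfl⟩
    exact ⟨d0e T.X₁ z, h2 z⟩
  · rintro ⟨w, hw⟩
    obtain ⟨z, rfl⟩ := (d0e T.X₁).surjective w
    exact ⟨z, (d0e T.X₂).injective ((h2 z).symm.trans hw)⟩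

noncomputable abbrev JA (A : Type u) [CommRing A] : Cpx A := Ein (ModuleCat.of A A)

lemma JA_Baer (n : ℤ) : Module.Baer A ((JA A).X n) := by
  have : Injective ((JA A).X n) := inferInstance
  have h2 : Module.Injective A ((JA A).X n) := (Module.injective_iff_injective_object A _).2 this
  exact Module.Baer.of_injective h2

lemma V_JA {r : ℤ} (hr : 0 < r) : V N (JA A) r := by
  have : Projective (ModuleCat.of A A) := inferInstance
  exact (V_sg_proj (N := N) (ModuleCat.of A A) hr).of_iso
    (isoOfQis (K := (CochainComplex.singleFunctor _ 0).obj (ModuleCat.of A A))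
      (injectiveResolution (ModuleCat.of A A)).ι')

lemma V_DT_iff (S : ModuleCat.{u} A) [Module.Flat A S] {r : ℤ} :
    V N (mapC (DT Set.univ ∅ S) (JA A)) r ↔ V N (sg S) r := by
  have := DT_exact (A := A) S
  let G := DT Set.univ (∅ : Set (PrimeSpectrum A)) S
  let ι : (CochainComplex.singleFunctor _ 0).obj (ModuleCat.of A A) ⟶ JA A := (injectiveResolution (ModuleCat.of A A)).ι'
  have hq : QuasiIso ι := inferInstance
  have hq2 : QuasiIso ((G.mapHomologicalComplex (ComplexShape.up ℤ)).map ι) := inferInstance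
  let e0 := isoOfQis ((G.mapHomologicalComplex (ComplexShape.up ℤ)).map ι)
  let e1 := (HomologicalComplex.singleMapHomologicalComplex G (ComplexShape.up ℤ) 0).app (ModuleCat.of A A)
  let e2 : G.obj (ModuleCat.of A A) ≅ S := LinearEquiv.toModuleIso
    (((d0e (ModuleCat.of A A)).symm.rTensor S).trans (TensorProduct.lid A S))
  let e : Q.obj (mapC G (JA A)) ≅ Q.obj (sg S) := e0.symm ≪≫ Q.mapIso (e1 ≪≫
    (HomologicalComplex.single (ModuleCat.{u} A) (ComplexShape.up ℤ) 0).mapIso e2)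
  exact ⟨fun h => h.of_iso e, fun h => h.of_iso e.symm⟩

end
end PDK

open CategoryTheory Limits
open TensorProduct

namespace PDK
set_option linter.unusedSectionVars false
set_option linter.unusedVariables false

section
variable {A : Type u} [CommRing A]

/-- flat dimension at most `n` -/
def FD : ℕ → ModuleCat.{u} A → Prop
  | 0, C => Module.Flat A C
  | n + 1, C => ∃ (C' F : ModuleCat.{u} A) (f : C' →ₗ[A] F) (g : F →ₗ[A] C), Function.Injective f ∧
      Function.Exact f g ∧ Function.Surjective g ∧ Module.Flat A F ∧ FD n C'

lemma FD_iso {n : ℕ} {C C' : ModuleCat.{u} A} (e : C ≃ₗ[A] C') (h : FD n C) : FD n C' := by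
  cases n with
  | zero =>
    have : Module.Flat A C := h
    exact Module.Flat.of_linearEquiv e.symm
  | succ n =>
    obtain ⟨K, F, f, g, hf, hfg, hg, hF, hK⟩ := h
    refine ⟨K, F, f, e.toLinearMap ∘ₗ g, hf, ?_, e.surjective.comp hg, hF, hK⟩
    intro x
    exact (e.map_eq_zero_iff (x := g x)).trans (hfg x)

lemma flat_prod (M P : Type u) [AddCommGroup M] [Module A M] [AddCommGroup P] [Module A P]
    [Module.Flat A M] [Module.Flat A P] : Module.Flat A (M × P) := by
  rw [Module.Flat.iff_lTensor_preserves_injective_linearMap]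
  intro N N' _ _ _ _ f hf
  rw [injective_iff_map_eq_zero]
  intro x hx
  have h1 : (LinearMap.fst A M P).rTensor N x = 0 := by
    apply Module.Flat.lTensor_preserves_injective_linearMap (M := M) f hf
    rw [map_zero, ← LinearMap.comp_apply, LinearMap.lTensor_comp_rTensor,
      ← LinearMap.rTensor_comp_lTensor, LinearMap.comp_apply, hx, map_zero]
  have h2 : (LinearMap.snd A M P).rTensor N x = 0 := by
    apply Module.Flat.lTensor_preserves_injective_linearMap (M := P) f hf
    rw [map_zero, ← LinearMap.comp_apply, LinearMap.lTensor_comp_rTensor,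
      ← LinearMap.rTensor_comp_lTensor, LinearMap.comp_apply, hx, map_zero]
  have h3 : LinearMap.inl A M P ∘ₗ LinearMap.fst A M P + LinearMap.inr A M P ∘ₗ LinearMap.snd A M P
      = LinearMap.id := by
    ext <;> simp
  have h4 := LinearMap.congr_fun (congrArg (LinearMap.rTensor N) h3) x
  rw [LinearMap.rTensor_add, LinearMap.add_apply, LinearMap.rTensor_comp, LinearMap.rTensor_comp,
    LinearMap.comp_apply, LinearMap.comp_apply, h1, h2, map_zero, map_zero, add_zero,
    LinearMap.rTensor_id, LinearMap.id_apply] at h4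
  exact h4.symm

lemma FD_prod {n : ℕ} {C P : ModuleCat.{u} A} (hP : Module.Flat A P) (h : FD n C) :
    FD n (ModuleCat.of A (C × P)) := by
  cases n with
  | zero =>
    have : Module.Flat A C := h
    exact flat_prod C P
  | succ n =>
    obtain ⟨K, F, f, g, hf, hfg, hg, hF, hK⟩ := h
    refine ⟨K, ModuleCat.of A (F × P), LinearMap.inl A F P ∘ₗ f, g.prodMap LinearMap.id,
      LinearMap.inl_injective.comp hf, ?_, hg.prodMap Function.surjective_id,
      flat_prod F P, hK⟩
    rintro ⟨x, p⟩
    constructor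
    · intro hx
      have hx' := Prod.ext_iff.1 hx
      obtain ⟨z, hz⟩ := (hfg x).1 hx'.1
      exact ⟨z, Prod.ext hz (show (0 : P) = p from hx'.2.symm)⟩
    · rintro ⟨z, hz⟩
      have hx' := Prod.ext_iff.1 hz
      refine Prod.ext ((hfg x).2 ⟨z, hx'.1⟩) ?_
      exact (show (0 : P) = p from hx'.2).symm

/-- kernels of epimorphisms to flat modules -/
lemma FD_ker {n : ℕ} {E F : ModuleCat.{u} A} (hF : Module.Flat A F) (φ : E →ₗ[A] F) (hφ : Function.Surjective φ)
    (h : FD n E) : FD n (ModuleCat.of A (LinearMap.ker φ)) := by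
  cases n with
  | zero =>
    have : Module.Flat A E := h
    exact flat_left (f := (LinearMap.ker φ).subtype) (g := φ) (Submodule.subtype_injective _)
      (LinearMap.exact_subtype_ker_map φ) hφ
  | succ n =>
    obtain ⟨K, G, f, g, hf, hfg, hg, hG, hK⟩ := h
    have h0 : ∀ x, φ (g (f x)) = 0 := fun x => by rw [hfg.apply_apply_eq_zero, map_zero]
    refine ⟨K, ModuleCat.of A (LinearMap.ker (φ ∘ₗ g)), f.codRestrict _ h0,
      (g ∘ₗ (LinearMap.ker (φ ∘ₗ g)).subtype).codRestrict _ (fun x => x.2), ?_, ?_, ?_, ?_, hK⟩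
    · intro x y hxy
      exact hf (congrArg Subtype.val hxy)
    · rintro ⟨x, hx⟩
      constructor
      · intro h
        obtain ⟨z, hz⟩ := (hfg x).1 (congrArg Subtype.val h)
        exact ⟨z, Subtype.ext hz⟩
      · rintro ⟨z, hz⟩
        exact Subtype.ext ((hfg x).2 ⟨z, congrArg Subtype.val hz⟩)
    · rintro ⟨y, hy⟩
      obtain ⟨x, rfl⟩ := hg y
      exact ⟨⟨x, hy⟩, rfl⟩
    · exact flat_left (f := (LinearMap.ker (φ ∘ₗ g)).subtype) (g := φ ∘ₗ g) (Submodule.subtype_injective _)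
        (LinearMap.exact_subtype_ker_map _) (hφ.comp hg)

lemma FD_step {n : ℕ} {C P : ModuleCat.{u} A} [Module.Projective A P] (p : P →ₗ[A] C)
    (hp : Function.Surjective p) (h : FD (n + 1) C) : FD n (ModuleCat.of A (LinearMap.ker p)) := by
  obtain ⟨K, F, f, g, hf, hfg, hg, hF, hK⟩ := h
  obtain ⟨s, hs⟩ := Module.projective_lifting_property g p hg
  have hs' : ∀ y, g (s y) = p y := fun y => LinearMap.congr_fun hs y
  let φ : (K × P) →ₗ[A] F := f.coprod s
  have hφ : Function.Surjective φ := by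
    intro x
    obtain ⟨y, hy⟩ := hp (g x)
    obtain ⟨z, hz⟩ := (hfg (x - s y)).1 (by rw [map_sub, hs', hy, sub_self])
    refine ⟨(z, y), ?_⟩
    simp [φ, hz]
  have h1 := FD_ker (E := ModuleCat.of A (K × P)) hF φ hφ (FD_prod (P := P) inferInstance hK)
  refine FD_iso ?_ h1
  have h2 : ∀ w : LinearMap.ker φ, p (w : K × P).2 = 0 := by
    rintro ⟨⟨z, y⟩, hw⟩
    have : f z + s y = 0 := by simpa [φ] using hw
    change p y = 0
    have h3 := congrArg g this
    rw [map_add, hfg.apply_apply_eq_zero, zero_add, hs', map_zero] at h3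
    exact h3
  refine LinearEquiv.ofBijective ((LinearMap.snd A K P ∘ₗ (LinearMap.ker φ).subtype).codRestrict
    (LinearMap.ker p) h2) ⟨?_, ?_⟩
  · rw [injective_iff_map_eq_zero]
    rintro ⟨⟨z, y⟩, hw⟩ h
    have hy : y = 0 := congrArg Subtype.val h
    subst hy
    have : f z + s 0 = 0 := by simpa [φ] using hw
    rw [map_zero, add_zero] at this
    have hz : z = 0 := hf (by rw [this, map_zero])
    subst hz
    rfl
  · rintro ⟨y, hy⟩
    obtain ⟨z, hz⟩ := (hfg (s y)).1 (by rw [hs']; exact hy)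
    refine ⟨⟨(-z, y), ?_⟩, rfl⟩
    simp [φ, hz]

/-- canonical free cover -/
noncomputable abbrev cov (M : ModuleCat.{u} A) : (M →₀ A) →ₗ[A] M := Finsupp.linearCombination A id

lemma cov_surj (M : ModuleCat.{u} A) : Function.Surjective (cov M) := Finsupp.linearCombination_id_surjective A M

/-- syzygies -/
noncomputable def syz (C : ModuleCat.{u} A) : ℕ → ModuleCat.{u} A
  | 0 => C
  | j + 1 => ModuleCat.of A (LinearMap.ker (cov (syz C j)))

lemma syz_chain (C : ModuleCat.{u} A) : IsChain A (S := fun j => syz C j) (F := fun j => (syz C j →₀ A))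
    (fun j => (LinearMap.ker (cov (syz C j))).subtype) (fun j => cov (syz C j)) where
  inj j := Submodule.subtype_injective _
  exact j := LinearMap.exact_subtype_ker_map _
  surj j := cov_surj _
  flat j := inferInstance

lemma syz_FD {n : ℕ} (C : ModuleCat.{u} A) (h : FD n C) : ∀ j ≤ n, FD (n - j) (syz C j) := by
  intro j
  induction j with
  | zero => intro _; exact h
  | succ j ih =>
    intro hj
    have h1 := ih (by omega)
    rw [show n - j = (n - (j + 1)) + 1 by omega] at h1
    exact FD_step (P := ModuleCat.of A (syz C j →₀ A)) (cov (syz C j)) (cov_surj _) h1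

variable [IsNoetherianRing A] [HasDerivedCategory (ModuleCat.{u} A)] {N : ModuleCat.{u} A}

theorem V_module {d : ℕ} (hd : ringKrullDim A = (d : WithBot ℕ∞)) {n : ℕ} (C : ModuleCat.{u} A) (h : FD n C)
    {r : ℤ} (hr : d < r) : V N (sg C) r := by
  have hn : Module.Flat A (syz C n) := by
    have := syz_FD C h n le_rfl
    rw [Nat.sub_self] at this
    exact this
  have hP : ∀ j, Projective (ModuleCat.of A (syz C j →₀ A)) := fun j =>
    (IsProjective.iff_projective _).1 (inferInstance : Module.Projective A (syz C j →₀ A))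
  have hk := key_induction (syz_chain C) hn hd (JA_Baer (A := A)) (N := N) (fun r hr => V_JA hr)
    (fun j r hr => (V_DT_iff (ModuleCat.of A (syz C j →₀ A))).2 (V_sg_proj _ hr)) d le_rfl
  rw [Wh_top hd] at hk
  have hfl : Module.Flat A (syz C d) := flat_of_ringKrullDim_le (syz_chain C) hn hd.le
  have key : ∀ j ≤ d, ∀ r : ℤ, r > d - j → V N (sg (syz C j)) r := by
    intro j hj
    induction hj using Nat.decreasingInduction with
    | self =>
      intro r hr
      exact (V_DT_iff (syz C d)).1 (hk r (by omega) hr)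
    | of_succ j hj ih =>
      intro r hr
      exact V_sg_right (S₁ := syz C (j + 1)) (S₂ := ModuleCat.of A (syz C j →₀ A))
        ((LinearMap.ker (cov (syz C j))).subtype) (cov (syz C j)) (Submodule.subtype_injective _)
        (LinearMap.exact_subtype_ker_map _) (cov_surj _) (s := r - 1) (by omega)
        (ih _ (by push_cast; omega)) (V_sg_proj _ (by omega))
  exact key 0 (Nat.zero_le _) r (by push_cast; omega)
end
end PDK

open CategoryTheory Limits
open TensorProduct

namespace PDK
set_option linter.unusedSectionVars false
set_option linter.unusedVariables false

section
open DerivedCategory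
variable {A : Type u} [CommRing A] [IsNoetherianRing A] [HasDerivedCategory (ModuleCat.{u} A)]
  {N : ModuleCat.{u} A}

lemma V_of_isZero {K : Cpx A} (h : IsZero K) (r : ℤ) : V N K r := fun f =>
  (Q.map_isZero h).eq_of_src _ _

lemma V_single {M : ModuleCat.{u} A} {c k : ℤ} (h : V N (sg M) (k + c)) :
    V N ((HomologicalComplex.single (ModuleCat.{u} A) (ComplexShape.up ℤ) c).obj M) k := by
  intro f
  let e : (Q.obj ((HomologicalComplex.single (ModuleCat.{u} A) (ComplexShape.up ℤ) c).obj M))⟦c⟧ ≅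
      Q.obj (sg M) :=
    ((DerivedCategory.singleFunctors (ModuleCat.{u} A)).shiftIso c 0 c (add_zero c)).app M
  apply (shiftFunctor (DerivedCategory (ModuleCat.{u} A)) c).map_injective
  have h1 := h (e.inv ≫ (shiftFunctor (DerivedCategory (ModuleCat.{u} A)) c).map f ≫
    (shiftFunctorAdd _ k c).inv.app (Yob N))
  rw [Functor.map_zero, ← cancel_epi e.inv,
    ← cancel_mono ((shiftFunctorAdd (DerivedCategory (ModuleCat.{u} A)) k c).inv.app (Yob N)),
    Category.assoc, comp_zero, zero_comp]
  exact h1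

lemma bdd (d : ℤ) (i : ℤ) (m : ℕ) : ∀ (K : Cpx A), (∀ j, j < i ∨ i + m ≤ j → IsZero (K.X j)) →
    (∀ j, ∀ r, d < r → V N (sg (K.X j)) r) → ∀ k, d - i < k → V N K k := by
  induction m with
  | zero =>
    intro K hK _ k _
    refine V_of_isZero ?_ k
    rw [IsZero.iff_id_eq_zero]
    ext j : 1
    exact (hK j (by push_cast; omega)).eq_of_src _ _
  | succ m ih =>
    intro K hK hV k hk
    let c : ℤ := i + m
    let φ : (HomologicalComplex.single (ModuleCat.{u} A) (ComplexShape.up ℤ) c).obj (K.X c) ⟶ K :=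
      HomologicalComplex.mkHomFromSingle (𝟙 _) (fun j hj => (hK j (by
        have : c + 1 = j := hj
        push_cast; omega)).eq_of_tgt _ _)
    have hφc : IsIso (φ.f c) := by
      rw [HomologicalComplex.mkHomFromSingle_f, Category.comp_id]
      infer_instance
    have hz : ∀ j, j ≠ c → IsZero
        (((HomologicalComplex.single (ModuleCat.{u} A) (ComplexShape.up ℤ) c).obj (K.X c)).X j) :=
      fun j hj => HomologicalComplex.isZero_single_obj_X _ _ _ _ hj
    have hm : ∀ j, Mono (φ.f j) := by
      intro j
      by_cases hj : j = c
      · subst hj; infer_instance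
      · exact ⟨fun a b _ => (hz j hj).eq_of_tgt _ _⟩
    have hmono : Mono φ := HomologicalComplex.mono_of_mono_f φ hm
    let S : ShortComplex (Cpx A) := ShortComplex.mk φ (cokernel.π φ) (cokernel.condition φ)
    have hS : S.ShortExact :=
      { exact := ShortComplex.exact_of_g_is_cokernel _ (cokernelIsCokernel φ)
        mono_f := hmono
        epi_g := inferInstanceAs (Epi (cokernel.π φ)) }
    have hSj : ∀ j, (S.map (HomologicalComplex.eval _ _ j)).ShortExact := fun j =>
      hS.map_of_exact (HomologicalComplex.eval _ _ j)
    have hc0 : IsZero (S.X₃.X c) := (hSj c).isIso_f_iff.1 hφc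
    have hcj : ∀ j, j ≠ c → Nonempty (K.X j ≅ S.X₃.X j) := fun j hj => by
      have : IsIso (S.map (HomologicalComplex.eval _ _ j)).g := (hSj j).isIso_g_iff.2 (hz j hj)
      exact ⟨@asIso _ _ _ _ _ this⟩
    refine V.mid hS ?_ (ih S.X₃ ?_ ?_ k hk)
    · exact V_single (hV c _ (by omega))
    · intro j hj
      by_cases h : j = c
      · subst h; exact hc0
      · obtain ⟨e⟩ := hcj j h
        exact (hK j (by push_cast; omega)).of_iso e.symm
    · intro j r hr
      by_cases h : j = c
      · subst h
        exact V_of_isZero (Functor.map_isZero _ hc0) r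
      · obtain ⟨e⟩ := hcj j h
        exact V_sg_of_iso e (hV j r hr)

lemma FD_opcycles (F : Cpx A) (hflat : ∀ j : ℤ, Module.Flat A (F.X j)) (b i : ℤ)
    (hb : ∀ j < b, IsZero (F.X j)) (hH : ∀ j < i, IsZero (F.homology j)) (n : ℕ) :
    ∀ j, j ≤ i → j = b + n → FD n (F.opcycles j) := by
  induction n with
  | zero =>
    intro j _ hj
    have : IsIso (F.pOpcycles j) := F.isIso_pOpcycles (j - 1) j (by simp)
      ((hb _ (by push_cast at hj; omega)).eq_of_src _ _)
    have hF : Module.Flat A (F.X j) := hflat j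
    exact FD_iso (asIso (F.pOpcycles j)).toLinearEquiv (n := 0) hF
  | succ n ih =>
    intro j hji hj
    have hmono : Mono (F.fromOpcycles (j - 1) j) := by
      refine Preadditive.mono_of_isZero_kernel' _ (F.homologyIsKernel (j - 1) j (by simp)) ?_
      exact hH _ (by omega)
    have hp : Function.Surjective (F.pOpcycles (j - 1)).hom :=
      (ModuleCat.epi_iff_surjective _).1 inferInstance
    have hd : ∀ x, (F.fromOpcycles (j - 1) j).hom ((F.pOpcycles (j - 1)).hom x) = (F.d (j - 1) j).hom x := by
      intro x
      exact LinearMap.congr_fun (congrArg ModuleCat.Hom.hom (F.p_fromOpcycles (j - 1) j)) x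
    refine ⟨F.opcycles (j - 1), F.X j, (F.fromOpcycles (j - 1) j).hom, (F.pOpcycles j).hom,
      (ModuleCat.mono_iff_injective _).1 hmono, ?_, (ModuleCat.epi_iff_surjective _).1 inferInstance,
      hflat j, ih _ (by omega) (by push_cast at hj; omega)⟩
    have hex : (ShortComplex.mk (F.d (j - 1) j) (F.pOpcycles j) (F.d_pOpcycles (j - 1) j)).Exact :=
      ShortComplex.exact_of_g_is_cokernel _ (F.opcyclesIsCokernel (j - 1) j (by simp))
    have hex' := (ShortComplex.ShortExact.moduleCat_exact_iff_function_exact _).1 hex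
    intro x
    refine (hex' x).trans ⟨?_, ?_⟩
    · rintro ⟨y, hy⟩
      exact ⟨(F.pOpcycles (j - 1)).hom y, (hd y).trans hy⟩
    · rintro ⟨y, hy⟩
      obtain ⟨z, rfl⟩ := hp y
      exact ⟨z, (hd z).symm.trans hy⟩

theorem V_flat {d : ℕ} (hd : ringKrullDim A = (d : WithBot ℕ∞)) (F : Cpx A)
    (hflat : ∀ j : ℤ, Module.Flat A (F.X j)) (b c i : ℤ) (hb : ∀ j, j < b ∨ c < j → IsZero (F.X j))
    (hH : ∀ j < i, IsZero (F.homology j)) (k : ℤ) (hk : (d : ℤ) - i < k) : V N F k := by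
  have hGE : F.IsGE i := by
    rw [CochainComplex.isGE_iff]
    intro j hj
    rw [HomologicalComplex.exactAt_iff_isZero_homology]
    exact hH j hj
  have hq : QuasiIso (F.πTruncGE i) := (F.quasiIso_πTruncGE_iff i).2 hGE
  refine V.of_iso (K := F.truncGE i) ?_ (isoOfQis (F.πTruncGE i)).symm
  have h0 : ∀ j, j < i → IsZero ((F.truncGE i).X j) := fun j hj =>
    CochainComplex.isZero_of_isStrictlyGE _ i j hj
  have e1 : ∀ j, i < j → ((F.truncGE i).X j ≅ F.X j) := fun j hj => F.truncGEXIso i j hj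
  have e0 : (F.truncGE i).X i ≅ F.opcycles i := F.truncGEXIsoOpcycles i
  refine bdd (d : ℤ) i (max (c + 1 - i) 1).toNat _ ?_ ?_ k hk
  · rintro j (hj | hj)
    · exact h0 j hj
    · exact (hb j (by omega)).of_iso (e1 j (by omega))
  · intro j r hr
    rcases lt_trichotomy j i with hj | hj | hj
    · exact V_of_isZero (Functor.map_isZero _ (h0 j hj)) r
    · subst hj
      refine V_sg_of_iso e0.symm (V_module hd _ (FD_opcycles F hflat (min b j) j
        (fun l hl => hb l (by omega)) hH (j - min b j).toNat j le_rfl (by omega)) hr)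
    · exact V_sg_of_iso (e1 j hj).symm (V_module (n := 0) hd _ (hflat j) hr)
end
end PDK

theorem derivedCategory_projDim_le_krullDim_sub_inf
    (A : Type u) [CommRing A] [IsNoetherianRing A] [HasDerivedCategory (ModuleCat.{u} A)]
    (d : ℕ) (hd : ringKrullDim A = (d : WithBot ℕ∞))
    (M : CochainComplex (ModuleCat.{u} A) ℤ)
    -- `M` has bounded cohomology, nonzero in some degree, with infimum `i` :
    (i : ℤ) (hi : ¬ IsZero (M.homology i)) (hinf : ∀ j < i, IsZero (M.homology j))
    (hbdd : ∃ b : ℤ, ∀ j > b, IsZero (M.homology j))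
    -- `M` is quasi-isomorphic to a bounded complex `F` of flat `A`-modules,
    -- i.e. isomorphic to it in the derived category `D(A)` :
    (F : CochainComplex (ModuleCat.{u} A) ℤ)
    (hflat : ∀ j : ℤ, Module.Flat A (F.X j))
    (hFbdd : ∃ b c : ℤ, ∀ j : ℤ, j < b ∨ c < j → IsZero (F.X j))
    (hqis : Nonempty (DerivedCategory.Q.obj F ≅ DerivedCategory.Q.obj M)) :
    ∀ (N : ModuleCat.{u} A) (k : ℤ), (d : ℤ) - i < k →
      Subsingleton (DerivedCategory.Q.obj M ⟶
        (DerivedCategory.Q.obj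
          ((HomologicalComplex.single (ModuleCat.{u} A) (ComplexShape.up ℤ) 0).obj N))⟦k⟧) := by
  intro N k hk
  obtain ⟨b, c, hb⟩ := hFbdd
  obtain ⟨e⟩ := hqis
  have hH : ∀ j < i, IsZero (F.homology j) := fun j hj =>
    (hinf j hj).of_iso (((DerivedCategory.homologyFunctorFactors _ j).app F).symm ≪≫
      (DerivedCategory.homologyFunctor _ j).mapIso e ≪≫
        (DerivedCategory.homologyFunctorFactors _ j).app M)
  have hV := (PDK.V_flat (N := N) hd F hflat b c i hb hH k hk).of_iso e
  exact ⟨fun f g => (hV f).trans (hV g).symm⟩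
end

section
/- Let A be a commutative ring, let M be a cochain complex of A-modules with H^j(M) = 0 for all j > s, and let N be a cochain complex of A-modules with H^j(N) = 0 for all j < t. Then Hom_{D(A)}(M, N[k]) = 0 for every integer k < t − s, and there is an isomorphism Hom_{D(A)}(M, N[t−s]) ≅ Hom_A(H^s(M), H^t(N)). -/
/-!
STATEMENT 6: Let A be a commutative ring, M a cochain complex of A-modules with
H^j(M) = 0 for all j > s, and N a cochain complex of A-modules with H^j(N) = 0 for all
j < t.  Then Hom_{D(A)}(M, N[k]) = 0 for every integer k < t − s, and
Hom_{D(A)}(M, N[t−s]) ≅ Hom_A(H^s(M), H^t(N)).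
-/

open CategoryTheory Limits

universe u

namespace BottomIso

open DerivedCategory DerivedCategory.TStructure Pretriangulated

universe w v u'

variable {C : Type u'} [Category.{v} C] [Abelian C] [HasDerivedCategory.{w} C]

lemma isIso_homology_truncGE (X : DerivedCategory C) (n : ℤ) :
    IsIso ((homologyFunctor C n).map (((t (C := C)).truncGEπ n).app X)) := by
  have hT := (t (C := C)).triangleLTGE_distinguished n X
  have hL : ((t (C := C)).triangleLTGE n |>.obj X).obj₁.IsLE (n - 1) := inferInstance
  have hm := (HomologySequence.mono_homologyMap_mor₂_iff _ hT n).2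
    ((isZero_of_isLE _ (n - 1) n (by lia)).eq_of_src _ _)
  have he := (HomologySequence.epi_homologyMap_mor₂_iff _ hT n (n + 1) rfl).2
    ((isZero_of_isLE _ (n - 1) (n + 1) (by lia)).eq_of_tgt _ _)
  change Mono ((homologyFunctor C n).map (((t (C := C)).truncGEπ n).app X)) at hm
  change Epi ((homologyFunctor C n).map (((t (C := C)).truncGEπ n).app X)) at he
  exact isIso_of_mono_of_epi _

lemma isIso_homology_truncLT (X : DerivedCategory C) (n : ℤ) :
    IsIso ((homologyFunctor C n).map (((t (C := C)).truncLTι (n + 1)).app X)) := by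
  have hT := (t (C := C)).triangleLTGE_distinguished (n + 1) X
  have hL : ((t (C := C)).triangleLTGE (n + 1) |>.obj X).obj₃.IsGE (n + 1) := inferInstance
  have hm := (HomologySequence.mono_homologyMap_mor₁_iff _ hT (n - 1) n (by lia)).2
    ((isZero_of_isGE _ (n + 1) (n - 1) (by lia)).eq_of_src _ _)
  have he := (HomologySequence.epi_homologyMap_mor₁_iff _ hT n).2
    ((isZero_of_isGE _ (n + 1) n (by lia)).eq_of_tgt _ _)
  change Mono ((homologyFunctor C n).map (((t (C := C)).truncLTι (n + 1)).app X)) at hm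
  change Epi ((homologyFunctor C n).map (((t (C := C)).truncLTι (n + 1)).app X)) at he
  exact isIso_of_mono_of_epi _

lemma bijective_single (A B : C) (n : ℤ) :
    Function.Bijective (fun f : (singleFunctor C n).obj A ⟶ (singleFunctor C n).obj B =>
      (homologyFunctor C n).map f) := by
  let e := singleFunctorCompHomologyFunctorIso C n
  have key : ∀ g : A ⟶ B, (homologyFunctor C n).map ((singleFunctor C n).map g) =
      e.hom.app A ≫ g ≫ e.inv.app B := fun g => (NatIso.naturality_2 e g).symm
  constructor
  · intro f g h
    obtain ⟨f, rfl⟩ := (singleFunctor C n).map_surjective f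
    obtain ⟨g, rfl⟩ := (singleFunctor C n).map_surjective g
    dsimp only at h
    rw [key, key, cancel_epi, cancel_mono] at h
    rw [h]
  · intro g
    refine ⟨(singleFunctor C n).map (e.inv.app A ≫ g ≫ e.hom.app B), ?_⟩
    dsimp only
    rw [key]
    simp

/-- Bijectivity of a functor on morphisms transports along pre/postcomposition. -/
lemma bijective_of_comp {D E : Type*} [Category D] [Category E] (F : D ⥤ E)
    {X X' Y Y' : D} (p : X ⟶ X') (i : Y' ⟶ Y) [IsIso (F.map p)] [IsIso (F.map i)]
    (h : Function.Bijective (fun f : X' ⟶ Y' => p ≫ f ≫ i))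
    (h' : Function.Bijective (fun f : X' ⟶ Y' => F.map f)) :
    Function.Bijective (fun f : X ⟶ Y => F.map f) := by
  constructor
  · intro f g hfg
    obtain ⟨f, rfl⟩ := h.2 f
    obtain ⟨g, rfl⟩ := h.2 g
    simp only [Functor.map_comp, cancel_epi, cancel_mono] at hfg
    rw [h'.1 hfg]
  · intro g
    obtain ⟨f, hf⟩ := h'.2 (inv (F.map p) ≫ g ≫ inv (F.map i))
    refine ⟨p ≫ f ≫ i, ?_⟩
    dsimp only at hf
    simp [hf]

lemma bijective_homology (X Y : DerivedCategory C) (n : ℤ) [X.IsLE n] [Y.IsGE n] :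
    Function.Bijective (fun f : X ⟶ Y => (homologyFunctor C n).map f) := by
  have := isIso_homology_truncGE X n
  have := isIso_homology_truncLT Y n
  refine bijective_of_comp (homologyFunctor C n) ((t.truncGEπ n).app X)
    ((t.truncLTι (n + 1)).app Y) ?_ ?_
  · constructor
    · intro f g h
      have hle : (t (C := C)).IsLE ((t.truncGE n).obj X) (n + 1 - 1) := by
        rw [add_sub_cancel_right]
        infer_instance
      have hge : (t (C := C)).IsGE ((𝟭 (DerivedCategory C)).obj Y) n :=
        inferInstanceAs (t.IsGE Y n)
      exact t.to_truncLT_obj_ext (t.from_truncGE_obj_ext h)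
    · intro f
      exact ⟨t.liftTruncLT (t.descTruncGE f n) n (n + 1) rfl, by simp⟩
  · obtain ⟨A, ⟨a⟩⟩ := exists_iso_singleFunctor_obj_of_isGE_of_isLE ((t.truncGE n).obj X) n
    obtain ⟨B, ⟨b⟩⟩ := exists_iso_singleFunctor_obj_of_isGE_of_isLE ((t.truncLT (n + 1)).obj Y) n
    refine bijective_of_comp (homologyFunctor C n) a.hom b.inv ?_ (bijective_single A B n)
    constructor
    · intro f g h
      simpa using h
    · intro f
      exact ⟨a.inv ≫ f ≫ b.hom, by simp⟩

end BottomIso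

theorem derivedCategory_hom_vanishing_and_bottom_iso
    (A : Type u) [CommRing A] [HasDerivedCategory (ModuleCat.{u} A)]
    (M N : CochainComplex (ModuleCat.{u} A) ℤ) (s t : ℤ)
    (hM : ∀ j > s, IsZero (M.homology j)) (hN : ∀ j < t, IsZero (N.homology j)) :
    (∀ k : ℤ, k < t - s →
      Subsingleton (DerivedCategory.Q.obj M ⟶ (DerivedCategory.Q.obj N)⟦k⟧)) ∧
    Nonempty ((DerivedCategory.Q.obj M ⟶ (DerivedCategory.Q.obj N)⟦t - s⟧) ≃+
      (M.homology s ⟶ N.homology t)) := by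
  have h₁ : (DerivedCategory.Q.obj M).IsLE s := by
    rw [DerivedCategory.isLE_Q_obj_iff, CochainComplex.isLE_iff]
    intro i hi
    rw [HomologicalComplex.exactAt_iff_isZero_homology]
    exact hM i hi
  have h₂ : (DerivedCategory.Q.obj N).IsGE t := by
    rw [DerivedCategory.isGE_Q_obj_iff, CochainComplex.isGE_iff]
    intro i hi
    rw [HomologicalComplex.exactAt_iff_isZero_homology]
    exact hN i hi
  have h₃ : ∀ k : ℤ, ((DerivedCategory.Q.obj N)⟦k⟧).IsGE (t - k) := fun k =>
    DerivedCategory.TStructure.t.isGE_shift _ t k (t - k) (by lia)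
  refine ⟨fun k hk => ⟨fun f g => ?_⟩, ?_⟩
  · have := h₃ k
    rw [← sub_eq_zero]
    exact DerivedCategory.TStructure.t.zero_of_isLE_of_isGE _ s (t - k) (by lia) h₁ this
  · have h₄ : ((DerivedCategory.Q.obj N)⟦t - s⟧).IsGE s := by
      have := h₃ (t - s)
      rwa [show t - (t - s) = s by lia] at this
    have hb := BottomIso.bijective_homology (DerivedCategory.Q.obj M)
      ((DerivedCategory.Q.obj N)⟦t - s⟧) s
    let H := DerivedCategory.homologyFunctor (ModuleCat.{u} A)
    let e₁ : (H s).obj (DerivedCategory.Q.obj M) ≅ M.homology s :=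
      (DerivedCategory.homologyFunctorFactors _ s).app M
    let e₂ : (H s).obj ((DerivedCategory.Q.obj N)⟦t - s⟧) ≅ N.homology t :=
      ((H 0).shiftIso (t - s) s t (by lia)).app (DerivedCategory.Q.obj N) ≪≫
        (DerivedCategory.homologyFunctorFactors _ t).app N
    let E₁ := AddEquiv.ofBijective ((H s).mapAddHom (X := DerivedCategory.Q.obj M)
      (Y := (DerivedCategory.Q.obj N)⟦t - s⟧)) hb
    let E₂ : ((H s).obj (DerivedCategory.Q.obj M) ⟶
        (H s).obj ((DerivedCategory.Q.obj N)⟦t - s⟧)) ≃+ (M.homology s ⟶ N.homology t) :=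
      { toFun f := e₁.inv ≫ f ≫ e₂.hom
        invFun g := e₁.hom ≫ g ≫ e₂.inv
        left_inv f := by simp
        right_inv g := by simp
        map_add' f g := by simp }
    exact ⟨E₁.trans E₂⟩
end
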